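/- In the standing setup, suppose 0 is accessible from ℂ \ X. Then for each t ∈ [0,1] there exists an arc L^t ⊂ ℂ such that X^t ∩ L^t = {0}, 0 is an endpoint of L^t, and the map β : [0,1] → C(ℂ) defined by β(t) = L^t is continuous, where C(ℂ) is the space of compact subsets of ℂ with the Hausdorff metric. -/

import Mathlib

open Set Metric Topology Filter

/-- A point `x` is accessible from a set `U ⊆ ℂ` if there is an arc `γ : [0,1] → ℂ`
with `γ 1 = x` and `γ([0,1)) ⊆ U`. -/
def Accessible (U : Set ℂ) (x : ℂ) : Prop :=
  ∃ γ : ℝ → ℂ, ContinuousOn γ (Set.Icc 0 1) ∧ Set.InjOn γ (Set.Icc 0 1) ∧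
    γ 1 = x ∧ γ '' Set.Ico 0 1 ⊆ U

/-- The union of the unbounded connected components of the complement of `K`;
for compact `K` this is the (unique) unbounded component of `ℂ \ K`. -/
def unbddComp (K : Set ℂ) : Set ℂ :=
  {z : ℂ | z ∈ Kᶜ ∧ ¬ Bornology.IsBounded (connectedComponentIn Kᶜ z)}

/-- `X^t = ℂ \ U^t`, where `U^t` is the unbounded component of `ℂ \ h^t(Bd X)`. -/
def XtSet (h : ℂ → ℝ → ℂ) (X : Set ℂ) (t : ℝ) : Set ℂ :=
  (unbddComp ((fun z => h z t) '' frontier X))ᶜ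

/-- An arc with endpoints `a` and `b`: a homeomorphic image of `[0,1]`. -/
def IsArcEnds (A : Set ℂ) (a b : ℂ) : Prop :=
  ∃ γ : ℝ → ℂ, ContinuousOn γ (Set.Icc 0 1) ∧ Set.InjOn γ (Set.Icc 0 1) ∧
    γ '' Set.Icc 0 1 = A ∧ γ 0 = a ∧ γ 1 = b

/-!
An arc in `ℂ \ X` that ends at `0`, continued along a ray to `∞`, does not separate the plane, so
`log z` has a continuous branch on `Bd X \ {0}`. The isotopy lifts it to `f` with
`exp (f z t) = h z t`. Let `B^t` be the union of the translates of `f · t '' (Bd X \ {0})` by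
`2πik` with `k ≤ 0`, and `C^t` the union of those with `k > 0`. In these coordinates `0` becomes
the left end `-∞` of the plane, which `B^t` and `C^t` both reach. The arc `L^t` consists of `0` and
the points `exp q`, where `q` runs over the set `E^t` of points with `Re q ≤ 0` which are
equidistant from `B^t` and `C^t`.

That `B^t` lies below `C^t` near `-∞` is expressed by a logarithm of `c - b` for `b ∈ B^t` and
`c ∈ C^t`, normalized by its behaviour there; it exists for `t = 0` and persists along the isotopy.
The shortest segments from a point `q` in the Voronoi region of `B^t` to `B^t` meet the Voronoi
region of `C^t` at most in `q`, and vice versa, so continuation along these segments extends the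
logarithm to all `b` and `c` in the respective Voronoi regions. Points of `E^t` play both roles.
Comparing the imaginary parts of the logarithms of `c - b` and of `b - c` orders `E^t` linearly, and
`E^t ∪ {-∞}` is connected, so it is an arc.

The curve `L^t` varies continuously because the distances to `B^t` and `C^t` do, and because each
point of `E^t` is a limit of points strictly nearer to `B^t` and of points strictly nearer to
`C^t`. Finally, `L^t \ {0}` is connected, misses `h^t(Bd X)` and reaches the unit circle, so it
lies in the unbounded component.
-/

/-! ### Continuous logarithms -/

section Logarithms

variable {α : Type*} [TopologicalSpace α] {S : Set α}

theorem exists_continuousOn_log_of_homotopy {F : α → ℝ → ℂ}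
    (hF : ContinuousOn (fun p : α × ℝ => F p.1 p.2) (S ×ˢ Icc (0 : ℝ) 1))
    (hF0 : ∀ x ∈ S, ∀ t ∈ Icc (0 : ℝ) 1, F x t ≠ 0)
    {g₀ : α → ℂ} (hg₀ : ContinuousOn g₀ S) (he : ∀ x ∈ S, Complex.exp (g₀ x) = F x 0) :
    ∃ G : α → ℝ → ℂ, ContinuousOn (fun p : α × ℝ => G p.1 p.2) (S ×ˢ Icc (0 : ℝ) 1) ∧
      (∀ x ∈ S, ∀ t ∈ Icc (0 : ℝ) 1, Complex.exp (G x t) = F x t) ∧ ∀ x ∈ S, G x 0 = g₀ x := by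
  classical
  let H : C(unitInterval × S, {z : ℂ // z ≠ 0}) :=
    ⟨fun p => ⟨F p.2 p.1, hF0 _ p.2.2 _ p.1.2⟩, Continuous.subtype_mk
      (hF.comp_continuous (f := fun p : unitInterval × S => ((p.2 : α), (p.1 : ℝ)))
        (by fun_prop) fun p => ⟨p.2.2, p.1.2⟩) _⟩
  let f : C(S, ℂ) := ⟨fun x => g₀ x, continuousOn_iff_continuous_domRestrict.mp hg₀⟩
  have hstart (a) : H (0, a) = (fun z : ℂ ↦ (⟨_, z.exp_ne_zero⟩ : {z : ℂ // z ≠ 0})) (f a) :=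
    Subtype.ext (he a a.2).symm
  let G := Complex.isCoveringMap_exp.liftHomotopy H f hstart
  refine ⟨fun x t => if hx : x ∈ S then if ht : t ∈ Icc (0 : ℝ) 1 then G (⟨t, ht⟩, ⟨x, hx⟩)
    else 0 else 0, ?_, fun x hx t ht => ?_, fun x hx => ?_⟩
  · rw [continuousOn_iff_continuous_domRestrict]
    have hG : Continuous fun p : (S ×ˢ Icc (0 : ℝ) 1 : Set (α × ℝ)) =>
        G (⟨p.1.2, p.2.2⟩, ⟨p.1.1, p.2.1⟩) := by fun_prop
    convert hG using 2 with p
    simp [Set.domRestrict, p.2.1, p.2.2]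
  · simp only [hx, ht, dif_pos]
    have hlift := Complex.isCoveringMap_exp.liftHomotopy_lifts H f hstart
    exact congrArg Subtype.val (congrFun hlift (⟨t, ht⟩, ⟨x, hx⟩))
  · simp only [hx, left_mem_Icc.mpr zero_le_one, dif_pos]
    exact Complex.isCoveringMap_exp.liftHomotopy_zero H f hstart ⟨x, hx⟩

theorem eq_zero_of_exp_eq_one_of_abs_im_lt {z : ℂ} (h : Complex.exp z = 1)
    (him : |z.im| < 2 * Real.pi) : z = 0 := by
  obtain ⟨n, hn⟩ := Complex.exp_eq_one_iff.mp h
  have hzim : z.im = n * (2 * Real.pi) := by rw [hn]; simp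
  rw [hzim, abs_mul, abs_of_pos Real.two_pi_pos, mul_lt_iff_lt_one_left Real.two_pi_pos] at him
  have hn0 : n = 0 := Int.abs_lt_one_iff.mp (by exact_mod_cast him)
  rw [hn, hn0]
  simp

theorem eq_of_isPreconnected_of_exp_eq (hS : IsPreconnected S) {ψ : α → ℂ}
    (hψ : ContinuousOn ψ S) {c : ℂ} (he : ∀ x ∈ S, Complex.exp (ψ x) = c) {x y : α}
    (hx : x ∈ S) (hy : y ∈ S) : ψ x = ψ y := by
  refine Complex.isCoveringMap_exp.eqOn_of_comp_eqOn hS hψ (continuousOn_const (c := ψ y))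
    (fun z hz => Subtype.ext ?_) hy rfl hx
  simp [he z hz, he y hy]

theorem abs_im_sub_lt_pi_div_two_iff (hS : IsPreconnected S) {Λ : α → ℂ}
    (hΛ : ContinuousOn Λ S) {θ : ℝ} (he : ∀ x ∈ S, 0 < (Complex.exp (Λ x - θ * Complex.I)).re)
    {x y : α} (hx : x ∈ S) (hy : y ∈ S) :
    |(Λ x).im - θ| < Real.pi / 2 ↔ |(Λ y).im - θ| < Real.pi / 2 := by
  suffices key : ∀ {x y}, x ∈ S → y ∈ S → |(Λ x).im - θ| < Real.pi / 2 →
      |(Λ y).im - θ| < Real.pi / 2 from ⟨key hx hy, key hy hx⟩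
  intro x y hx hy h
  by_contra! hc
  have hcont : ContinuousOn (fun x => |(Λ x).im - θ|) S :=
    ((Complex.continuous_im.comp_continuousOn hΛ).sub continuousOn_const).abs
  obtain ⟨z, hz, hzθ : |(Λ z).im - θ| = Real.pi / 2⟩ :=
    hS.intermediate_value hx hy hcont ⟨h.le, hc⟩
  have him : (Λ z - θ * Complex.I).im = (Λ z).im - θ := by simp
  have hpos := he z hz
  rw [Complex.exp_re, him, ← Real.cos_abs, hzθ, Real.cos_pi_div_two, mul_zero] at hpos
  exact hpos.false

theorem abs_im_lt_pi_div_two_iff (hS : IsPreconnected S) {Λ : α → ℂ} (hΛ : ContinuousOn Λ S)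
    (he : ∀ x ∈ S, 0 < (Complex.exp (Λ x)).re) {x y : α} (hx : x ∈ S) (hy : y ∈ S) :
    |(Λ x).im| < Real.pi / 2 ↔ |(Λ y).im| < Real.pi / 2 := by
  simpa using abs_im_sub_lt_pi_div_two_iff hS hΛ (θ := 0) (by simpa using he) hx hy

theorem exists_continuousOn_log_of_convex {E : Type*} [AddCommGroup E] [Module ℝ E]
    [TopologicalSpace E] [IsTopologicalAddGroup E] [ContinuousSMul ℝ E] {H : Set E}
    (hH : Convex ℝ H) {u : E → ℂ} (hu : ContinuousOn u H) (h0 : ∀ x ∈ H, u x ≠ 0) :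
    ∃ φ : E → ℂ, ContinuousOn φ H ∧ ∀ x ∈ H, Complex.exp (φ x) = u x := by
  rcases H.eq_empty_or_nonempty with rfl | ⟨x₀, hx₀⟩
  · exact ⟨0, by simp, by simp⟩
  have hmem : ∀ x ∈ H, ∀ t ∈ Icc (0 : ℝ) 1, x₀ + t • (x - x₀) ∈ H := fun x hx t ht =>
    hH.add_smul_sub_mem hx₀ hx ht
  obtain ⟨G, hG, hGe, -⟩ := exists_continuousOn_log_of_homotopy
    (F := fun x t => u (x₀ + t • (x - x₀)))
    (hu.comp (f := fun p : E × ℝ => x₀ + p.2 • (p.1 - x₀)) (by fun_prop)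
      fun p hp => hmem _ hp.1 _ hp.2)
    (fun x hx t ht => h0 _ (hmem x hx t ht)) (g₀ := fun _ => Complex.log (u x₀))
    continuousOn_const (by intro x _; simp [Complex.exp_log (h0 _ hx₀)])
  refine ⟨fun x => G x 1, ?_, fun x hx => ?_⟩
  · exact hG.comp (f := fun x : E => (x, (1 : ℝ))) (by fun_prop) fun x hx => ⟨hx, by simp⟩
  · rw [hGe x hx 1 (by simp)]
    simp

end Logarithms

section Unicoherence

variable {E : Type*} [NormedAddCommGroup E] [NormedSpace ℝ E]

theorem exists_continuousOn_log_half_turns {H P N : Set E} (hH : Convex ℝ H) (hP : IsClosed P)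
    (hN : IsClosed N) (hPN : P ∪ N = H) {l : E → ℝ} (hl : Continuous l)
    (hl01 : ∀ x ∈ P ∩ N, l x = 0 ∨ l x = 1) :
    ∃ φ : E → ℂ, ContinuousOn φ H ∧
      (∀ x ∈ P, Complex.exp (φ x) = Complex.exp (Real.pi * (l x : ℂ) * Complex.I)) ∧
      ∀ x ∈ N, Complex.exp (φ x) = Complex.exp (-(Real.pi * (l x : ℂ) * Complex.I)) := by
  classical
  set p : E → ℂ := fun x => Complex.exp (Real.pi * (l x : ℂ) * Complex.I) with hp
  set n : E → ℂ := fun x => Complex.exp (-(Real.pi * (l x : ℂ) * Complex.I)) with hn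
  set u : E → ℂ := fun x => if x ∈ P then p x else n x with hu
  have huP : EqOn u p P := fun x hx => by simp [hu, hx]
  have huN : EqOn u n N := by
    intro x hx
    by_cases hxP : x ∈ P
    · rw [huP hxP]
      rcases hl01 x ⟨hxP, hx⟩ with h | h <;> simp [hp, hn, h, Complex.exp_neg]
    · simp [hu, hxP]
  have huc : ContinuousOn u H := by
    rw [← hPN]
    exact ((by fun_prop : Continuous p).continuousOn.congr huP).union_of_isClosed
      ((by fun_prop : Continuous n).continuousOn.congr huN) hP hN
  obtain ⟨φ, hφ, hφe⟩ := exists_continuousOn_log_of_convex hH huc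
    fun _ _ => by simp only [hu]; split_ifs <;> exact Complex.exp_ne_zero _
  exact ⟨φ, hφ, fun x hx => (hφe x (hPN ▸ Or.inl hx)).trans (huP hx),
    fun x hx => (hφe x (hPN ▸ Or.inr hx)).trans (huN hx)⟩

/-- A form of unicoherence in which `P` and `N` need not be connected: if `E₁` and `E₂` are
nonempty, the two logarithms of `1` cannot both be constant. -/
theorem exists_logs_one_agree_and_jump {H P N E₁ E₂ : Set E} (hH : Convex ℝ H) (hP : IsClosed P)
    (hN : IsClosed N) (hPN : P ∪ N = H) (hE : P ∩ N = E₁ ∪ E₂) (h₁ : IsClosed E₁)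
    (h₂ : IsClosed E₂) (hd : Disjoint E₁ E₂) :
    ∃ ψP ψN : E → ℂ, ContinuousOn ψP P ∧ ContinuousOn ψN N ∧
      (∀ x ∈ P, Complex.exp (ψP x) = 1) ∧ (∀ x ∈ N, Complex.exp (ψN x) = 1) ∧
      (∀ x ∈ E₁, ψP x = ψN x) ∧ (∀ x ∈ E₂, ψN x = ψP x + 2 * Real.pi * Complex.I) := by
  obtain ⟨l, l0, l1, -⟩ := exists_continuous_zero_one_of_isClosed h₁ h₂ hd
  have hl := l.continuous
  obtain ⟨φ, hφ, hφP, hφN⟩ := exists_continuousOn_log_half_turns hH hP hN hPN hl fun x hx => by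
    rw [hE] at hx
    exact hx.imp (fun h => l0 h) fun h => l1 h
  refine ⟨fun x => φ x - Real.pi * (l x : ℂ) * Complex.I,
    fun x => φ x + Real.pi * (l x : ℂ) * Complex.I,
    (hφ.mono (hPN ▸ subset_union_left)).sub (by fun_prop),
    (hφ.mono (hPN ▸ subset_union_right)).add (by fun_prop),
    fun x hx => ?_, fun x hx => ?_, fun x hx => ?_, fun x hx => ?_⟩
  · simp only
    rw [Complex.exp_sub, hφP x hx, div_self (Complex.exp_ne_zero _)]
  · simp only
    rw [Complex.exp_add, hφN x hx, ← Complex.exp_add, neg_add_cancel, Complex.exp_zero]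
  · simp [show l x = 0 from l0 hx]
  · simp only [show l x = 1 from l1 hx]
    push_cast
    ring

theorem isPreconnected_frontier {X : Set E} (hX : IsClosed X) (hc : IsPreconnected X)
    (hn : IsPreconnected Xᶜ) : IsPreconnected (frontier X) := by
  have hfr : X ∩ closure Xᶜ = frontier X := by
    rw [frontier_eq_closure_inter_closure, hX.closure_eq]
  rw [isPreconnected_closed_iff]
  intro A B hA hB hAB ⟨a, ha⟩ ⟨b, hb⟩
  by_contra hemp
  have hd : Disjoint (frontier X ∩ A) (frontier X ∩ B) :=
    Set.disjoint_left.mpr fun x hxA hxB => hemp ⟨x, hxA.1, hxA.2, hxB.2⟩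
  have hcover : X ∪ closure Xᶜ = univ :=
    eq_univ_of_subset (union_subset_union_right X subset_closure) (union_compl_self X)
  have hE : X ∩ closure Xᶜ = (frontier X ∩ A) ∪ (frontier X ∩ B) := by
    rw [← Set.inter_union_distrib_left, Set.inter_eq_left.mpr hAB, hfr]
  obtain ⟨ψP, ψN, cP, cN, eP, eN, agree, jump⟩ := exists_logs_one_agree_and_jump convex_univ hX
    isClosed_closure hcover hE (isClosed_frontier.inter hA) (isClosed_frontier.inter hB) hd
  have hsub : frontier X ⊆ X ∩ closure Xᶜ := hfr.ge
  have hjump := jump b hb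
  rw [← eq_of_isPreconnected_of_exp_eq hc cP eP (hsub ha.1).1 (hsub hb.1).1,
    ← eq_of_isPreconnected_of_exp_eq hn.closure cN eN (hsub ha.1).2 (hsub hb.1).2,
    agree a ha] at hjump
  exact Complex.two_pi_I_ne_zero (by linear_combination -hjump)

end Unicoherence

/-! ### Access arcs -/

section AccessArcs

variable {Y : Type*} [TopologicalSpace Y]

/-- `γ` restricts to an arc on `[0,1]` that ends at `x` and otherwise runs inside `U`. It is the
witness of accessibility of `x` from `U`, with its starting point left free. -/
structure IsAccessArc (U : Set Y) (x : Y) (γ : ℝ → Y) : Prop where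
  continuousOn : ContinuousOn γ (Icc 0 1)
  injOn : InjOn γ (Icc 0 1)
  map_one : γ 1 = x
  mapsTo : MapsTo γ (Ico 0 1) U

variable {U : Set Y} {x : Y} {γ : ℝ → Y}

theorem IsAccessArc.tail (hγ : IsAccessArc U x γ) {τ : ℝ} (hτ : τ ∈ Ico (0 : ℝ) 1) :
    IsAccessArc U x fun s => γ (τ + s * (1 - τ)) := by
  have hτ1 : 0 < 1 - τ := sub_pos.mpr hτ.2
  have hmem : MapsTo (fun s => τ + s * (1 - τ)) (Icc 0 1) (Icc (0 : ℝ) 1) := fun s hs =>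
    ⟨by nlinarith [hs.1, hτ.1], by nlinarith [hs.2]⟩
  refine ⟨hγ.continuousOn.comp (by fun_prop) hmem, fun s hs s' hs' he => ?_, by simp [hγ.map_one],
    fun s hs => hγ.mapsTo ⟨(hmem ⟨hs.1, hs.2.le⟩).1, by nlinarith [hs.2]⟩⟩
  exact mul_right_cancel₀ hτ1.ne' (add_left_cancel (hγ.injOn (hmem hs) (hmem hs') he))

theorem IsAccessArc.exists_starting_at_last_point (hγ : IsAccessArc U x γ) {C : Set Y}
    (hC : IsClosed C) (h0 : γ 0 ∈ C) (hx : x ∉ C) :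
    ∃ δ : ℝ → Y, IsAccessArc U x δ ∧ δ 0 ∈ C ∧ ∀ s ∈ Ioc (0 : ℝ) 1, δ s ∉ C := by
  have hcpt : IsCompact (Icc (0 : ℝ) 1 ∩ γ ⁻¹' C) :=
    isCompact_Icc.of_isClosed_subset
      (hγ.continuousOn.preimage_isClosed_of_isClosed isClosed_Icc hC) inter_subset_left
  obtain ⟨τ, ⟨hτ, hτC⟩, hlast⟩ :=
    hcpt.exists_isMaxOn ⟨0, left_mem_Icc.mpr zero_le_one, h0⟩ continuousOn_id
  have hτ1 : τ < 1 := hτ.2.lt_of_ne fun h => hx (by rwa [h, mem_preimage, hγ.map_one] at hτC)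
  refine ⟨_, hγ.tail ⟨hτ.1, hτ1⟩, by simpa using hτC, fun s hs hsC => ?_⟩
  have hle : τ + s * (1 - τ) ≤ τ :=
    hlast ⟨⟨by nlinarith [hs.1, hτ.1], by nlinarith [hs.2]⟩, hsC⟩
  nlinarith [hs.1]

theorem exists_arc_append {α β : ℝ → Y} (hα : ContinuousOn α (Icc 0 1)) (hαi : InjOn α (Icc 0 1))
    (hβ : ContinuousOn β (Icc 0 1)) (hβi : InjOn β (Icc 0 1)) (hαβ : α 1 = β 0)
    (hoff : ∀ s ∈ Ioc (0 : ℝ) 1, β s ∉ α '' Icc 0 1) :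
    ∃ δ : ℝ → Y, ContinuousOn δ (Icc 0 1) ∧ InjOn δ (Icc 0 1) ∧ δ 0 = α 0 ∧ δ 1 = β 1 ∧
      MapsTo δ (Ico 0 1) (α '' Icc 0 1 ∪ β '' Ico 0 1) := by
  set δ : ℝ → Y := fun s => if s ≤ 1 / 2 then α (2 * s) else β (2 * s - 1) with hδ
  have hfst : EqOn δ (fun s => α (2 * s)) (Icc 0 (1 / 2)) := fun s hs => by
    simp only [hδ, if_pos hs.2]
  have hsnd : EqOn δ (fun s => β (2 * s - 1)) (Icc (1 / 2) 1) := fun s hs => by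
    rcases hs.1.eq_or_lt with rfl | h
    · simp [hδ, hαβ]
    · simp only [hδ, if_neg h.not_ge]
  have hmem₁ : MapsTo (fun s : ℝ => 2 * s) (Icc 0 (1 / 2)) (Icc 0 1) := fun s hs =>
    ⟨by linarith [hs.1], by linarith [hs.2]⟩
  have hmem₂ : MapsTo (fun s : ℝ => 2 * s - 1) (Icc (1 / 2) 1) (Icc 0 1) := fun s hs =>
    ⟨by linarith [hs.1], by linarith [hs.2]⟩
  have hne : ∀ s ∈ Icc (0 : ℝ) 1, ∀ s' ∈ Icc (0 : ℝ) 1, s < s' → δ s ≠ δ s' := by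
    intro s hs s' hs' hlt he
    rcases le_or_gt s' (1 / 2) with h' | h'
    · rw [hfst ⟨hs.1, hlt.le.trans h'⟩, hfst ⟨hs'.1, h'⟩] at he
      linarith [hαi (hmem₁ ⟨hs.1, hlt.le.trans h'⟩) (hmem₁ ⟨hs'.1, h'⟩) he]
    rw [hsnd ⟨h'.le, hs'.2⟩] at he
    rcases le_or_gt s (1 / 2) with h | h
    · rw [hfst ⟨hs.1, h⟩] at he
      exact hoff (2 * s' - 1) ⟨by linarith, by linarith [hs'.2]⟩
        ⟨2 * s, hmem₁ ⟨hs.1, h⟩, he⟩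
    · rw [hsnd ⟨h.le, hs.2⟩] at he
      linarith [hβi (hmem₂ ⟨h.le, hs.2⟩) (hmem₂ ⟨h'.le, hs'.2⟩) he]
  refine ⟨δ, ?_, fun s hs s' hs' he => ?_, by simp [hδ], by rw [hsnd (by norm_num)]; norm_num,
    fun s hs => ?_⟩
  · rw [← Icc_union_Icc_eq_Icc (by norm_num : (0 : ℝ) ≤ 1 / 2) (by norm_num)]
    exact ((hα.comp (by fun_prop) hmem₁).congr hfst).union_of_isClosed
      ((hβ.comp (by fun_prop) hmem₂).congr hsnd) isClosed_Icc isClosed_Icc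
  · by_contra h
    exact (lt_or_gt_of_ne h).elim (hne s hs s' hs' · he) (hne s' hs' s hs · he.symm)
  · rcases le_or_gt s (1 / 2) with h | h
    · exact Or.inl ⟨2 * s, hmem₁ ⟨hs.1, h⟩, (hfst ⟨hs.1, h⟩).symm⟩
    · exact Or.inr ⟨2 * s - 1, ⟨by linarith, by linarith [hs.2]⟩, (hsnd ⟨h.le, hs.2.le⟩).symm⟩

variable {E : Type*} [NormedAddCommGroup E] [NormedSpace ℝ E] {U : Set E} {x p : E} {γ : ℝ → E}

theorem isClosed_segment (p q : E) : IsClosed (segment ℝ p q) := by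
  rw [segment_eq_image_lineMap]
  exact (isCompact_Icc.image (by fun_prop)).isClosed

theorem IsAccessArc.exists_segment_append (hγ : IsAccessArc U x γ)
    (hseg : segment ℝ p (γ 0) ⊆ U) (hp : p ≠ γ 0)
    (hoff : ∀ s ∈ Ioc (0 : ℝ) 1, γ s ∉ segment ℝ p (γ 0)) :
    ∃ δ : ℝ → E, IsAccessArc U x δ ∧ δ 0 = p := by
  rw [segment_eq_image_lineMap] at hseg hoff
  obtain ⟨δ, hδ, hδi, hδ0, hδ1, hδU⟩ := exists_arc_append
    (α := AffineMap.lineMap p (γ 0)) (by fun_prop) (AffineMap.lineMap_injective ℝ hp).injOn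
    hγ.continuousOn hγ.injOn (AffineMap.lineMap_apply_one p (γ 0)) hoff
  exact ⟨δ, ⟨hδ, hδi, hδ1.trans hγ.map_one,
    hδU.mono_right (union_subset hseg hγ.mapsTo.image_subset)⟩, by simp [hδ0]⟩

theorem IsAccessArc.exists_of_segment_subset (hγ : IsAccessArc U x γ) (hx : x ∉ U)
    (hseg : segment ℝ p (γ 0) ⊆ U) : ∃ δ : ℝ → E, IsAccessArc U x δ ∧ δ 0 = p := by
  obtain ⟨δ, hδ, hδ0, hδs⟩ := hγ.exists_starting_at_last_point (isClosed_segment p (γ 0))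
    (right_mem_segment ℝ _ _) fun h => hx (hseg h)
  rcases eq_or_ne p (δ 0) with rfl | hp
  · exact ⟨δ, hδ, rfl⟩
  have hsub : segment ℝ p (δ 0) ⊆ segment ℝ p (γ 0) :=
    (convex_segment p (γ 0)).segment_subset (left_mem_segment ℝ _ _) hδ0
  exact hδ.exists_segment_append (hsub.trans hseg) hp fun s hs h => hδs s hs (hsub h)

theorem IsAccessArc.exists_starting_at (hγ : IsAccessArc U x γ) (hUo : IsOpen U)
    (hU : IsPreconnected U) (hx : x ∉ U) (hp : p ∈ U) :
    ∃ δ : ℝ → E, IsAccessArc U x δ ∧ δ 0 = p := by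
  let HasArcFrom (y : E) : Prop := ∃ δ : ℝ → E, IsAccessArc U x δ ∧ δ 0 = y
  have hγ0 : γ 0 ∈ U := hγ.mapsTo ⟨le_rfl, one_pos⟩
  refine (hU.induction₂ (fun y z => HasArcFrom y ↔ HasArcFrom z) (fun y hy => ?_)
    (fun _ _ _ _ _ _ h h' => h.trans h') (fun _ _ _ _ h => h.symm) hγ0 hp).mp ⟨γ, hγ, rfl⟩
  obtain ⟨ε, hε, hball⟩ := Metric.isOpen_iff.mp hUo y hy
  filter_upwards [mem_nhdsWithin_of_mem_nhds (Metric.ball_mem_nhds y hε)] with z hz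
  have hseg : segment ℝ y z ⊆ U :=
    ((convex_ball y ε).segment_subset (mem_ball_self hε) hz).trans hball
  constructor
  · rintro ⟨δ, hδ, rfl⟩
    exact hδ.exists_of_segment_subset hx (segment_symm ℝ (δ 0) z ▸ hseg)
  · rintro ⟨δ, hδ, rfl⟩
    exact hδ.exists_of_segment_subset hx hseg

end AccessArcs

/-! ### Arcs through infinity do not separate the plane -/

section LogDomains

variable {α β : Type*} [TopologicalSpace α] [TopologicalSpace β]

theorem continuousOn_image_of_leftInvOn [T2Space β] {K : Set α} (hK : IsCompact K) {f : α → β}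
    (hf : ContinuousOn f K) {g : β → α} (hg : LeftInvOn g f K) : ContinuousOn g (f '' K) := by
  refine continuousOn_iff_isClosed.mpr fun t ht => ⟨f '' (K ∩ t),
    ((hK.inter_right ht).image_of_continuousOn (hf.mono inter_subset_left)).isClosed, ?_⟩
  ext y
  constructor
  · rintro ⟨hy, x, hx, rfl⟩
    rw [mem_preimage, hg hx] at hy
    exact ⟨⟨x, ⟨hx, hy⟩, rfl⟩, ⟨x, hx, rfl⟩⟩
  · rintro ⟨⟨x, ⟨hx, hxt⟩, rfl⟩, -⟩
    exact ⟨by rwa [mem_preimage, hg hx], ⟨x, hx, rfl⟩⟩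

/-- Every nonvanishing continuous complex function on `S` has a continuous logarithm. -/
def HasContinuousLogs (S : Set α) : Prop :=
  ∀ u : α → ℂ, ContinuousOn u S → (∀ x ∈ S, u x ≠ 0) →
    ∃ φ : α → ℂ, ContinuousOn φ S ∧ ∀ x ∈ S, Complex.exp (φ x) = u x

theorem HasContinuousLogs.image_of_leftInvOn [T2Space β] {K : Set α} (hL : HasContinuousLogs K)
    (hK : IsCompact K) {f : α → β} (hf : ContinuousOn f K) {g : β → α} (hg : LeftInvOn g f K) :
    HasContinuousLogs (f '' K) := by
  intro u hu hu0
  obtain ⟨φ, hφ, hφe⟩ := hL (u ∘ f) (hu.comp hf (mapsTo_image f K))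
    fun x hx => hu0 _ (mem_image_of_mem f hx)
  have hmaps : MapsTo g (f '' K) K := by
    rintro _ ⟨x, hx, rfl⟩
    rwa [hg hx]
  refine ⟨φ ∘ g, hφ.comp (continuousOn_image_of_leftInvOn hK hf hg) hmaps, ?_⟩
  rintro _ ⟨x, hx, rfl⟩
  rw [Function.comp_apply, hg hx, hφe x hx, Function.comp_apply]

theorem HasContinuousLogs.union {A B : Set α} (hA : HasContinuousLogs A)
    (hB : HasContinuousLogs B) (hAc : IsClosed A) (hBc : IsClosed B) {c : α} (hAB : A ∩ B = {c}) :
    HasContinuousLogs (A ∪ B) := by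
  classical
  intro u hu hu0
  obtain ⟨φ, hφ, hφe⟩ := hA u (hu.mono subset_union_left) fun x hx => hu0 x (Or.inl hx)
  obtain ⟨χ, hχ, hχe⟩ := hB u (hu.mono subset_union_right) fun x hx => hu0 x (Or.inr hx)
  obtain ⟨hcA, hcB⟩ : c ∈ A ∩ B := hAB.symm.subset rfl
  set g : α → ℂ := fun x => if x ∈ A then φ x else χ x - χ c + φ c with hg
  have hgA : EqOn g φ A := fun x hx => by simp only [hg, if_pos hx]
  have hgB : EqOn g (fun x => χ x - χ c + φ c) B := fun x hx => by
    by_cases hxA : x ∈ A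
    · obtain rfl : x = c := hAB.subset ⟨hxA, hx⟩
      simp [hgA hxA]
    · simp only [hg, if_neg hxA]
  refine ⟨g, (hφ.congr hgA).union_of_isClosed
    (((hχ.sub continuousOn_const).add continuousOn_const).congr hgB) hAc hBc, ?_⟩
  rintro x (hx | hx)
  · rw [hgA hx, hφe x hx]
  · rw [hgB hx, Complex.exp_add, Complex.exp_sub, hχe x hx, hχe c hcB, hφe c hcA,
      div_mul_cancel₀ _ (hu0 c (Or.inl hcA))]

end LogDomains

theorem not_exists_log_sub_on_sphere {ρ : ℝ} {a : ℂ} (ha : ‖a‖ < ρ) {m : ℂ → ℂ}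
    (hm : ContinuousOn m (sphere 0 ρ)) : ¬ ∀ z ∈ sphere (0 : ℂ) ρ, Complex.exp (m z) = z - a := by
  intro he
  have hρ : 0 < ρ := (norm_nonneg a).trans_lt ha
  let c : ℝ → ℂ := fun θ => circleMap 0 ρ θ
  have hc (θ : ℝ) : c θ ∈ sphere (0 : ℂ) ρ := circleMap_mem_sphere 0 hρ.le θ
  have hc0 (θ : ℝ) : c θ ≠ 0 := circleMap_ne_center hρ.ne'
  have hslit (θ : ℝ) : 1 - a / c θ ∈ Complex.slitPlane := by
    refine Or.inl ?_
    have hlt : ‖a / c θ‖ < 1 := by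
      rwa [norm_div, mem_sphere_zero_iff_norm.mp (hc θ), div_lt_one hρ]
    have := (Complex.re_le_norm (a / c θ)).trans_lt hlt
    simpa
  have hψ : Continuous fun θ : ℝ =>
      m (c θ) - θ * Complex.I - Complex.log ρ - Complex.log (1 - a / c θ) := by
    have hcc : Continuous c := continuous_circleMap 0 ρ
    have hlog : Continuous fun θ : ℝ => Complex.log (1 - a / c θ) :=
      (continuous_const.sub (continuous_const.div hcc hc0)).clog hslit
    exact (((hm.comp_continuous hcc hc).sub (by fun_prop)).sub continuous_const).sub hlog
  have hconst := eq_of_isPreconnected_of_exp_eq (c := 1) isPreconnected_univ hψ.continuousOn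
    (fun θ _ => ?_) (mem_univ 0) (mem_univ (2 * Real.pi))
  · have hper : c (2 * Real.pi) = c 0 := by simp [c, circleMap]
    rw [hper] at hconst
    refine Complex.two_pi_I_ne_zero ?_
    push_cast at hconst
    linear_combination hconst
  · have hρc : (ρ : ℂ) ≠ 0 := Complex.ofReal_ne_zero.mpr hρ.ne'
    rw [Complex.exp_sub, Complex.exp_sub, Complex.exp_sub, he _ (hc θ), Complex.exp_log hρc,
      Complex.exp_log (Complex.slitPlane_ne_zero (hslit θ)), div_div, div_div, ← mul_assoc,
      mul_comm (Complex.exp _), ← circleMap_zero, mul_one_sub, mul_div_cancel₀ _ (hc0 θ),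
      div_self]
    exact fun h => Complex.slitPlane_ne_zero (hslit θ) (by
      rw [one_sub_div (hc0 θ)]; exact div_eq_zero_iff.mpr (Or.inl h))

theorem closure_connectedComponentIn_sdiff_subset {X : Type*} [TopologicalSpace X]
    [LocallyConnectedSpace X] {Ω : Set X} (hΩ : IsOpen Ω) (p : X) :
    closure (connectedComponentIn Ω p) \ connectedComponentIn Ω p ⊆ Ωᶜ := by
  rintro z ⟨hz, hzW⟩ hzΩ
  have hzz : z ∈ connectedComponentIn Ω z := mem_connectedComponentIn hzΩ
  obtain ⟨y, hyz, hyp⟩ := mem_closure_iff.mp hz _ hΩ.connectedComponentIn hzz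
  rw [connectedComponentIn_eq hyz, ← connectedComponentIn_eq hyp] at hzz
  exact hzW hzz

theorem exists_continuous_sub_mul_exp_eq_sub {J : Set ℂ} (hJ : IsClosed J)
    (hlog : HasContinuousLogs J) {p q : ℂ} (hp : p ∈ Jᶜ) (hq : q ∈ Jᶜ) :
    ∃ G : ℂ → ℂ, Continuous G ∧ ∀ z ∈ J, (z - q) * Complex.exp (G z) = z - p := by
  have hsub {r z : ℂ} (hr : r ∈ Jᶜ) (hz : z ∈ J) : z - r ≠ 0 :=
    sub_ne_zero.mpr fun h => hr (h ▸ hz)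
  obtain ⟨g, hg, hge⟩ := hlog (fun z => (z - p) / (z - q))
    (ContinuousOn.div (by fun_prop) (by fun_prop) fun z hz => hsub hq hz)
    fun z hz => div_ne_zero (hsub hp hz) (hsub hq hz)
  obtain ⟨G, hG⟩ := ContinuousMap.exists_restrict_eq hJ
    (⟨J.domRestrict g, continuousOn_iff_continuous_domRestrict.mp hg⟩ : C(J, ℂ))
  refine ⟨G, G.continuous, fun z hz => ?_⟩
  have hGg : G z = g z := congrArg (fun f : C(J, ℂ) => f ⟨z, hz⟩) hG
  rw [hGg, hge z hz, mul_div_cancel₀ _ (hsub hq hz)]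

/-- A logarithm `G` of `(z - p) / (z - q)` on `J`, extended to the plane, glues `z - p` off the
component of `p` to `(z - q) * exp (G z)` on it, which gives a nonvanishing function. -/
theorem exists_logs_of_separated {J : Set ℂ} (hJ : IsClosed J) (hlog : HasContinuousLogs J)
    {p q : ℂ} (hp : p ∈ Jᶜ) (hq : q ∈ Jᶜ) (hpq : q ∉ connectedComponentIn Jᶜ p) :
    ∃ l m : ℂ → ℂ, Continuous l ∧ Continuous m ∧
      (∀ z ∉ connectedComponentIn Jᶜ p, Complex.exp (l z) = z - p) ∧
      ∀ z ∈ connectedComponentIn Jᶜ p ∪ J, Complex.exp (m z) = z - q := by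
  classical
  set W := connectedComponentIn Jᶜ p
  have hWJ : ∀ z ∈ J, z ∉ W := fun z hz h => connectedComponentIn_subset _ _ h hz
  obtain ⟨G, hGc, hGe⟩ := exists_continuous_sub_mul_exp_eq_sub hJ hlog hp hq
  set v : ℂ → ℂ := fun z => if z ∈ W then (z - q) * Complex.exp (G z) else z - p with hv
  have hvout : EqOn v (fun z => z - p) Wᶜ := fun z hz => by
    simp only [hv, if_neg (show z ∉ W from hz)]
  have hvin : EqOn v (fun z => (z - q) * Complex.exp (G z)) (closure W) := fun z hz => by
    by_cases hzW : z ∈ W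
    · simp only [hv, if_pos hzW]
    · rw [hvout hzW]
      have hzJ := closure_connectedComponentIn_sdiff_subset hJ.isOpen_compl p ⟨hz, hzW⟩
      exact (hGe z (not_not.mp hzJ)).symm
  have hvc : ContinuousOn v univ := by
    have hcover : closure W ∪ Wᶜ = univ :=
      eq_univ_of_subset (union_subset_union_left _ subset_closure) (union_compl_self W)
    rw [← hcover]
    exact (ContinuousOn.congr (by fun_prop) hvin).union_of_isClosed
      (ContinuousOn.congr (by fun_prop) hvout) isClosed_closure
      hJ.isOpen_compl.connectedComponentIn.isClosed_compl
  obtain ⟨l, hl, hle⟩ := exists_continuousOn_log_of_convex convex_univ hvc fun z _ => by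
    simp only [hv]
    split_ifs with hz
    · exact mul_ne_zero (sub_ne_zero.mpr fun h => hpq (h ▸ hz)) (Complex.exp_ne_zero _)
    · exact sub_ne_zero.mpr fun h => hz (h ▸ mem_connectedComponentIn hp)
  rw [continuousOn_univ] at hl
  refine ⟨l, fun z => l z - G z, hl, hl.sub hGc,
    fun z hz => (hle z trivial).trans (hvout hz), ?_⟩
  rintro z (hz | hz) <;> rw [Complex.exp_sub, hle z trivial, div_eq_iff (Complex.exp_ne_zero _)]
  · exact hvin (subset_closure hz)
  · exact (hvout (hWJ z hz)).trans (hGe z hz).symm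

theorem isPreconnected_compl_of_hasContinuousLogs {J : Set ℂ} (hJ : IsClosed J)
    (hlog : HasContinuousLogs J) (hcirc : ∀ᶠ ρ in atTop, IsPreconnected (sphere (0 : ℂ) ρ \ J)) :
    IsPreconnected Jᶜ := by
  rw [isPreconnected_iff_subset_of_disjoint]
  by_contra hnot
  obtain ⟨p, hp, q, hq, hpq⟩ : ∃ p ∈ Jᶜ, ∃ q ∈ Jᶜ, q ∉ connectedComponentIn Jᶜ p := by
    by_contra! hcon
    refine hnot (isPreconnected_iff_subset_of_disjoint.mp ?_)
    refine isPreconnected_of_forall_pair fun x hx y hy => ⟨_, connectedComponentIn_subset Jᶜ x,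
      mem_connectedComponentIn hx, hcon x hx y hy, isPreconnected_connectedComponentIn⟩
  obtain ⟨l, m, hl, hm, hle, hme⟩ := exists_logs_of_separated hJ hlog hp hq hpq
  obtain ⟨ρ, hρ, hρp, hρq⟩ :=
    (hcirc.and ((eventually_gt_atTop ‖p‖).and (eventually_gt_atTop ‖q‖))).exists
  by_cases hmeet : (sphere 0 ρ \ J ∩ connectedComponentIn Jᶜ p).Nonempty
  · obtain ⟨y, hy, hyW⟩ := hmeet
    have hsub : sphere 0 ρ \ J ⊆ connectedComponentIn Jᶜ p := by
      rw [connectedComponentIn_eq hyW]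
      exact hρ.subset_connectedComponentIn hy fun z hz => hz.2
    refine not_exists_log_sub_on_sphere hρq hm.continuousOn fun z hz => hme z ?_
    by_cases hzJ : z ∈ J
    exacts [Or.inr hzJ, Or.inl (hsub ⟨hz, hzJ⟩)]
  · exact not_exists_log_sub_on_sphere hρp hl.continuousOn fun z hz => hle z fun hzW =>
      hmeet ⟨z, ⟨hz, connectedComponentIn_subset _ _ hzW⟩, hzW⟩

/-- The closed horizontal ray `[R, ∞)` in the complex plane. -/
def rightRay (R : ℝ) : Set ℂ := {z | z.im = 0 ∧ R ≤ z.re}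

theorem isClosed_rightRay (R : ℝ) : IsClosed (rightRay R) :=
  (isClosed_eq Complex.continuous_im continuous_const).inter
    (isClosed_le continuous_const Complex.continuous_re)

theorem convex_rightRay (R : ℝ) : Convex ℝ (rightRay R) := by
  have him : Convex ℝ {z : ℂ | z.im = 0} := convex_hyperplane Complex.imLm.isLinear 0
  exact him.inter (convex_halfSpace_re_ge R)

theorem eq_ofReal_norm_of_mem_rightRay {R : ℝ} {z : ℂ} (hz : z ∈ rightRay R) (hR : |R| < ‖z‖) :
    z = ‖z‖ := by
  have hzre : z = z.re := Complex.ext (by simp) (by simp [hz.1])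
  have hnorm : ‖z‖ = |z.re| := by rw [hzre, Complex.norm_real]; simp
  have hpos : 0 < z.re := by
    by_contra! h
    exact (abs_le_abs_of_nonpos h hz.2).not_gt (hnorm ▸ hR)
  rw [hnorm, abs_of_pos hpos]
  exact hzre

theorem isPreconnected_sphere_diff_ofReal {ρ : ℝ} (hρ : 0 < ρ) :
    IsPreconnected (sphere (0 : ℂ) ρ \ {(ρ : ℂ)}) := by
  have himage : circleMap 0 ρ '' Ioo 0 (2 * Real.pi) = sphere (0 : ℂ) ρ \ {(ρ : ℂ)} := by
    have hend : circleMap 0 ρ (2 * Real.pi) = ρ := by simp [circleMap]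
    have hsphere : sphere (0 : ℂ) ρ = circleMap 0 ρ '' Ioc 0 (2 * Real.pi) := by
      rw [image_circleMap_Ioc, abs_of_pos hρ]
    have hIoo : Ioo 0 (2 * Real.pi) = Ioc 0 (2 * Real.pi) \ {2 * Real.pi} := Ioc_sdiff_right.symm
    have hinj : InjOn (circleMap 0 ρ) (Ioc 0 (2 * Real.pi)) :=
      uIoc_of_le Real.two_pi_pos.le ▸
        injOn_circleMap_of_abs_sub_le hρ.ne' (by simp [abs_of_pos Real.pi_pos])
    rw [hIoo, hinj.image_sdiff_subset (singleton_subset_iff.mpr ⟨Real.two_pi_pos, le_rfl⟩),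
      image_singleton, hend, hsphere]
  rw [← himage]
  exact isPreconnected_Ioo.image _ (continuous_circleMap 0 ρ).continuousOn

section ArcUnionRay

variable {γ : ℝ → ℂ} {R : ℝ}

/-- `γ` is an arc on `[0,1]` that starts at the tip `R` of the ray `[R, ∞)`, does not meet the
ray again, and ends at the origin. -/
structure IsArcFromRay (γ : ℝ → ℂ) (R : ℝ) : Prop where
  continuousOn : ContinuousOn γ (Icc 0 1)
  injOn : InjOn γ (Icc 0 1)
  map_zero : γ 0 = R
  notMem_ray : ∀ s ∈ Ioc (0 : ℝ) 1, γ s ∉ rightRay R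
  map_one : γ 1 = 0

theorem IsArcFromRay.image_inter_rightRay (hγ : IsArcFromRay γ R) :
    γ '' Icc 0 1 ∩ rightRay R = {(R : ℂ)} := by
  refine Subset.antisymm ?_
    (singleton_subset_iff.mpr ⟨⟨0, by simp, hγ.map_zero⟩, by simp [rightRay]⟩)
  rintro _ ⟨⟨s, hs, rfl⟩, hray⟩
  rcases hs.1.eq_or_lt with rfl | h
  exacts [hγ.map_zero, absurd hray (hγ.notMem_ray s ⟨h, hs.2⟩)]

theorem IsArcFromRay.isCompact_image (hγ : IsArcFromRay γ R) : IsCompact (γ '' Icc 0 1) :=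
  isCompact_Icc.image_of_continuousOn hγ.continuousOn

theorem IsArcFromRay.isClosed_union (hγ : IsArcFromRay γ R) :
    IsClosed (γ '' Icc 0 1 ∪ rightRay R) :=
  hγ.isCompact_image.isClosed.union (isClosed_rightRay R)

theorem IsArcFromRay.hasContinuousLogs (hγ : IsArcFromRay γ R) :
    HasContinuousLogs (γ '' Icc 0 1 ∪ rightRay R) := by
  have hIcc : HasContinuousLogs (Icc (0 : ℝ) 1) := fun u =>
    exists_continuousOn_log_of_convex (convex_Icc 0 1)
  exact (hIcc.image_of_leftInvOn isCompact_Icc hγ.continuousOn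
    hγ.injOn.leftInvOn_invFunOn).union (fun u => exists_continuousOn_log_of_convex
      (convex_rightRay R)) hγ.isCompact_image.isClosed (isClosed_rightRay R)
    hγ.image_inter_rightRay

theorem IsArcFromRay.eventually_sphere_inter (hγ : IsArcFromRay γ R) :
    ∀ᶠ ρ in atTop, 0 < ρ ∧ sphere (0 : ℂ) ρ \ (γ '' Icc 0 1 ∪ rightRay R) =
      sphere (0 : ℂ) ρ \ {(ρ : ℂ)} := by
  obtain ⟨B, hB⟩ := hγ.isCompact_image.isBounded.exists_norm_le
  filter_upwards [eventually_gt_atTop B, eventually_gt_atTop |R|] with ρ hρB hρR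
  refine ⟨(abs_nonneg R).trans_lt hρR, ?_⟩
  ext z
  refine and_congr_right fun hz => not_congr ⟨?_, ?_⟩
  · have hzρ : ‖z‖ = ρ := mem_sphere_zero_iff_norm.mp hz
    rintro (h | h)
    · exact absurd (hB z h) (by linarith)
    · exact hzρ ▸ eq_ofReal_norm_of_mem_rightRay h (hzρ ▸ hρR)
  · rintro rfl
    exact Or.inr ⟨by simp, by simpa using (le_abs_self R).trans hρR.le⟩

theorem IsArcFromRay.isPathConnected_compl (hγ : IsArcFromRay γ R) :
    IsPathConnected (γ '' Icc 0 1 ∪ rightRay R)ᶜ := by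
  rw [← hγ.isClosed_union.isOpen_compl.isConnected_iff_isPathConnected]
  constructor
  · obtain ⟨ρ, hρ, heq⟩ := hγ.eventually_sphere_inter.exists
    have hmem : (-ρ : ℂ) ∈ sphere (0 : ℂ) ρ \ {(ρ : ℂ)} :=
      ⟨by simp [abs_of_pos hρ], fun h => by
        have := congrArg Complex.re h
        simp only [Complex.neg_re, Complex.ofReal_re] at this
        linarith⟩
    rw [← heq] at hmem
    exact ⟨-ρ, hmem.2⟩
  · refine isPreconnected_compl_of_hasContinuousLogs hγ.isClosed_union hγ.hasContinuousLogs ?_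
    filter_upwards [hγ.eventually_sphere_inter] with ρ ⟨hρ, heq⟩
    exact heq ▸ isPreconnected_sphere_diff_ofReal hρ

end ArcUnionRay

/-! ### Logarithms of differences of logarithms -/

/-- The period `2πik` of the exponential function. -/
noncomputable def period (k : ℤ) : ℂ := (2 * Real.pi * k : ℝ) * Complex.I

theorem period_re (k : ℤ) : (period k).re = 0 := by simp [period]

theorem period_im (k : ℤ) : (period k).im = 2 * Real.pi * k := by simp [period]

theorem exp_period (k : ℤ) : Complex.exp (period k) = 1 :=
  Complex.exp_eq_one_iff.mpr ⟨k, by simp only [period]; push_cast; ring⟩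

/-- The periods `2πik` with `k > 0`. -/
def posPeriods : Set ℂ := period '' Ioi 0

theorem re_eq_zero_of_mem_posPeriods {v : ℂ} (hv : v ∈ posPeriods) : v.re = 0 := by
  obtain ⟨k, -, rfl⟩ := hv
  exact period_re k

theorem two_pi_le_im_of_mem_posPeriods {v : ℂ} (hv : v ∈ posPeriods) : 2 * Real.pi ≤ v.im := by
  obtain ⟨k, hk, rfl⟩ := hv
  have hk1 : (1 : ℝ) ≤ k := by exact_mod_cast Int.add_one_le_iff.mpr hk
  rw [period_im]
  exact le_mul_of_one_le_right Real.two_pi_pos.le hk1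

theorem ne_zero_of_mem_posPeriods {v : ℂ} (hv : v ∈ posPeriods) : v ≠ 0 := by
  rintro rfl
  exact (two_pi_le_im_of_mem_posPeriods hv).not_gt Real.two_pi_pos

theorem exp_of_mem_posPeriods {v : ℂ} (hv : v ∈ posPeriods) : Complex.exp v = 1 := by
  obtain ⟨k, -, rfl⟩ := hv
  exact exp_period k

theorem re_eq_log_norm_of_exp_eq {a b : ℂ} (h : Complex.exp a = b) : a.re = Real.log ‖b‖ := by
  rw [← h, Complex.norm_exp, Real.log_exp]

section StarShapedInTime

variable {α : Type*} [TopologicalSpace α] {D : Set (α × ℝ)}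

theorem exists_continuousOn_log_of_star (hD : ∀ p ∈ D, ∀ u ∈ Icc (0 : ℝ) 1, (p.1, u * p.2) ∈ D)
    {F : α → ℝ → ℂ} (hF : ContinuousOn (fun p : α × ℝ => F p.1 p.2) D)
    (hF0 : ∀ p ∈ D, F p.1 p.2 ≠ 0) {g₀ : α → ℂ} (hg₀ : ContinuousOn (fun p : α × ℝ => g₀ p.1) D)
    (he : ∀ p ∈ D, Complex.exp (g₀ p.1) = F p.1 0) :
    ∃ G : α → ℝ → ℂ, ContinuousOn (fun p : α × ℝ => G p.1 p.2) D ∧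
      (∀ p ∈ D, Complex.exp (G p.1 p.2) = F p.1 p.2) ∧ ∀ a, (a, (0 : ℝ)) ∈ D → G a 0 = g₀ a := by
  obtain ⟨G, hG, hGe, hG0⟩ := exists_continuousOn_log_of_homotopy (S := D)
    (F := fun p u => F p.1 (u * p.2))
    (hF.comp (f := fun q : (α × ℝ) × ℝ => (q.1.1, q.2 * q.1.2)) (by fun_prop)
      fun q hq => hD q.1 hq.1 q.2 hq.2)
    (fun p hp u hu => hF0 _ (hD p hp u hu)) hg₀ (by simpa using he)
  refine ⟨fun a s => G (a, s) 1, hG.comp (f := fun p : α × ℝ => (p, (1 : ℝ))) (by fun_prop)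
    fun p hp => ⟨hp, by simp⟩, fun p hp => by simp [hGe p hp 1 (by simp)], fun a ha => ?_⟩
  have hconst := eq_of_isPreconnected_of_exp_eq (ψ := fun u => G (a, 0) u) (x := 1) (y := 0)
    (isPreconnected_Icc (a := (0 : ℝ)) (b := 1))
    (hG.comp (f := fun u : ℝ => ((a, (0 : ℝ)), u)) (by fun_prop) fun u hu => ⟨ha, hu⟩)
    (fun u hu => (hGe _ ha u hu).trans (by rw [mul_zero])) (by simp) (by simp)
  exact hconst.trans (hG0 _ ha)

theorem exists_continuousOn_log_sub_add_period
    (hD : ∀ p ∈ D, ∀ u ∈ Icc (0 : ℝ) 1, (p.1, u * p.2) ∈ D)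
    {l : α → ℝ → ℂ} (hl : ContinuousOn (fun p : α × ℝ => l p.1 p.2) D)
    (hinj : ∀ z w s, (z, s) ∈ D → (w, s) ∈ D → Complex.exp (l z s) = Complex.exp (l w s) → z = w)
    {Λ₀ : α × α × ℂ → ℂ}
    (hΛ₀ : ContinuousOn (fun q : (α × α × ℂ) × ℝ => Λ₀ q.1)
      {q | (q.1.1, q.2) ∈ D ∧ (q.1.2.1, q.2) ∈ D ∧ q.1.2.2 ∈ posPeriods})
    (he : ∀ z w v, (z, (0 : ℝ)) ∈ D → (w, (0 : ℝ)) ∈ D → v ∈ posPeriods →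
      Complex.exp (Λ₀ (z, w, v)) = l w 0 - l z 0 + v) :
    ∃ Λ : α × α × ℂ → ℝ → ℂ,
      ContinuousOn (fun q : (α × α × ℂ) × ℝ => Λ q.1 q.2)
        {q | (q.1.1, q.2) ∈ D ∧ (q.1.2.1, q.2) ∈ D ∧ q.1.2.2 ∈ posPeriods} ∧
      (∀ z w v s, (z, s) ∈ D → (w, s) ∈ D → v ∈ posPeriods →
        Complex.exp (Λ (z, w, v) s) = l w s - l z s + v) ∧
      ∀ z w v, (z, (0 : ℝ)) ∈ D → (w, (0 : ℝ)) ∈ D → v ∈ posPeriods →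
        Λ (z, w, v) 0 = Λ₀ (z, w, v) := by
  have hne : ∀ z w v s, (z, s) ∈ D → (w, s) ∈ D → v ∈ posPeriods → l w s - l z s + v ≠ 0 := by
    intro z w v s hz hw hv h0
    have hlz : l z s = l w s + v := by linear_combination -h0
    obtain rfl : z = w := hinj z w s hz hw <| by
      rw [hlz, Complex.exp_add, exp_of_mem_posPeriods hv, mul_one]
    exact ne_zero_of_mem_posPeriods hv (by linear_combination h0)
  have hzero : ∀ a s, (a, s) ∈ D → (a, (0 : ℝ)) ∈ D := fun a s ha => by
    simpa using hD _ ha 0 (by simp)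
  obtain ⟨Λ, hΛ, hΛe, hΛ0⟩ := exists_continuousOn_log_of_star
    (D := {q : (α × α × ℂ) × ℝ | (q.1.1, q.2) ∈ D ∧ (q.1.2.1, q.2) ∈ D ∧ q.1.2.2 ∈ posPeriods})
    (fun q hq u hu => ⟨hD _ hq.1 u hu, hD _ hq.2.1 u hu, hq.2.2⟩)
    (F := fun q s => l q.2.1 s - l q.1 s + q.2.2)
    (((hl.comp (f := fun q : (α × α × ℂ) × ℝ => (q.1.2.1, q.2)) (by fun_prop)
      fun q hq => hq.2.1).sub (hl.comp (f := fun q : (α × α × ℂ) × ℝ => (q.1.1, q.2))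
      (by fun_prop) fun q hq => hq.1)).add (by fun_prop))
    (fun q hq => hne _ _ _ _ hq.1 hq.2.1 hq.2.2) hΛ₀
    (fun q hq => he _ _ _ (hzero _ _ hq.1) (hzero _ _ hq.2.1) hq.2.2)
  exact ⟨Λ, hΛ, fun z w v s hz hw hv => hΛe ((z, w, v), s) ⟨hz, hw, hv⟩,
    fun z w v hz hw hv => hΛ0 (z, w, v) ⟨hz, hw, hv⟩⟩

end StarShapedInTime

/-- `Λ z w v` is a continuous branch of `log (f w - f z + v)` for `z, w ∈ K` and positive periods
`v`, with imaginary part near `0` when `Re (f z)` is very negative, and near `π` when `Re (f w)`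
is. It witnesses that the translates of `f '' K` by periods are stacked in order near `-∞`. -/
structure IsOrderedLog {α : Type*} [TopologicalSpace α] (K : Set α) (f : α → ℂ)
    (Λ : α → α → ℂ → ℂ) : Prop where
  continuousOn : ContinuousOn (fun p : α × α × ℂ => Λ p.1 p.2.1 p.2.2) (K ×ˢ K ×ˢ posPeriods)
  exp_eq : ∀ z ∈ K, ∀ w ∈ K, ∀ v ∈ posPeriods, Complex.exp (Λ z w v) = f w - f z + v
  abs_im_lt : ∀ w ∈ K, ∃ M : ℝ, ∀ z ∈ K, (f z).re < -M → ∀ v ∈ posPeriods,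
    |(Λ z w v).im| < Real.pi / 2
  abs_im_sub_pi_lt : ∀ z ∈ K, ∃ M : ℝ, ∀ w ∈ K, (f w).re < -M → ∀ v ∈ posPeriods,
    |(Λ z w v).im - Real.pi| < Real.pi / 2

theorem IsOrderedLog.mono {α : Type*} [TopologicalSpace α] {K K' : Set α} {f : α → ℂ}
    {Λ : α → α → ℂ → ℂ} (hΛ : IsOrderedLog K f Λ) (h : K' ⊆ K) : IsOrderedLog K' f Λ where
  continuousOn := hΛ.continuousOn.mono (prod_mono h (prod_mono h le_rfl))
  exp_eq z hz w hw := hΛ.exp_eq z (h hz) w (h hw)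
  abs_im_lt w hw := (hΛ.abs_im_lt w (h hw)).imp fun _ hM z hz => hM z (h hz)
  abs_im_sub_pi_lt z hz := (hΛ.abs_im_sub_pi_lt z (h hz)).imp fun _ hM w hw => hM w (h hw)

theorem IsOrderedLog.congr {α : Type*} [TopologicalSpace α] {K : Set α} {f g : α → ℂ}
    {Λ : α → α → ℂ → ℂ} (hΛ : IsOrderedLog K f Λ) (h : EqOn f g K) : IsOrderedLog K g Λ where
  continuousOn := hΛ.continuousOn
  exp_eq z hz w hw v hv := by rw [hΛ.exp_eq z hz w hw v hv, h hz, h hw]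
  abs_im_lt w hw := (hΛ.abs_im_lt w hw).imp fun _ hM z hz => h hz ▸ hM z hz
  abs_im_sub_pi_lt z hz := (hΛ.abs_im_sub_pi_lt z hz).imp fun _ hM w hw => h hw ▸ hM w hw

/-! ### The logarithm in the complement of an arc through infinity -/

section ArcUnionRay

variable {γ : ℝ → ℂ} {R : ℝ}

/-- The pairs `(w, s)` such that `w` lies off the ray `[R, ∞)` and off `γ '' [0, s]`. On it, the
logarithm of `w - γ s` is continued in `s` along the arc. -/
def slitDomain (γ : ℝ → ℂ) (R : ℝ) : Set (ℂ × ℝ) :=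
  {p | p.2 ∈ Icc (0 : ℝ) 1 ∧ p.1 ∉ γ '' Icc 0 p.2 ∪ rightRay R}

theorem slitDomain_down {w : ℂ} {s s' : ℝ} (h : (w, s) ∈ slitDomain γ R) (h0 : 0 ≤ s')
    (hs : s' ≤ s) : (w, s') ∈ slitDomain γ R :=
  ⟨⟨h0, hs.trans h.1.2⟩,
    fun h' => h.2 (union_subset_union_left _ (image_mono (Icc_subset_Icc_right hs)) h')⟩

theorem slitDomain_star {p : ℂ × ℝ} (hp : p ∈ slitDomain γ R) {u : ℝ} (hu : u ∈ Icc (0 : ℝ) 1) :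
    (p.1, u * p.2) ∈ slitDomain γ R :=
  slitDomain_down hp (mul_nonneg hu.1 hp.1.1) (mul_le_of_le_one_left hp.1.1 hu.2)

theorem mem_slitDomain {w : ℂ} (hw : w ∈ (γ '' Icc 0 1 ∪ rightRay R)ᶜ) {s : ℝ}
    (hs : s ∈ Icc (0 : ℝ) 1) : (w, s) ∈ slitDomain γ R :=
  slitDomain_down (s := 1) ⟨by simp, hw⟩ hs.1 hs.2

theorem sub_ne_zero_of_mem_slitDomain {w : ℂ} {s : ℝ} (h : (w, s) ∈ slitDomain γ R) :
    w - γ s ≠ 0 := by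
  rw [sub_ne_zero]
  rintro rfl
  exact h.2 (Or.inl ⟨s, ⟨h.1.1, le_rfl⟩, rfl⟩)

theorem ofReal_sub_mem_slitPlane {w : ℂ} (hw : w ∉ rightRay R) :
    (R - w : ℂ) ∈ Complex.slitPlane := by
  by_contra! h
  simp only [Complex.mem_slitPlane_iff, Complex.sub_re, Complex.ofReal_re, Complex.sub_im,
    Complex.ofReal_im, not_or, not_lt, not_not] at h
  exact hw ⟨by linarith [h.2], by linarith [h.1]⟩

theorem exists_continuousOn_log_sub_arc (hγ : ContinuousOn γ (Icc 0 1)) (hγ0 : γ 0 = R) :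
    ∃ l : ℂ → ℝ → ℂ, ContinuousOn (fun p : ℂ × ℝ => l p.1 p.2) (slitDomain γ R) ∧
      (∀ p ∈ slitDomain γ R, Complex.exp (l p.1 p.2) = p.1 - γ p.2) ∧
      ∀ w, (w, (0 : ℝ)) ∈ slitDomain γ R →
        l w 0 = Complex.log (R - w) + Real.pi * Complex.I := by
  have hslit : ∀ p ∈ slitDomain γ R, (R - p.1 : ℂ) ∈ Complex.slitPlane := fun p hp =>
    ofReal_sub_mem_slitPlane fun h => hp.2 (Or.inr h)
  refine exists_continuousOn_log_of_star (F := fun w s => w - γ s)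
    (fun _ hp _ => slitDomain_star hp)
    (continuousOn_fst.sub (hγ.comp continuousOn_snd fun p hp => hp.1))
    (fun _ => sub_ne_zero_of_mem_slitDomain)
    ((ContinuousOn.clog (by fun_prop) hslit).add continuousOn_const) fun p hp => ?_
  rw [Complex.exp_add, Complex.exp_log (Complex.slitPlane_ne_zero (hslit p hp)),
    Complex.exp_pi_mul_I, hγ0]
  ring

theorem joinedIn_of_mapsTo {α β : Type*} [TopologicalSpace α] [TopologicalSpace β] {S : Set α}
    {T : Set β} {a b : α} (hS : JoinedIn S a b) {f : α → β} (hf : ContinuousOn f S)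
    (h : MapsTo f S T) : JoinedIn T (f a) (f b) :=
  (hS.map_continuousOn hf).mono h.image_subset

/-- The triples `(z, w, s)` for which `z` is nearer than `w` to the point `γ s` of the arc. -/
def nearerTriples (γ : ℝ → ℂ) (R : ℝ) : Set (ℂ × ℂ × ℝ) :=
  {p | (p.1, p.2.2) ∈ slitDomain γ R ∧ (p.2.1, p.2.2) ∈ slitDomain γ R ∧
    ‖p.1 - γ p.2.2‖ < ‖p.2.1 - γ p.2.2‖}

theorem IsArcFromRay.zero_notMem_compl (hγ : IsArcFromRay γ R) :
    (0 : ℂ) ∉ (γ '' Icc 0 1 ∪ rightRay R)ᶜ :=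
  fun h => h (Or.inl ⟨1, by simp, hγ.map_one⟩)

theorem IsArcFromRay.exists_forall_norm_lt (hγ : IsArcFromRay γ R) :
    ∃ w ∈ (γ '' Icc 0 1 ∪ rightRay R)ᶜ, ∀ s ∈ Icc (0 : ℝ) 1, ‖γ s‖ < ‖w - γ s‖ := by
  obtain ⟨B, hB⟩ := hγ.isCompact_image.isBounded.exists_norm_le
  have hB' : ∀ s ∈ Icc (0 : ℝ) 1, ‖γ s‖ ≤ B := fun s hs => hB _ ⟨s, hs, rfl⟩
  obtain ⟨ρ, ⟨hρ, heq⟩, hρB⟩ :=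
    (hγ.eventually_sphere_inter.and (eventually_gt_atTop (2 * B))).exists
  have hnorm : ‖(-ρ : ℂ)‖ = ρ := by simp [abs_of_pos hρ]
  refine ⟨-ρ, (heq.symm.subset ⟨by simp [abs_of_pos hρ], ?_⟩ : _ ∈ _ \ _).2, fun s hs => ?_⟩
  · simp only [mem_singleton_iff, neg_eq_self, Complex.ofReal_eq_zero]
    exact hρ.ne'
  · linarith [norm_sub_norm_le (-ρ : ℂ) (γ s), hB' s hs]

theorem IsArcFromRay.exists_joinedIn_norm_ge (hγ : IsArcFromRay γ R) {w : ℂ}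
    (hw : w ∈ (γ '' Icc 0 1 ∪ rightRay R)ᶜ) :
    ∃ w', (∀ s ∈ Icc (0 : ℝ) 1, ‖γ s‖ < ‖w' - γ s‖) ∧
      ∃ ε > 0, JoinedIn {x ∈ (γ '' Icc 0 1 ∪ rightRay R)ᶜ | ε ≤ ‖x‖} w w' := by
  obtain ⟨w', hw', hfar⟩ := hγ.exists_forall_norm_lt
  obtain ⟨P, hP⟩ := hγ.isPathConnected_compl.joinedIn w hw w' hw'
  obtain ⟨ε, hε, hPε⟩ : ∃ ε > 0, ball 0 ε ⊆ (range P)ᶜ :=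
    isOpen_iff.mp (isCompact_range P.continuous).isClosed.isOpen_compl 0 fun ⟨u, hu⟩ =>
      hγ.zero_notMem_compl (hu ▸ hP u)
  refine ⟨w', hfar, ε, hε, P, fun u => ⟨hP u, ?_⟩⟩
  by_contra! h
  exact hPε (mem_ball_zero_iff.mpr h) ⟨u, rfl⟩

theorem IsArcFromRay.exists_tail_norm_lt (hγ : IsArcFromRay γ R) {ε : ℝ} (hε : 0 < ε) :
    ∃ s₀ ∈ Ico (0 : ℝ) 1, ∀ s ∈ Icc s₀ 1, ‖γ s‖ < ε := by
  obtain ⟨δ, hδ, hδε⟩ := continuousOn_iff.mp hγ.continuousOn 1 (by simp) ε hε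
  refine ⟨max 0 (1 - δ / 2), ⟨le_max_left _ _, max_lt one_pos (by linarith)⟩, fun s hs => ?_⟩
  obtain ⟨hs0, hsδ⟩ := max_le_iff.mp hs.1
  simpa [hγ.map_one] using hδε s ⟨hs0, hs.2⟩ (by
    rw [dist_comm, Real.dist_eq, abs_of_nonneg] <;> linarith [hs.2])

theorem IsArcFromRay.exists_ball_slitDomain (hγ : IsArcFromRay γ R) {s : ℝ}
    (hs : s ∈ Ico (0 : ℝ) 1) : ∃ η > 0, ∀ z ∈ ball (0 : ℂ) η, (z, s) ∈ slitDomain γ R := by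
  have hclosed : IsClosed (γ '' Icc 0 s ∪ rightRay R) :=
    (isCompact_Icc.image_of_continuousOn (hγ.continuousOn.mono
      (Icc_subset_Icc_right hs.2.le))).isClosed.union (isClosed_rightRay R)
  have hzero : (0 : ℂ) ∈ (γ '' Icc 0 s ∪ rightRay R)ᶜ := by
    rintro (⟨u, hu, hu0⟩ | hray)
    · have hu1 := hγ.injOn ⟨hu.1, hu.2.trans hs.2.le⟩ (by simp) (hu0.trans hγ.map_one.symm)
      exact (hu1 ▸ hu.2).not_gt hs.2
    · exact hγ.notMem_ray 1 (by simp) (hγ.map_one ▸ hray)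
  obtain ⟨η, hη, hball⟩ := isOpen_iff.mp hclosed.isOpen_compl 0 hzero
  exact ⟨η, hη, fun z hz => ⟨⟨hs.1, hs.2.le⟩, hball hz⟩⟩

/-- The triple is moved first back along the arc, then `z` to the origin, then `w` far away, and
finally along the arc to its start. -/
theorem IsArcFromRay.exists_joinedIn_nearerTriples (hγ : IsArcFromRay γ R) {w : ℂ}
    (hw : w ∈ (γ '' Icc 0 1 ∪ rightRay R)ᶜ) :
    ∃ η > 0, ∀ z ∈ (γ '' Icc 0 1 ∪ rightRay R)ᶜ, ‖z‖ < η →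
      ∃ z' w', JoinedIn (nearerTriples γ R) (z, w, 1) (z', w', 0) := by
  obtain ⟨w', hfar, ε, hε, hww'⟩ := hγ.exists_joinedIn_norm_ge hw
  obtain ⟨s₀, hs₀, htail⟩ := hγ.exists_tail_norm_lt (show 0 < ε / 3 by positivity)
  obtain ⟨η, hη, hball⟩ := hγ.exists_ball_slitDomain hs₀
  have hs₀I : s₀ ∈ Icc s₀ 1 := ⟨le_rfl, hs₀.2.le⟩
  have hnear : ∀ s ∈ Icc s₀ 1, ∀ y x : ℂ, ‖y‖ < ε / 3 → ε ≤ ‖x‖ → ‖y - γ s‖ < ‖x - γ s‖ :=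
    fun s hs y x hy hx => by
      linarith [norm_sub_le y (γ s), norm_sub_norm_le x (γ s), htail s hs]
  have hmem : ∀ x ∈ (γ '' Icc 0 1 ∪ rightRay R)ᶜ, ∀ s ∈ Icc s₀ 1, (x, s) ∈ slitDomain γ R :=
    fun x hx s hs => mem_slitDomain hx ⟨hs₀.1.trans hs.1, hs.2⟩
  have hε' : 0 < min (ε / 3) η := by positivity
  refine ⟨min (ε / 3) η, hε', fun z hz hzη => ⟨0, w', ?_⟩⟩
  refine .trans (y := (z, w, s₀)) ?_ (.trans (y := (0, w', s₀)) ?_ ?_)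
  · exact joinedIn_of_mapsTo (((convex_Icc s₀ 1).isPathConnected ⟨s₀, hs₀I⟩).joinedIn 1
      ⟨hs₀.2.le, le_rfl⟩ s₀ hs₀I) (f := fun s => (z, w, s)) (by fun_prop) fun s hs =>
      ⟨hmem z hz s hs, hmem w hw s hs,
        hnear s hs z w (hzη.trans_le (min_le_left _ _)) hww'.source_mem.2⟩
  · refine joinedIn_of_mapsTo (JoinedIn.prod (((convex_ball 0 _).isPathConnected
      ⟨0, mem_ball_self hε'⟩).joinedIn z (by simpa using hzη) 0 (mem_ball_self hε')) hww')
      (f := fun p => (p.1, p.2, s₀)) (by fun_prop) fun p hp => ?_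
    obtain ⟨hp1, hp2⟩ := lt_min_iff.mp (mem_ball_zero_iff.mp hp.1)
    exact ⟨hball _ (by simpa using hp2), hmem _ hp.2.1 s₀ hs₀I, hnear s₀ hs₀I _ _ hp1 hp.2.2⟩
  · refine joinedIn_of_mapsTo (((convex_Icc 0 s₀).isPathConnected ⟨0, by simp [hs₀.1]⟩).joinedIn s₀
      (by simp [hs₀.1]) 0 (by simp [hs₀.1])) (f := fun s => ((0 : ℂ), w', s)) (by fun_prop)
      fun s hs => ?_
    have hsI : s ∈ Icc (0 : ℝ) 1 := ⟨hs.1, hs.2.trans hs₀.2.le⟩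
    exact ⟨slitDomain_down (hball 0 (by simpa using hη)) hs.1 hs.2,
      mem_slitDomain hww'.target_mem.1 hsI, by simpa using hfar s hsI⟩

theorem abs_arg_sub_pi_lt {z : ℂ} (him : 0 < z.im) (hre : z.re < 0) :
    |z.arg - Real.pi| < Real.pi / 2 := by
  have hneg : (-z).arg = z.arg - Real.pi := Complex.arg_neg_eq_arg_sub_pi_of_im_pos him
  rw [← hneg, Complex.abs_arg_lt_pi_div_two_iff]
  exact Or.inl (by simpa using hre)

theorem exists_log_sub_add_period_slitDomain {l : ℂ → ℝ → ℂ}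
    (hl : ContinuousOn (fun p : ℂ × ℝ => l p.1 p.2) (slitDomain γ R))
    (hle : ∀ p ∈ slitDomain γ R, Complex.exp (l p.1 p.2) = p.1 - γ p.2)
    (hl0 : ∀ w, (w, (0 : ℝ)) ∈ slitDomain γ R →
      l w 0 = Complex.log (R - w) + Real.pi * Complex.I) :
    ∃ Λ : ℂ × ℂ × ℂ → ℝ → ℂ,
      ContinuousOn (fun q : (ℂ × ℂ × ℂ) × ℝ => Λ q.1 q.2)
        {q | (q.1.1, q.2) ∈ slitDomain γ R ∧ (q.1.2.1, q.2) ∈ slitDomain γ R ∧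
          q.1.2.2 ∈ posPeriods} ∧
      (∀ z w v s, (z, s) ∈ slitDomain γ R → (w, s) ∈ slitDomain γ R → v ∈ posPeriods →
        Complex.exp (Λ (z, w, v) s) = l w s - l z s + v) ∧
      ∀ z w v, (z, (0 : ℝ)) ∈ slitDomain γ R → (w, (0 : ℝ)) ∈ slitDomain γ R → v ∈ posPeriods →
        0 < (l w 0 - l z 0 + v).im ∧ Λ (z, w, v) 0 = Complex.log (l w 0 - l z 0 + v) := by
  have him : ∀ z w v, (z, (0 : ℝ)) ∈ slitDomain γ R → (w, (0 : ℝ)) ∈ slitDomain γ R →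
      v ∈ posPeriods → 0 < (l w 0 - l z 0 + v).im := by
    intro z w v hz hw hv
    rw [hl0 w hw, hl0 z hz]
    simp only [Complex.add_im, Complex.sub_im, Complex.log_im]
    linarith [Complex.arg_le_pi (R - z), Complex.neg_pi_lt_arg (R - w),
      two_pi_le_im_of_mem_posPeriods hv]
  have hzero : ∀ a s, (a, s) ∈ slitDomain γ R → (a, (0 : ℝ)) ∈ slitDomain γ R := fun a s ha =>
    slitDomain_down ha le_rfl ha.1.1
  have hl00 : ContinuousOn (fun p : ℂ × ℝ => l p.1 0) (slitDomain γ R) :=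
    hl.comp (f := fun p : ℂ × ℝ => (p.1, (0 : ℝ))) (by fun_prop) fun p hp => hzero _ _ hp
  obtain ⟨Λ, hΛ, hΛe, hΛ0⟩ := exists_continuousOn_log_sub_add_period
    (fun _ hp _ => slitDomain_star hp) hl (fun z w s hz hw h => by
      rw [hle _ hz, hle _ hw] at h
      exact sub_left_injective h)
    (Λ₀ := fun q => Complex.log (l q.2.1 0 - l q.1 0 + q.2.2))
    (ContinuousOn.clog (((hl00.comp (f := fun q : (ℂ × ℂ × ℂ) × ℝ => (q.1.2.1, q.2)) (by fun_prop)
      fun q hq => hq.2.1).sub (hl00.comp (f := fun q : (ℂ × ℂ × ℂ) × ℝ => (q.1.1, q.2))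
      (by fun_prop) fun q hq => hq.1)).add (by fun_prop))
      fun q hq => Or.inr (him _ _ _ (hzero _ _ hq.1) (hzero _ _ hq.2.1) hq.2.2).ne')
    fun z w v hz hw hv => Complex.exp_log fun h0 => (him z w v hz hw hv).ne' (by rw [h0]; rfl)
  exact ⟨Λ, hΛ, hΛe, fun z w v hz hw hv => ⟨him z w v hz hw hv, hΛ0 z w v hz hw hv⟩⟩

theorem IsArcFromRay.exists_abs_im_lt (hγ : IsArcFromRay γ R) {l : ℂ → ℝ → ℂ}
    (hle : ∀ p ∈ slitDomain γ R, Complex.exp (l p.1 p.2) = p.1 - γ p.2) {w : ℂ}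
    (hw : w ∈ (γ '' Icc 0 1 ∪ rightRay R)ᶜ) :
    ∃ η > 0, ∀ z ∈ (γ '' Icc 0 1 ∪ rightRay R)ᶜ, ‖z‖ < η → ∀ θ : ℝ, ∀ G : ℂ × ℂ × ℝ → ℂ,
      ContinuousOn G {p | (p.1, p.2.2) ∈ slitDomain γ R ∧ (p.2.1, p.2.2) ∈ slitDomain γ R} →
      (∀ z w s, (z, s) ∈ slitDomain γ R → (w, s) ∈ slitDomain γ R →
        (Complex.exp (G (z, w, s) - θ * Complex.I)).re = (l w s).re - (l z s).re) →
      (∀ z w, (z, (0 : ℝ)) ∈ slitDomain γ R → (w, (0 : ℝ)) ∈ slitDomain γ R →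
        (l z 0).re < (l w 0).re → |(G (z, w, 0)).im - θ| < Real.pi / 2) →
      |(G (z, w, 1)).im - θ| < Real.pi / 2 := by
  obtain ⟨η, hη, hjoin⟩ := hγ.exists_joinedIn_nearerTriples hw
  have hre : ∀ z w s, (z, w, s) ∈ nearerTriples γ R → (l z s).re < (l w s).re := by
    rintro z w s ⟨hz, hw, hlt⟩
    rw [re_eq_log_norm_of_exp_eq (hle _ hz), re_eq_log_norm_of_exp_eq (hle _ hw)]
    exact Real.log_lt_log (norm_pos_iff.mpr (sub_ne_zero_of_mem_slitDomain hz)) hlt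
  refine ⟨η, hη, fun z hz hzη θ G hG hGe hbase => ?_⟩
  obtain ⟨z', w', P, hP⟩ := hjoin z hz hzη
  have hrange : range P ⊆ nearerTriples γ R := range_subset_iff.mpr hP
  have htarget : (z', w', 0) ∈ range P := ⟨1, P.target⟩
  obtain ⟨hz', hw', -⟩ := hrange htarget
  refine (abs_im_sub_lt_pi_div_two_iff (isPreconnected_range P.continuous)
    (hG.mono fun p hp => ⟨(hrange hp).1, (hrange hp).2.1⟩) (fun p hp => ?_) ⟨0, P.source⟩
    htarget).mpr (hbase z' w' hz' hw' (hre _ _ _ (hrange htarget)))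
  rw [hGe _ _ _ (hrange hp).1 (hrange hp).2.1]
  exact sub_pos.mpr (hre _ _ _ (hrange hp))

theorem IsArcFromRay.exists_isOrderedLog (hγ : IsArcFromRay γ R) :
    ∃ (l : ℂ → ℂ) (Λ : ℂ → ℂ → ℂ → ℂ), ContinuousOn l (γ '' Icc 0 1 ∪ rightRay R)ᶜ ∧
      (∀ w ∈ (γ '' Icc 0 1 ∪ rightRay R)ᶜ, Complex.exp (l w) = w) ∧
      IsOrderedLog (γ '' Icc 0 1 ∪ rightRay R)ᶜ l Λ := by
  obtain ⟨l, hl, hle, hl0⟩ := exists_continuousOn_log_sub_arc hγ.continuousOn hγ.map_zero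
  obtain ⟨Λ, hΛ, hΛe, hΛ0⟩ := exists_log_sub_add_period_slitDomain hl hle hl0
  have hΩ : ∀ w ∈ (γ '' Icc 0 1 ∪ rightRay R)ᶜ, (w, (1 : ℝ)) ∈ slitDomain γ R := fun w hw =>
    mem_slitDomain hw (by simp)
  have hexp : ∀ w ∈ (γ '' Icc 0 1 ∪ rightRay R)ᶜ, Complex.exp (l w 1) = w := fun w hw => by
    rw [hle _ (hΩ w hw), hγ.map_one, sub_zero]
  have hnorm : ∀ η > 0, ∀ w ∈ (γ '' Icc 0 1 ∪ rightRay R)ᶜ, (l w 1).re < -(-Real.log η) →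
      ‖w‖ < η := fun η hη w hw h => by
    rwa [neg_neg, Real.lt_log_iff_exp_lt hη, ← Complex.norm_exp, hexp w hw] at h
  refine ⟨fun w => l w 1, fun z w v => Λ (z, w, v) 1,
    hl.comp (f := fun w : ℂ => (w, (1 : ℝ))) (by fun_prop) hΩ, hexp,
    hΛ.comp (f := fun p : ℂ × ℂ × ℂ => (p, (1 : ℝ))) (by fun_prop)
      fun p hp => ⟨hΩ _ hp.1, hΩ _ hp.2.1, hp.2.2⟩,
    fun z hz w hw v => hΛe z w v 1 (hΩ z hz) (hΩ w hw), fun w hw => ?_, fun z hz => ?_⟩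
  · obtain ⟨η, hη, key⟩ := hγ.exists_abs_im_lt hle hw
    refine ⟨-Real.log η, fun z hz hzη v hv => ?_⟩
    have him := key z hz (hnorm η hη z hz hzη) 0 (fun p => Λ (p.1, p.2.1, v) p.2.2)
      (hΛ.comp (f := fun p : ℂ × ℂ × ℝ => ((p.1, p.2.1, v), p.2.2)) (by fun_prop)
        fun p hp => ⟨hp.1, hp.2, hv⟩)
      (fun z w s hz hw => by simp [hΛe z w v s hz hw hv, re_eq_zero_of_mem_posPeriods hv])
      fun z w hz hw hlt => by
        rw [(hΛ0 z w v hz hw hv).2, Complex.log_im, sub_zero]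
        refine Complex.abs_arg_lt_pi_div_two_iff.mpr (Or.inl ?_)
        simpa [re_eq_zero_of_mem_posPeriods hv] using hlt
    simpa using him
  · obtain ⟨η, hη, key⟩ := hγ.exists_abs_im_lt hle hz
    refine ⟨-Real.log η, fun w hw hwη v hv => ?_⟩
    refine key w hw (hnorm η hη w hw hwη) Real.pi (fun p => Λ (p.2.1, p.1, v) p.2.2)
      (hΛ.comp (f := fun p : ℂ × ℂ × ℝ => ((p.2.1, p.1, v), p.2.2)) (by fun_prop)
        fun p hp => ⟨hp.2, hp.1, hv⟩)
      (fun w z s hw hz => by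
        rw [Complex.exp_sub, hΛe z w v s hz hw hv, Complex.exp_pi_mul_I, div_neg, div_one]
        simp [re_eq_zero_of_mem_posPeriods hv])
      fun w z hw hz hlt => ?_
    rw [(hΛ0 z w v hz hw hv).2, Complex.log_im]
    refine abs_arg_sub_pi_lt (hΛ0 z w v hz hw hv).1 ?_
    simpa [re_eq_zero_of_mem_posPeriods hv] using hlt

end ArcUnionRay

/-! ### Continuation along an isotopy -/

theorem exists_pos_forall_lt_imp_lt {X : Type*} [TopologicalSpace X] {S : Set X} (hS : IsCompact S)
    {a b : X → ℝ} (ha : ContinuousOn a S) (hb : ContinuousOn b S)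
    (h : ∀ x ∈ S, a x ≤ 0 → b x ≤ 0) {ε : ℝ} (hε : 0 < ε) :
    ∃ δ > 0, ∀ x ∈ S, a x < δ → b x < ε := by
  have hcompact : IsCompact {x : S | ε ≤ b x} := by
    have := isCompact_iff_compactSpace.mp hS
    exact (isClosed_le continuous_const hb.domRestrict).isCompact
  rcases {x : S | ε ≤ b x}.eq_empty_or_nonempty with hempty | hne
  · exact ⟨1, one_pos, fun x hx _ => not_le.mp fun hεx =>
      (hempty.subset (show (⟨x, hx⟩ : S) ∈ {x : S | ε ≤ b x} from hεx)).elim⟩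
  · obtain ⟨m, hm, hmin⟩ := hcompact.exists_isMinOn hne ha.domRestrict.continuousOn
    refine ⟨a m, ?_, fun x hx hxm => not_le.mp fun hεx =>
      hxm.not_ge (hmin (show (⟨x, hx⟩ : S) ∈ {x : S | ε ≤ b x} from hεx))⟩
    by_contra! ham
    exact (hε.trans_le hm).not_ge (h m m.2 ham)

theorem exists_forall_re_lt_of_uniform {α : Type*} {K : Set α} {f : α → ℝ → ℂ} {w : α}
    (hf : ContinuousOn (f w) (Icc 0 1))
    (hunif : ∀ M : ℝ, ∃ M' : ℝ, ∀ z ∈ K, ∀ s ∈ Icc (0 : ℝ) 1, ∀ t ∈ Icc (0 : ℝ) 1,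
      (f z t).re < -M' → (f z s).re < -M) (M₀ : ℝ) :
    ∃ M : ℝ, ∀ t ∈ Icc (0 : ℝ) 1, ∀ z ∈ K, (f z t).re < -M →
      (f z 0).re < -M₀ ∧ ∀ s ∈ Icc (0 : ℝ) 1, (f z s).re < (f w s).re := by
  obtain ⟨m, hm⟩ := (isCompact_Icc.image_of_continuousOn
    (Complex.continuous_re.comp_continuousOn hf)).bddBelow
  obtain ⟨M, hM⟩ := hunif (max M₀ (-m))
  refine ⟨M, fun t ht z hz hzt => ⟨?_, fun s hs => ?_⟩⟩
  · linarith [hM z hz 0 (by simp) t ht hzt, le_max_left M₀ (-m)]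
  · have hms : m ≤ (f w s).re := hm (mem_image_of_mem _ hs)
    linarith [hM z hz s hs t ht hzt, le_max_right M₀ (-m)]

section Isotopy

variable {α : Type*} [TopologicalSpace α] {K : Set α} {f : α → ℝ → ℂ}

theorem IsOrderedLog.exists_of_isotopy
    (hf : ContinuousOn (fun p : α × ℝ => f p.1 p.2) (K ×ˢ Icc 0 1))
    (hinj : ∀ t ∈ Icc (0 : ℝ) 1, InjOn (fun z => Complex.exp (f z t)) K)
    (hunif : ∀ M : ℝ, ∃ M' : ℝ, ∀ z ∈ K, ∀ s ∈ Icc (0 : ℝ) 1, ∀ t ∈ Icc (0 : ℝ) 1,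
      (f z t).re < -M' → (f z s).re < -M)
    {Λ₀ : α → α → ℂ → ℂ} (h : IsOrderedLog K (fun z => f z 0) Λ₀) {t : ℝ}
    (ht : t ∈ Icc (0 : ℝ) 1) : ∃ Λ, IsOrderedLog K (fun z => f z t) Λ := by
  have h0 : (0 : ℝ) ∈ Icc (0 : ℝ) 1 := by simp
  have hfw : ∀ w ∈ K, ContinuousOn (f w) (Icc 0 1) := fun w hw =>
    hf.comp (f := fun s : ℝ => (w, s)) (by fun_prop) fun s hs => ⟨hw, hs⟩
  obtain ⟨Λ, hΛ, hΛe, hΛ0⟩ := exists_continuousOn_log_sub_add_period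
    (D := K ×ˢ Icc 0 1) (Λ₀ := fun q => Λ₀ q.1 q.2.1 q.2.2)
    (fun p hp u hu => ⟨hp.1, unitInterval.mul_mem hu hp.2⟩) hf
    (fun z w s hz hw heq => hinj s hz.2 hz.1 hw.1 heq)
    (h.continuousOn.comp continuousOn_fst fun q hq => ⟨hq.1.1, hq.2.1.1, hq.2.2⟩)
    fun z w v hz hw hv => h.exp_eq z hz.1 w hw.1 v hv
  have hpath : ∀ z ∈ K, ∀ w ∈ K, ∀ v ∈ posPeriods, ContinuousOn (Λ (z, w, v)) (Icc 0 1) :=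
    fun z hz w hw v hv => hΛ.comp (f := fun s : ℝ => ((z, w, v), s)) (by fun_prop)
      fun s hs => ⟨⟨hz, hs⟩, ⟨hw, hs⟩, hv⟩
  refine ⟨fun z w v => Λ (z, w, v) t, hΛ.comp (f := fun p => (p, t)) (by fun_prop)
    fun p hp => ⟨⟨hp.1, ht⟩, ⟨hp.2.1, ht⟩, hp.2.2⟩,
    fun z hz w hw v hv => hΛe z w v t ⟨hz, ht⟩ ⟨hw, ht⟩ hv, fun w hw => ?_, fun z hz => ?_⟩
  · obtain ⟨M₀, hM₀⟩ := h.abs_im_lt w hw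
    obtain ⟨M, hM⟩ := exists_forall_re_lt_of_uniform (hfw w hw) hunif M₀
    refine ⟨M, fun z hz hzM v hv => ?_⟩
    obtain ⟨hz0, hzw⟩ := hM t ht z hz hzM
    refine (abs_im_lt_pi_div_two_iff isPreconnected_Icc (hpath z hz w hw v hv)
      (fun s hs => ?_) ht h0).mpr ?_
    · rw [hΛe z w v s ⟨hz, hs⟩ ⟨hw, hs⟩ hv]
      simpa [re_eq_zero_of_mem_posPeriods hv] using hzw s hs
    · rw [hΛ0 z w v ⟨hz, h0⟩ ⟨hw, h0⟩ hv]
      exact hM₀ z hz hz0 v hv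
  · obtain ⟨M₀, hM₀⟩ := h.abs_im_sub_pi_lt z hz
    obtain ⟨M, hM⟩ := exists_forall_re_lt_of_uniform (hfw z hz) hunif M₀
    refine ⟨M, fun w hw hwM v hv => ?_⟩
    obtain ⟨hw0, hwz⟩ := hM t ht w hw hwM
    refine (abs_im_sub_lt_pi_div_two_iff isPreconnected_Icc (hpath z hz w hw v hv)
      (fun s hs => ?_) ht h0).mpr ?_
    · rw [Complex.exp_sub, hΛe z w v s ⟨hz, hs⟩ ⟨hw, hs⟩ hv, Complex.exp_pi_mul_I, div_neg, div_one]
      simpa [re_eq_zero_of_mem_posPeriods hv] using hwz s hs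
    · rw [hΛ0 z w v ⟨hz, h0⟩ ⟨hw, h0⟩ hv]
      exact hM₀ w hw hw0 v hv

theorem exists_log_isotopy {Fr : Set α} {h : α → ℝ → ℂ} {p : α} (hFr : IsCompact Fr)
    (hp : p ∈ Fr)
    (hcont : ContinuousOn (fun q : α × ℝ => h q.1 q.2) (Fr ×ˢ Icc 0 1))
    (hinj : ∀ t ∈ Icc (0 : ℝ) 1, InjOn (fun z => h z t) Fr)
    (hfix : ∀ t ∈ Icc (0 : ℝ) 1, h p t = 0) {l : α → ℂ} {Λ : α → α → ℂ → ℂ}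
    (hl : ContinuousOn l (Fr \ {p})) (hle : ∀ z ∈ Fr \ {p}, Complex.exp (l z) = h z 0)
    (hΛ : IsOrderedLog (Fr \ {p}) l Λ) :
    ∃ f : α → ℝ → ℂ, ContinuousOn (fun q : α × ℝ => f q.1 q.2) ((Fr \ {p}) ×ˢ Icc 0 1) ∧
      (∀ z ∈ Fr \ {p}, ∀ t ∈ Icc (0 : ℝ) 1, Complex.exp (f z t) = h z t) ∧
      ∀ t ∈ Icc (0 : ℝ) 1, ∃ Λ, IsOrderedLog (Fr \ {p}) (fun z => f z t) Λ := by
  have hzero : ∀ z ∈ Fr, ∀ t ∈ Icc (0 : ℝ) 1, h z t = 0 → z = p := fun z hz t ht hzt =>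
    hinj t ht hz hp (hzt.trans (hfix t ht).symm)
  obtain ⟨f, hf, hfe, hf0⟩ := exists_continuousOn_log_of_homotopy
    (S := Fr \ {p}) (hcont.mono (prod_mono sdiff_subset le_rfl))
    (fun z hz t ht hzt => hz.2 (hzero z hz.1 t ht hzt)) hl hle
  refine ⟨f, hf, hfe, fun t ht => IsOrderedLog.exists_of_isotopy hf (fun s hs z hz w hw heq =>
    hinj s hs hz.1 hw.1 (by simpa only [hfe z hz s hs, hfe w hw s hs] using heq)) (fun M => ?_)
    (hΛ.congr fun z hz => (hf0 z hz).symm) ht⟩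
  obtain ⟨δ, hδ, hδM⟩ := exists_pos_forall_lt_imp_lt (hFr.prod (isCompact_Icc.prod isCompact_Icc))
    (a := fun q : α × ℝ × ℝ => ‖h q.1 q.2.1‖) (b := fun q => ‖h q.1 q.2.2‖)
    (hcont.comp (f := fun q : α × ℝ × ℝ => (q.1, q.2.1)) (by fun_prop)
      fun q hq => ⟨hq.1, hq.2.1⟩).norm
    (hcont.comp (f := fun q : α × ℝ × ℝ => (q.1, q.2.2)) (by fun_prop)
      fun q hq => ⟨hq.1, hq.2.2⟩).norm
    (fun q hq hq0 => by
      rw [hzero q.1 hq.1 q.2.1 hq.2.1 (norm_le_zero_iff.mp hq0), hfix _ hq.2.2, norm_zero])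
    (Real.exp_pos (-M))
  refine ⟨-Real.log δ, fun z hz s hs t ht hzt => ?_⟩
  have hnorm : ∀ u ∈ Icc (0 : ℝ) 1, ‖h z u‖ = Real.exp (f z u).re := fun u hu => by
    rw [← hfe z hz u hu, Complex.norm_exp]
  have := hδM (z, t, s) ⟨hz.1, ht, hs⟩ (by
    rwa [hnorm t ht, ← Real.lt_log_iff_exp_lt hδ, ← neg_neg (Real.log δ)])
  rwa [hnorm s hs, Real.exp_lt_exp] at this

end Isotopy

/-! ### Voronoi regions of two closed sets -/

section Voronoi

variable {E : Type*} [MetricSpace E] {B C : Set E} {x : E}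

/-- The Voronoi region of `B` with respect to `C`: the points which are at least as close to `B` as
to `C`. -/
def voronoi (B C : Set E) : Set E := {x | infDist x B ≤ infDist x C}

theorem subset_voronoi : B ⊆ voronoi B C := fun x hx => by
  simpa only [voronoi, mem_ofPred_eq, infDist_zero_of_mem hx] using infDist_nonneg

theorem isClosed_voronoi (B C : Set E) : IsClosed (voronoi B C) :=
  isClosed_le (continuous_infDist_pt B) (continuous_infDist_pt C)

theorem voronoi_union_voronoi (B C : Set E) : voronoi B C ∪ voronoi C B = univ :=
  eq_univ_of_forall fun x => le_total (infDist x B) (infDist x C)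

theorem notMem_of_mem_voronoi (hB : IsClosed B) (hBn : B.Nonempty) (hd : Disjoint B C)
    (hx : x ∈ voronoi B C) : x ∉ C := fun hxC => by
  have h0 : infDist x B ≤ 0 := (show infDist x B ≤ infDist x C from hx).trans_eq
    (infDist_zero_of_mem hxC)
  have hxB : x ∈ B := (hB.mem_iff_infDist_zero hBn).mpr (h0.antisymm infDist_nonneg)
  exact disjoint_left.mp hd hxB hxC

end Voronoi

section StrictConvex

variable {E : Type*} [NormedAddCommGroup E] [NormedSpace ℝ E] [StrictConvexSpace ℝ E]
  [ProperSpace E] {B C : Set E} {b q x : E}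

theorem infDist_lt_infDist_of_mem_segment (hC : IsClosed C) (hCn : C.Nonempty)
    (hd : Disjoint B C) (hb : b ∈ B) (hqb : infDist q B = dist q b) (hq : q ∈ voronoi B C)
    (hx : x ∈ segment ℝ b q) (hxq : x ≠ q) : infDist x B < infDist x C := by
  obtain ⟨c, hc, hxc⟩ := hC.exists_infDist_eq_dist hCn x
  rw [hxc]
  refine (infDist_le_dist_of_mem hb).trans_lt (not_le.mp fun hle => ?_)
  have hW : Wbtw ℝ q x b := (mem_segment_iff_wbtw.mp hx).symm
  have hqc : dist q b ≤ dist q c := hqb ▸ (show infDist q B ≤ infDist q C from hq).trans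
    (infDist_le_dist_of_mem hc)
  have hxqb := hW.dist_add_dist
  have hdist : dist q x + dist x c = dist q c :=
    le_antisymm (by linarith) (dist_triangle q x c)
  have hray : SameRay ℝ (b - x) (c - x) :=
    (hW.sameRay_vsub.symm).trans (dist_add_dist_eq_iff.mp hdist).sameRay_vsub
      fun h => absurd (sub_eq_zero.mp h) hxq
  have hnorm : ‖b - x‖ = ‖c - x‖ := by
    rw [← dist_eq_norm, ← dist_eq_norm, dist_comm b, dist_comm c]
    linarith [dist_triangle q x c]
  have hbc : b = c := sub_left_injective (hray.eq_of_norm_eq hnorm)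
  exact disjoint_left.mp hd hb (hbc ▸ hc)

theorem segment_subset_voronoi (hC : IsClosed C) (hCn : C.Nonempty) (hd : Disjoint B C)
    (hb : b ∈ B) (hqb : infDist q B = dist q b) (hq : q ∈ voronoi B C) :
    segment ℝ b q ⊆ voronoi B C := fun x hx => by
  rcases eq_or_ne x q with rfl | hxq
  · exact hq
  · exact (infDist_lt_infDist_of_mem_segment hC hCn hd hb hqb hq hx hxq).le

theorem notMem_segment_of_mem_voronoi (hC : IsClosed C) (hCn : C.Nonempty) (hd : Disjoint B C)
    (hb : b ∈ B) (hqb : infDist q B = dist q b) (hq : q ∈ voronoi B C) (hx : x ∈ voronoi C B)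
    (hxq : x ≠ q) : x ∉ segment ℝ b q := fun hxs =>
  (infDist_lt_infDist_of_mem_segment hC hCn hd hb hqb hq hxs hxq).not_ge hx

end StrictConvex

/-! ### Sets connected to the left end of the plane -/

/-- The filter of left half-planes. -/
def leftEnd : Filter ℂ := comap Complex.re atBot

theorem eventually_leftEnd {p : ℂ → Prop} :
    (∀ᶠ y in leftEnd, p y) ↔ ∃ M, ∀ y : ℂ, y.re < M → p y :=
  ((atBot_basis_Iio.comap Complex.re).eventually_iff).trans (by simp)

theorem eventually_leftEnd_re_lt (m : ℝ) : ∀ᶠ y in leftEnd, y.re < m :=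
  eventually_leftEnd.mpr ⟨m, fun _ hy => hy⟩

/-- A set `Y` in the plane such that `Y ∪ {-∞}` is connected, where `-∞` is the left end of the
plane. This is expressed in terms of the continuous functions with values in `2πiℤ`, which is the
form in which it is used. -/
def IsConnectedToLeft (Y : Set ℂ) : Prop :=
  ∀ ψ : ℂ → ℂ, ContinuousOn ψ Y → (∀ y ∈ Y, Complex.exp (ψ y) = 1) →
    (∀ᶠ y in leftEnd, y ∈ Y → ψ y = 0) → ∀ y ∈ Y, ψ y = 0

theorem IsConnectedToLeft.eqOn_of_exp_eq {Y : Set ℂ} (hY : IsConnectedToLeft Y) {g₁ g₂ : ℂ → ℂ}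
    (hg₁ : ContinuousOn g₁ Y) (hg₂ : ContinuousOn g₂ Y)
    (he : ∀ y ∈ Y, Complex.exp (g₁ y) = Complex.exp (g₂ y))
    (h₁ : ∀ᶠ y in leftEnd, y ∈ Y → |(g₁ y).im| < Real.pi / 2)
    (h₂ : ∀ᶠ y in leftEnd, y ∈ Y → |(g₂ y).im| < Real.pi / 2) : EqOn g₁ g₂ Y := by
  have hsub : ∀ y ∈ Y, Complex.exp (g₁ y - g₂ y) = 1 := fun y hy => by
    rw [Complex.exp_sub, he y hy, div_self (Complex.exp_ne_zero _)]
  refine fun y hy => sub_eq_zero.mp (hY _ (hg₁.sub hg₂) hsub ?_ y hy)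
  filter_upwards [h₁, h₂] with z hz₁ hz₂ hz
  refine eq_zero_of_exp_eq_one_of_abs_im_lt (hsub z hz) ?_
  rw [Pi.sub_apply, Complex.sub_im]
  linarith [abs_sub (g₁ z).im (g₂ z).im, hz₁ hz, hz₂ hz, Real.pi_pos]

theorem isConnectedToLeft_voronoi_sdiff {B C : Set ℂ} (hB : IsClosed B) (hBn : B.Nonempty)
    (hC : IsClosed C) (hCn : C.Nonempty) (hd : Disjoint B C) (hconn : IsConnectedToLeft B) {q : ℂ}
    (hq : q ∈ voronoi C B) : IsConnectedToLeft (voronoi B C \ {q}) := by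
  intro ψ hψ he hψ0 y hy
  have hsub : B ⊆ voronoi B C \ {q} :=
    subset_sdiff_singleton subset_voronoi (notMem_of_mem_voronoi hC hCn hd.symm hq)
  obtain ⟨b, hb, hyb⟩ := hB.exists_infDist_eq_dist hBn y
  have hseg : segment ℝ b y ⊆ voronoi B C \ {q} :=
    subset_sdiff_singleton (segment_subset_voronoi hC hCn hd hb hyb hy.1)
      (notMem_segment_of_mem_voronoi hC hCn hd hb hyb hy.1 hq (Ne.symm hy.2))
  rw [eq_of_isPreconnected_of_exp_eq (convex_segment b y).isPreconnected (hψ.mono hseg)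
    (fun x hx => he x (hseg hx)) (right_mem_segment ℝ b y) (left_mem_segment ℝ b y)]
  exact hconn ψ (hψ.mono hsub) (fun x hx => he x (hsub hx))
    (hψ0.mono fun x hx hxB => hx (hsub hxB)) b hb

/-! ### Extending logarithms of differences along shortest segments -/

theorem continuousOn_comp_nearest {α β γ : Type*} [PseudoMetricSpace α] [ProperSpace α]
    [TopologicalSpace β] [TopologicalSpace γ] {D : Set α} (hD : IsClosed D) {S : Set (α × β)}
    {Γ : α × α × β → γ}
    (hΓ : ContinuousOn Γ {p | (p.1, p.2.2) ∈ S ∧ p.2.1 ∈ D ∧ infDist p.1 D = dist p.1 p.2.1})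
    {n : α → α} (hn : ∀ q, n q ∈ D ∧ infDist q D = dist q (n q))
    (hind : ∀ q y d, (q, y) ∈ S → d ∈ D → infDist q D = dist q d → Γ (q, n q, y) = Γ (q, d, y)) :
    ContinuousOn (fun p => Γ (p.1, n p.1, p.2)) S := by
  rintro ⟨q, y⟩ hqy
  refine (tendsto_iff_ultrafilter _ _ _).mpr fun u hu => ?_
  have huS : S ∈ u := hu self_mem_nhdsWithin
  have hu' : Tendsto id (u : Filter (α × β)) (𝓝 (q, y)) := hu.trans nhdsWithin_le_nhds
  have hq : Tendsto Prod.fst (u : Filter (α × β)) (𝓝 q) := (continuous_fst.tendsto _).comp hu'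
  have hy : Tendsto Prod.snd (u : Filter (α × β)) (𝓝 y) := (continuous_snd.tendsto _).comp hu'
  have hinf : Tendsto (fun p : α × β => infDist p.1 D) u (𝓝 (infDist q D)) :=
    ((continuous_infDist_pt D).tendsto q).comp hq
  have hbdd : ∀ᶠ p in (u : Filter (α × β)), n p.1 ∈ closedBall q (infDist q D + 1 + 1) := by
    filter_upwards [hinf.eventually_lt_const (lt_add_one _),
      hq.eventually (ball_mem_nhds q one_pos)] with p hp hpq
    rw [(hn p.1).2] at hp
    rw [mem_closedBall']
    linarith [dist_triangle q p.1 (n p.1), dist_comm q p.1, mem_ball.mp hpq]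
  obtain ⟨d, -, hd⟩ := (isCompact_closedBall q _).ultrafilter_le_nhds'
    (u.map fun p : α × β => n p.1) hbdd
  have hd : Tendsto (fun p : α × β => n p.1) u (𝓝 d) := hd
  have hdD : d ∈ D := hD.mem_of_tendsto hd (Eventually.of_forall fun p => (hn p.1).1)
  have hqd : infDist q D = dist q d := tendsto_nhds_unique hinf
    ((hq.dist hd).congr fun p => (hn p.1).2.symm)
  beta_reduce
  rw [hind q y d hqy hdD hqd]
  refine (hΓ (q, d, y) ⟨hqy, hdD, hqd⟩).tendsto.comp (tendsto_nhdsWithin_iff.mpr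
    ⟨hq.prodMk_nhds (hd.prodMk_nhds hy), ?_⟩)
  filter_upwards [huS] with p hp
  exact ⟨hp, hn p.1⟩

/-- A logarithm `Λ d y` of the difference `d - y` for distinct `d ∈ D` and `y ∈ Y`, continuous in
both variables, which is the principal one when `y` is far to the left. -/
structure IsNormalizedLog (D Y : Set ℂ) (Λ : ℂ → ℂ → ℂ) : Prop where
  continuousOn : ContinuousOn (fun p : ℂ × ℂ => Λ p.1 p.2) ((D ×ˢ Y) \ diagonal ℂ)
  exp_eq : ∀ d ∈ D, ∀ y ∈ Y, d ≠ y → Complex.exp (Λ d y) = d - y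
  abs_im_lt : ∀ d ∈ D, ∀ᶠ y in leftEnd, y ∈ Y → d ≠ y → |(Λ d y).im| < Real.pi / 2

section Extension

variable {D Q Y : Set ℂ} {Λ : ℂ → ℂ → ℂ}

theorem IsNormalizedLog.exists_along_nearest (hΛ : IsNormalizedLog D Y Λ)
    (hsp : ∀ q ∈ Q, ∀ d ∈ D, infDist q D = dist q d → ∀ y ∈ Y, q ≠ y → y ∉ segment ℝ d q) :
    ∃ Γ : ℂ × ℂ × ℂ → ℂ,
      ContinuousOn Γ {p | (p.1, p.2.2) ∈ (Q ×ˢ Y) \ diagonal ℂ ∧ p.2.1 ∈ D ∧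
        infDist p.1 D = dist p.1 p.2.1} ∧
      (∀ q ∈ Q, ∀ d ∈ D, infDist q D = dist q d →
        (∀ y ∈ Y, q ≠ y → Complex.exp (Γ (q, d, y)) = q - y) ∧
        (∀ᶠ y in leftEnd, y ∈ Y → q ≠ y → |(Γ (q, d, y)).im| < Real.pi / 2) ∧
        (q = d → ∀ y ∈ Y, q ≠ y → Γ (q, d, y) = Λ q y)) := by
  set T := {p : ℂ × ℂ × ℂ | (p.1, p.2.2) ∈ (Q ×ˢ Y) \ diagonal ℂ ∧ p.2.1 ∈ D ∧
    infDist p.1 D = dist p.1 p.2.1}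
  have hmem : ∀ p ∈ T, ∀ s ∈ Icc (0 : ℝ) 1, AffineMap.lineMap p.2.1 p.1 s ≠ p.2.2 :=
    fun p hp s hs h => hsp _ hp.1.1.1 _ hp.2.1 hp.2.2 _ hp.1.1.2 hp.1.2
      (segment_eq_image_lineMap ℝ p.2.1 p.1 ▸ ⟨s, hs, h⟩)
  have hne : ∀ p ∈ T, p.2.1 ≠ p.2.2 := fun p hp => by simpa using hmem p hp 0 (by simp)
  obtain ⟨G, hG, hGe, hG0⟩ := exists_continuousOn_log_of_homotopy (S := T)
    (F := fun p s => AffineMap.lineMap p.2.1 p.1 s - p.2.2)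
    (by simp only [AffineMap.lineMap_apply_module]; fun_prop)
    (fun p hp s hs => sub_ne_zero.mpr (hmem p hp s hs))
    (g₀ := fun p => Λ p.2.1 p.2.2)
    (hΛ.continuousOn.comp (f := fun p : ℂ × ℂ × ℂ => (p.2.1, p.2.2)) (by fun_prop)
      fun p hp => ⟨⟨hp.2.1, hp.1.1.2⟩, hne p hp⟩)
    (fun p hp => by rw [hΛ.exp_eq _ hp.2.1 _ hp.1.1.2 (hne p hp), AffineMap.lineMap_apply_zero])
  have hpath : ∀ p ∈ T, ContinuousOn (G p) (Icc 0 1) := fun p hp =>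
    hG.comp (f := fun s : ℝ => (p, s)) (by fun_prop) fun s hs => ⟨hp, hs⟩
  refine ⟨fun p => G p 1, hG.comp (f := fun p => (p, (1 : ℝ))) (by fun_prop)
    fun p hp => ⟨hp, by simp⟩, fun q hq d hd hqd => ⟨fun y hy hqy => ?_, ?_, fun h y hy hqy => ?_⟩⟩
  · simpa using hGe (q, d, y) ⟨⟨⟨hq, hy⟩, hqy⟩, hd, hqd⟩ 1 (by simp)
  · filter_upwards [hΛ.abs_im_lt d hd, eventually_leftEnd_re_lt d.re, eventually_leftEnd_re_lt q.re]
      with y hyΛ hyd hyq hy hqy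
    have hp : (q, d, y) ∈ T := ⟨⟨⟨hq, hy⟩, hqy⟩, hd, hqd⟩
    refine (abs_im_lt_pi_div_two_iff isPreconnected_Icc (hpath _ hp) (fun s hs => ?_)
      (by simp) (by simp)).mp (hG0 _ hp ▸ hyΛ hy (hne _ hp))
    rw [hGe _ hp s hs, Complex.sub_re, sub_pos]
    exact (convex_halfSpace_re_gt y.re).lineMap_mem hyd hyq hs
  · subst h
    have hp : (q, q, y) ∈ T := ⟨⟨⟨hq, hy⟩, hqy⟩, hd, hqd⟩
    exact (eq_of_isPreconnected_of_exp_eq isPreconnected_Icc (hpath _ hp)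
      (fun s hs => (hGe _ hp s hs).trans (by rw [AffineMap.lineMap_same_apply]))
      (by simp) (by simp)).trans (hG0 _ hp)

theorem IsNormalizedLog.exists_extension (hΛ : IsNormalizedLog D Y Λ) (hD : IsClosed D)
    (hDn : D.Nonempty)
    (hsp : ∀ q ∈ Q, ∀ d ∈ D, infDist q D = dist q d → ∀ y ∈ Y, q ≠ y → y ∉ segment ℝ d q)
    (hconn : ∀ q ∈ Q, IsConnectedToLeft (Y \ {q})) :
    ∃ Λ' : ℂ → ℂ → ℂ, IsNormalizedLog Q Y Λ' ∧ ∀ d ∈ D ∩ Q, ∀ y ∈ Y, d ≠ y → Λ' d y = Λ d y := by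
  obtain ⟨Γ, hΓ, hnear⟩ := hΛ.exists_along_nearest hsp
  choose n hnD hn using hD.exists_infDist_eq_dist hDn
  have hind : ∀ q ∈ Q, ∀ d ∈ D, infDist q D = dist q d →
      EqOn (fun y => Γ (q, n q, y)) (fun y => Γ (q, d, y)) (Y \ {q}) := by
    intro q hq d hd hqd
    have hcont : ∀ d ∈ D, infDist q D = dist q d → ContinuousOn (fun y => Γ (q, d, y)) (Y \ {q}) :=
      fun d hd hqd => hΓ.comp (f := fun y => (q, d, y)) (by fun_prop)
        fun y hy => ⟨⟨⟨hq, hy.1⟩, Ne.symm hy.2⟩, hd, hqd⟩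
    obtain ⟨hexp, him, -⟩ := hnear q hq d hd hqd
    obtain ⟨hexp', him', -⟩ := hnear q hq (n q) (hnD q) (hn q)
    refine (hconn q hq).eqOn_of_exp_eq (hcont _ (hnD q) (hn q)) (hcont d hd hqd) (fun y hy => ?_)
      (him'.mono fun y h hy => h hy.1 (Ne.symm hy.2)) (him.mono fun y h hy => h hy.1 (Ne.symm hy.2))
    rw [hexp y hy.1 (Ne.symm hy.2), hexp' y hy.1 (Ne.symm hy.2)]
  refine ⟨fun q y => Γ (q, n q, y), ⟨?_, ?_, ?_⟩, fun d hd y hy hdy => ?_⟩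
  · exact continuousOn_comp_nearest hD hΓ (fun q => ⟨hnD q, hn q⟩) fun q y d hqy hd hqd =>
      hind q hqy.1.1 d hd hqd ⟨hqy.1.2, Ne.symm hqy.2⟩
  · exact fun q hq => (hnear q hq (n q) (hnD q) (hn q)).1
  · exact fun q hq => (hnear q hq (n q) (hnD q) (hn q)).2.1
  · have hnd : d = n d :=
      dist_eq_zero.mp ((hn d).symm.trans (infDist_zero_of_mem hd.1))
    exact (hnear d hd.2 (n d) (hnD d) (hn d)).2.2 hnd y hy hdy

end Extension

/-! ### Separated pairs -/

section IsNormalizedLog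

variable {D Y : Set ℂ} {Λ : ℂ → ℂ → ℂ}

theorem IsNormalizedLog.continuousOn_left (hΛ : IsNormalizedLog D Y Λ) {y : ℂ} (hy : y ∈ Y) :
    ContinuousOn (fun d => Λ d y) (D \ {y}) :=
  hΛ.continuousOn.comp (f := fun d => (d, y)) (by fun_prop) fun _ hd => ⟨⟨hd.1, hy⟩, hd.2⟩

theorem IsNormalizedLog.continuousOn_right (hΛ : IsNormalizedLog D Y Λ) {d : ℂ} (hd : d ∈ D) :
    ContinuousOn (Λ d) (Y \ {d}) :=
  hΛ.continuousOn.comp (f := fun y => (d, y)) (by fun_prop)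
    fun _ hy => ⟨⟨hd, hy.1⟩, Ne.symm hy.2⟩

theorem IsNormalizedLog.swap_add (hΛ : IsNormalizedLog D Y Λ) {c : ℂ} (hc : Complex.exp c = -1)
    (him : ∀ y ∈ Y, ∀ᶠ d in leftEnd, d ∈ D → y ≠ d → |(Λ d y + c).im| < Real.pi / 2) :
    IsNormalizedLog Y D (fun y d => Λ d y + c) where
  continuousOn := (hΛ.continuousOn.comp (f := Prod.swap) (by fun_prop)
    fun _ hp => ⟨⟨hp.1.2, hp.1.1⟩, Ne.symm hp.2⟩).add continuousOn_const
  exp_eq y hy d hd hyd := by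
    rw [Complex.exp_add, hΛ.exp_eq d hd y hy hyd.symm, hc]
    ring
  abs_im_lt := him

end IsNormalizedLog

/-- Two disjoint closed sets in the open left half-plane, both reaching the left end of the plane,
such that every point of the left half-plane is within distance `r₀` of one of them. -/
structure SeparatedPair (B C : Set ℂ) (r₀ : ℝ) : Prop where
  isClosed_left : IsClosed B
  isClosed_right : IsClosed C
  nonempty_left : B.Nonempty
  nonempty_right : C.Nonempty
  disjoint : Disjoint B C
  isConnectedToLeft_left : IsConnectedToLeft B
  isConnectedToLeft_right : IsConnectedToLeft C
  re_neg_left : ∀ b ∈ B, b.re < 0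
  re_neg_right : ∀ c ∈ C, c.re < 0
  infDist_le : ∀ q : ℂ, q.re ≤ 0 → infDist q B ≤ r₀ ∨ infDist q C ≤ r₀

namespace SeparatedPair

variable {B C : Set ℂ} {r₀ : ℝ}

theorem symm (H : SeparatedPair B C r₀) : SeparatedPair C B r₀ where
  isClosed_left := H.isClosed_right
  isClosed_right := H.isClosed_left
  nonempty_left := H.nonempty_right
  nonempty_right := H.nonempty_left
  disjoint := H.disjoint.symm
  isConnectedToLeft_left := H.isConnectedToLeft_right
  isConnectedToLeft_right := H.isConnectedToLeft_left
  re_neg_left := H.re_neg_right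
  re_neg_right := H.re_neg_left
  infDist_le q hq := (H.infDist_le q hq).symm

theorem dist_le (H : SeparatedPair B C r₀) {x b : ℂ} (hx : x ∈ voronoi B C) (hx0 : x.re ≤ 0)
    (hb : infDist x B = dist x b) : dist x b ≤ r₀ :=
  hb ▸ (H.infDist_le x hx0).elim id (show infDist x B ≤ infDist x C from hx).trans

theorem re_le_add (H : SeparatedPair B C r₀) {x b : ℂ} (hx : x ∈ voronoi B C) (hx0 : x.re ≤ 0)
    (hb : infDist x B = dist x b) : b.re ≤ x.re + r₀ := by
  have hre : |b.re - x.re| ≤ dist x b := by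
    simpa only [Complex.sub_re, dist_comm x b, Complex.dist_eq] using Complex.abs_re_le_norm (b - x)
  linarith [H.dist_le hx hx0 hb, le_abs_self (b.re - x.re)]

theorem notMem_right (H : SeparatedPair B C r₀) {x : ℂ} (hx : x ∈ voronoi B C) : x ∉ C :=
  notMem_of_mem_voronoi H.isClosed_left H.nonempty_left H.disjoint hx

theorem notMem_segment (H : SeparatedPair B C r₀) {q b x : ℂ} (hb : b ∈ B)
    (hqb : infDist q B = dist q b) (hq : q ∈ voronoi B C) (hx : x ∈ voronoi C B) (hqx : q ≠ x) :
    x ∉ segment ℝ b q :=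
  notMem_segment_of_mem_voronoi H.isClosed_right H.nonempty_right H.disjoint hb hqb hq hx hqx.symm

theorem isConnectedToLeft_voronoi_sdiff (H : SeparatedPair B C r₀) {q : ℂ}
    (hq : q ∈ voronoi C B) : IsConnectedToLeft (voronoi B C \ {q}) :=
  _root_.isConnectedToLeft_voronoi_sdiff H.isClosed_left H.nonempty_left H.isClosed_right
    H.nonempty_right H.disjoint H.isConnectedToLeft_left hq

section Normalization

variable {q : ℂ} {g : ℂ → ℂ}

theorem abs_im_lt_iff_of_nearest (H : SeparatedPair B C r₀)
    (hg : ContinuousOn g (voronoi B C \ {q}))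
    (he : ∀ y ∈ voronoi B C, q ≠ y → Complex.exp (g y) = q - y) {y b : ℂ} (hb : b ∈ B)
    (hyb : infDist y B = dist y b) (hy : y ∈ voronoi B C) (hbq : b.re < q.re) (hyq : y.re < q.re) :
    |(g b).im| < Real.pi / 2 ↔ |(g y).im| < Real.pi / 2 := by
  have hseg : segment ℝ b y ⊆ voronoi B C :=
    segment_subset_voronoi H.isClosed_right H.nonempty_right H.disjoint hb hyb hy
  have hre : segment ℝ b y ⊆ {x | x.re < q.re} :=
    (convex_halfSpace_re_lt q.re).segment_subset hbq hyq
  have hne : ∀ x ∈ segment ℝ b y, q ≠ x := fun x hx h => (hre hx).ne' (congrArg Complex.re h)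
  refine abs_im_lt_pi_div_two_iff (convex_segment b y).isPreconnected
    (hg.mono fun x hx => ⟨hseg hx, (hne x hx).symm⟩) (fun x hx => ?_) (left_mem_segment ℝ b y)
    (right_mem_segment ℝ b y)
  rw [he x (hseg hx) (hne x hx), Complex.sub_re]
  exact sub_pos.mpr (hre hx)

theorem eventually_abs_im_lt (H : SeparatedPair B C r₀)
    (hg : ContinuousOn g (voronoi B C \ {q}))
    (he : ∀ y ∈ voronoi B C, q ≠ y → Complex.exp (g y) = q - y)
    (hB : ∀ᶠ y in leftEnd, y ∈ B → |(g y).im| < Real.pi / 2) :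
    ∀ᶠ y in leftEnd, y ∈ voronoi B C → |(g y).im| < Real.pi / 2 := by
  obtain ⟨M, hM⟩ := eventually_leftEnd.mp (hB.and (eventually_leftEnd_re_lt q.re))
  filter_upwards [eventually_leftEnd_re_lt 0, eventually_leftEnd_re_lt q.re,
    eventually_leftEnd_re_lt (M - r₀)] with y hy0 hyq hyM hy
  obtain ⟨b, hb, hyb⟩ := H.isClosed_left.exists_infDist_eq_dist H.nonempty_left y
  obtain ⟨hbim, hbq⟩ := hM b (by linarith [H.re_le_add hy hy0.le hyb])
  exact (H.abs_im_lt_iff_of_nearest hg he hb hyb hy hbq hyq).mp (hbim hb)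

end Normalization

theorem abs_im_lt_of_re_nonneg (H : SeparatedPair B C r₀) {D : Set ℂ} {Λ : ℂ → ℂ → ℂ}
    (hΛ : IsNormalizedLog D (voronoi B C) Λ) {q y : ℂ} (hq : q ∈ D) (hq0 : 0 ≤ q.re)
    (hy : y ∈ voronoi B C) (hyq : y.re < q.re) : |(Λ q y).im| < Real.pi / 2 := by
  have hBq : ∀ b ∈ B, 0 < (q - b).re := fun b hb => by
    simpa using (H.re_neg_left b hb).trans_le hq0
  have hne : ∀ b ∈ B, q ≠ b := fun b hb h => by simpa [h] using hBq b hb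
  have hlog : ∀ b ∈ B, |(Complex.log (q - b)).im| < Real.pi / 2 := fun b hb => by
    rw [Complex.log_im, Complex.abs_arg_lt_pi_div_two_iff]
    exact Or.inl (hBq b hb)
  have heq : EqOn (Λ q) (fun b => Complex.log (q - b)) B := by
    refine H.isConnectedToLeft_left.eqOn_of_exp_eq
      ((hΛ.continuousOn_right hq).mono fun b hb => ⟨subset_voronoi hb, (hne b hb).symm⟩)
      (ContinuousOn.clog (by fun_prop) fun b hb => Or.inl (hBq b hb)) (fun b hb => ?_)
      ((hΛ.abs_im_lt q hq).mono fun b h hb => h (subset_voronoi hb) (hne b hb))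
      (Eventually.of_forall hlog)
    rw [hΛ.exp_eq q hq b (subset_voronoi hb) (hne b hb),
      Complex.exp_log (sub_ne_zero.mpr (hne b hb))]
  obtain ⟨b, hb, hyb⟩ := H.isClosed_left.exists_infDist_eq_dist H.nonempty_left y
  refine (H.abs_im_lt_iff_of_nearest (hΛ.continuousOn_right hq) (hΛ.exp_eq q hq) hb hyb hy
    (by simpa using hBq b hb) hyq).mp ?_
  rw [heq hb]
  exact hlog b hb

end SeparatedPair

/-- A logarithm `L b c` of the difference `c - b` for distinct `b ∈ B` and `c ∈ C`, whose imaginary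
part is near `0` when `b` is far to the left of `c` and near `π` when `c` is far to the left of
`b`. -/
structure IsPairLog (B C : Set ℂ) (L : ℂ → ℂ → ℂ) : Prop where
  left : IsNormalizedLog B C (fun b c => L b c - Real.pi * Complex.I)
  right : IsNormalizedLog C B (fun c b => L b c)

theorem SeparatedPair.exists_isPairLog_voronoi {B C : Set ℂ} {r₀ : ℝ} (H : SeparatedPair B C r₀)
    {Λ : ℂ → ℂ → ℂ} (hΛ : IsPairLog B C Λ) : ∃ L, IsPairLog (voronoi B C) (voronoi C B) L := by
  obtain ⟨Λ₁, hΛ₁, heq₁⟩ := hΛ.left.exists_extension (Q := voronoi B C) H.isClosed_left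
    H.nonempty_left
    (fun q hq d hd hqd y hy hqy => H.notMem_segment hd hqd hq (subset_voronoi hy) hqy)
    (fun q hq => by
      rw [sdiff_singleton_eq_self (H.notMem_right hq)]
      exact H.isConnectedToLeft_right)
  have hneC : ∀ c ∈ C, ∀ x ∈ voronoi B C, c ≠ x := fun c hc x hx h => H.notMem_right hx (h ▸ hc)
  have hΛ₁' : IsNormalizedLog C (voronoi B C) (fun c x => Λ₁ x c + Real.pi * Complex.I) := by
    refine hΛ₁.swap_add Complex.exp_pi_mul_I fun c hc => ?_
    refine (H.eventually_abs_im_lt (g := fun x => Λ₁ x c + Real.pi * Complex.I) (q := c)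
      ((hΛ₁.continuousOn_left hc).add continuousOn_const) (fun x hx hcx => ?_) ?_).mono
      fun x h hx _ => h hx
    · rw [Complex.exp_add, hΛ₁.exp_eq x hx c hc hcx.symm, Complex.exp_pi_mul_I]
      ring
    · refine (hΛ.right.abs_im_lt c hc).mono fun b h hb => ?_
      have hcb := hneC c hc b (subset_voronoi hb)
      rw [heq₁ b ⟨hb, subset_voronoi hb⟩ c hc hcb.symm, sub_add_cancel]
      exact h hb hcb
  obtain ⟨Λ₂, hΛ₂, heq₂⟩ := hΛ₁'.exists_extension (Q := voronoi C B) H.isClosed_right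
    H.nonempty_right
    (fun q hq d hd hqd y hy hqy => H.symm.notMem_segment hd hqd hq hy hqy)
    (fun q hq => H.isConnectedToLeft_voronoi_sdiff hq)
  have hexp : Complex.exp (-(Real.pi * Complex.I)) = -1 := by
    rw [Complex.exp_neg, Complex.exp_pi_mul_I, inv_neg_one]
  refine ⟨fun x y => Λ₂ y x, ?_, hΛ₂⟩
  simp only [sub_eq_add_neg]
  refine hΛ₂.swap_add hexp fun x hx => ?_
  refine (H.symm.eventually_abs_im_lt (g := fun y => Λ₂ y x + -(Real.pi * Complex.I)) (q := x)
    ((hΛ₂.continuousOn_left hx).add continuousOn_const) (fun y hy hxy => ?_) ?_).mono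
    fun y h hy _ => h hy
  · rw [Complex.exp_add, hΛ₂.exp_eq y hy x hx hxy.symm, hexp]
    ring
  · refine (hΛ₁.abs_im_lt x hx).mono fun c h hc => ?_
    rw [heq₂ c ⟨hc, subset_voronoi hc⟩ x hx (hneC c hc x hx), add_neg_cancel_right]
    exact h hc (hneC c hc x hx).symm

/-! ### Sheets -/

theorem period_zero : period 0 = 0 := by simp [period]

theorem period_add (k l : ℤ) : period (k + l) = period k + period l := by simp [period]; ring

theorem period_sub (k l : ℤ) : period (k - l) = period k - period l := by simp [period]; ring

theorem period_injective : Function.Injective period := fun k l h => by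
  have him := congrArg Complex.im h
  rw [period_im, period_im] at him
  exact_mod_cast mul_left_cancel₀ Real.two_pi_pos.ne' him

theorem exists_eq_add_period_of_exp_eq {a b : ℂ} (h : Complex.exp a = Complex.exp b) :
    ∃ k : ℤ, a = b + period k := by
  obtain ⟨k, hk⟩ := Complex.exp_eq_exp_iff_exists_int.mp h
  exact ⟨k, by rw [hk]; simp only [period]; push_cast; ring⟩

/-- The union of the translates of `φ '' K` by the periods `2πik` with `k ∈ I`. -/
def sheets {α : Type*} (K : Set α) (φ : α → ℂ) (I : Set ℤ) : Set ℂ :=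
  image2 (fun z k => φ z + period k) K I

/-- The sheets with nonpositive index of the logarithm `f · t` on `Fr \ {p}`. -/
abbrev lowerSheets {α : Type*} (Fr : Set α) (p : α) (f : α → ℝ → ℂ) (t : ℝ) : Set ℂ :=
  sheets (Fr \ {p}) (fun z => f z t) (Iic 0)

/-- The sheets with positive index of the logarithm `f · t` on `Fr \ {p}`. -/
abbrev upperSheets {α : Type*} (Fr : Set α) (p : α) (f : α → ℝ → ℂ) (t : ℝ) : Set ℂ :=
  sheets (Fr \ {p}) (fun z => f z t) (Ioi 0)

section Sheets

variable {α : Type*} {K : Set α} {φ : α → ℂ} {I J : Set ℤ}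

theorem add_period_mem_sheets {z : α} (hz : z ∈ K) {k : ℤ} (hk : k ∈ I) :
    φ z + period k ∈ sheets K φ I :=
  mem_image2_of_mem hz hk

theorem sheets_mono (h : I ⊆ J) : sheets K φ I ⊆ sheets K φ J := image2_subset_left h

theorem exp_add_period (a : ℂ) (k : ℤ) : Complex.exp (a + period k) = Complex.exp a := by
  rw [Complex.exp_add, exp_period, mul_one]

theorem add_period_re (a : ℂ) (k : ℤ) : (a + period k).re = a.re := by
  rw [Complex.add_re, period_re, add_zero]

theorem disjoint_sheets (hφ : InjOn (fun z => Complex.exp (φ z)) K) (h : Disjoint I J) :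
    Disjoint (sheets K φ I) (sheets K φ J) := by
  rw [Set.disjoint_left]
  rintro x ⟨z, hz, k, hk, rfl⟩ ⟨w, hw, l, hl, he⟩
  obtain rfl : w = z := hφ hw hz (by simpa only [exp_add_period] using congrArg Complex.exp he)
  exact Set.disjoint_left.mp h hk (period_injective (add_left_cancel he) ▸ hl)

end Sheets

theorem isConnectedToLeft_sheets {α : Type*} [TopologicalSpace α] [T1Space α] {Fr : Set α} {p : α}
    (hFr : IsPreconnected Fr) (hp : p ∈ Fr) {φ : α → ℂ} (hφ : ContinuousOn φ (Fr \ {p}))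
    (hlim : Tendsto φ (𝓝[Fr \ {p}] p) leftEnd) (I : Set ℤ) :
    IsConnectedToLeft (sheets (Fr \ {p}) φ I) := by
  classical
  intro ψ hψ he hψ0
  rintro _ ⟨z, hz, k, hk, rfl⟩
  have hmaps : ∀ w ∈ Fr \ {p}, φ w + period k ∈ sheets (Fr \ {p}) φ I :=
    fun w hw => add_period_mem_sheets hw hk
  have hlim' : Tendsto (fun w => ψ (φ w + period k)) (𝓝[Fr \ {p}] p) (𝓝 0) := by
    have hshift : Tendsto (fun w => φ w + period k) (𝓝[Fr \ {p}] p) leftEnd := by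
      refine tendsto_comap_iff.mpr ?_
      simpa only [Function.comp_def, add_period_re] using tendsto_comap_iff.mp hlim
    refine tendsto_const_nhds.congr' ?_
    filter_upwards [hshift.eventually hψ0, self_mem_nhdsWithin] with w hw hwK
    exact (hw (hmaps w hwK)).symm
  have hcont : ContinuousOn (Function.update (fun w => ψ (φ w + period k)) p 0) Fr :=
    continuousOn_update_iff.mpr ⟨hψ.comp (hφ.add continuousOn_const) hmaps, fun _ => hlim'⟩
  have hconst := eq_of_isPreconnected_of_exp_eq (c := 1) hFr hcont (fun w hw => ?_) hz.1 hp
  · rwa [Function.update_self, Function.update_of_ne hz.2] at hconst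
  · rcases eq_or_ne w p with rfl | hwp
    · rw [Function.update_self, Complex.exp_zero]
    · rw [Function.update_of_ne hwp]
      exact he _ (hmaps w ⟨hw, hwp⟩)

theorem exists_abs_im_sub_add_period_le (q a : ℂ) :
    ∃ k : ℤ, |q.im - (a + period k).im| ≤ Real.pi := by
  refine ⟨round ((q.im - a.im) / (2 * Real.pi)), ?_⟩
  have hround := abs_sub_round ((q.im - a.im) / (2 * Real.pi))
  have heq : q.im - (a + period (round ((q.im - a.im) / (2 * Real.pi)))).im =
      2 * Real.pi *
        ((q.im - a.im) / (2 * Real.pi) - round ((q.im - a.im) / (2 * Real.pi))) := by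
    rw [Complex.add_im, period_im]
    field_simp
    ring
  rw [heq, abs_mul, abs_of_pos Real.two_pi_pos]
  linarith [mul_le_mul_of_nonneg_left hround Real.two_pi_pos.le]

/-! ### Isotopies with a logarithm -/

/-- An isotopy `h` of the continuum `Fr` in the open unit disk that keeps the point `p` at `0`,
with a continuous logarithm `f` away from `p` whose translates by periods are stacked in order at
every time. -/
structure LogIsotopy {α : Type*} [TopologicalSpace α] (Fr : Set α) (p : α) (h f : α → ℝ → ℂ) :
    Prop where
  isCompact : IsCompact Fr
  isPreconnected : IsPreconnected Fr
  mem : p ∈ Fr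
  nonempty : (Fr \ {p}).Nonempty
  continuousOn : ContinuousOn (fun q : α × ℝ => h q.1 q.2) (Fr ×ˢ Icc 0 1)
  injOn : ∀ t ∈ Icc (0 : ℝ) 1, InjOn (fun z => h z t) Fr
  map_base : ∀ t ∈ Icc (0 : ℝ) 1, h p t = 0
  norm_lt_one : ∀ z ∈ Fr, ∀ t ∈ Icc (0 : ℝ) 1, ‖h z t‖ < 1
  continuousOn_log : ContinuousOn (fun q : α × ℝ => f q.1 q.2) ((Fr \ {p}) ×ˢ Icc 0 1)
  exp_log : ∀ z ∈ Fr \ {p}, ∀ t ∈ Icc (0 : ℝ) 1, Complex.exp (f z t) = h z t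
  exists_isOrderedLog : ∀ t ∈ Icc (0 : ℝ) 1, ∃ Λ, IsOrderedLog (Fr \ {p}) (fun z => f z t) Λ

namespace LogIsotopy

variable {α : Type*} [TopologicalSpace α] {Fr : Set α} {p : α} {h f : α → ℝ → ℂ} {t : ℝ}

theorem continuousOn_at (D : LogIsotopy Fr p h f) (ht : t ∈ Icc (0 : ℝ) 1) :
    ContinuousOn (fun z => h z t) Fr :=
  D.continuousOn.comp (f := fun z => (z, t)) (by fun_prop) fun _ hz => ⟨hz, ht⟩

theorem continuousOn_log_at (D : LogIsotopy Fr p h f) (ht : t ∈ Icc (0 : ℝ) 1) :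
    ContinuousOn (fun z => f z t) (Fr \ {p}) :=
  D.continuousOn_log.comp (f := fun z => (z, t)) (by fun_prop) fun _ hz => ⟨hz, ht⟩

theorem norm_eq_exp_re (D : LogIsotopy Fr p h f) {z : α} (hz : z ∈ Fr \ {p})
    (ht : t ∈ Icc (0 : ℝ) 1) : ‖h z t‖ = Real.exp (f z t).re := by
  rw [← D.exp_log z hz t ht, Complex.norm_exp]

theorem log_re_neg (D : LogIsotopy Fr p h f) {z : α} (hz : z ∈ Fr \ {p})
    (ht : t ∈ Icc (0 : ℝ) 1) : (f z t).re < 0 := by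
  rw [← Real.exp_lt_one_iff, ← D.norm_eq_exp_re hz ht]
  exact D.norm_lt_one z hz.1 t ht

theorem re_neg_of_mem_sheets (D : LogIsotopy Fr p h f) (ht : t ∈ Icc (0 : ℝ) 1) {I : Set ℤ} {x : ℂ}
    (hx : x ∈ sheets (Fr \ {p}) (fun z => f z t) I) : x.re < 0 := by
  obtain ⟨z, hz, k, -, rfl⟩ := hx
  rw [add_period_re]
  exact D.log_re_neg hz ht

theorem injOn_exp_log (D : LogIsotopy Fr p h f) (ht : t ∈ Icc (0 : ℝ) 1) :
    InjOn (fun z => Complex.exp (f z t)) (Fr \ {p}) :=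
  ((D.injOn t ht).mono sdiff_subset).congr fun z hz => (D.exp_log z hz t ht).symm

theorem sheets_nonempty (D : LogIsotopy Fr p h f) (t : ℝ) {I : Set ℤ} (hI : I.Nonempty) :
    (sheets (Fr \ {p}) (fun z => f z t) I).Nonempty :=
  D.nonempty.image2 hI

theorem tendsto_log_leftEnd (D : LogIsotopy Fr p h f) (ht : t ∈ Icc (0 : ℝ) 1) :
    Tendsto (fun z => f z t) (𝓝[Fr \ {p}] p) leftEnd := by
  refine tendsto_comap_iff.mpr (Real.tendsto_exp_comp_nhds_zero.mp ?_)
  have hnorm : Tendsto (fun z => ‖h z t‖) (𝓝[Fr \ {p}] p) (𝓝 0) := by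
    have := (D.continuousOn_at ht).norm p D.mem
    simp only [ContinuousWithinAt, D.map_base t ht, norm_zero] at this
    exact this.mono_left (nhdsWithin_mono p sdiff_subset)
  refine hnorm.congr' ?_
  filter_upwards [self_mem_nhdsWithin] with z hz
  exact D.norm_eq_exp_re hz ht

theorem isConnectedToLeft_sheets [T1Space α] (D : LogIsotopy Fr p h f) (ht : t ∈ Icc (0 : ℝ) 1)
    (I : Set ℤ) : IsConnectedToLeft (sheets (Fr \ {p}) (fun z => f z t) I) :=
  _root_.isConnectedToLeft_sheets D.isPreconnected D.mem (D.continuousOn_log_at ht)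
    (D.tendsto_log_leftEnd ht) I

theorem exists_forall_log_re_le (D : LogIsotopy Fr p h f) (ht : t ∈ Icc (0 : ℝ) 1) :
    ∃ z ∈ Fr \ {p}, ∀ w ∈ Fr \ {p}, (f w t).re ≤ (f z t).re := by
  obtain ⟨z, hz, hmax⟩ := D.isCompact.exists_isMaxOn ⟨p, D.mem⟩ (D.continuousOn_at ht).norm
  have hle : ∀ w ∈ Fr \ {p}, Real.exp (f w t).re ≤ ‖h z t‖ := fun w hw => by
    rw [← D.norm_eq_exp_re hw ht]
    exact hmax hw.1
  have hzp : z ≠ p := by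
    rintro rfl
    obtain ⟨w, hw⟩ := D.nonempty
    exact (Real.exp_pos _).not_ge ((hle w hw).trans_eq (by rw [D.map_base t ht, norm_zero]))
  refine ⟨z, ⟨hz, hzp⟩, fun w hw => ?_⟩
  rw [← Real.exp_le_exp, ← D.norm_eq_exp_re ⟨hz, hzp⟩ ht]
  exact hle w hw

theorem exists_forall_exists_log_re_eq (D : LogIsotopy Fr p h f) :
    ∃ m < 0, ∀ t ∈ Icc (0 : ℝ) 1, ∀ x ≤ m, ∃ z ∈ Fr \ {p}, (f z t).re = x := by
  obtain ⟨w, hw⟩ := D.nonempty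
  have hcont : ContinuousOn (fun t => (f w t).re) (Icc 0 1) :=
    Complex.continuous_re.comp_continuousOn
      (D.continuousOn_log.comp (f := fun t => (w, t)) (by fun_prop) fun t ht => ⟨hw, ht⟩)
  obtain ⟨s, hs, hmin⟩ := isCompact_Icc.exists_isMinOn (nonempty_Icc.mpr zero_le_one) hcont
  refine ⟨(f w s).re, D.log_re_neg hw hs, fun t ht x hx => ?_⟩
  obtain ⟨z, hz, hzx : ‖h z t‖ = Real.exp x⟩ :=
    D.isPreconnected.intermediate_value D.mem hw.1 (D.continuousOn_at ht).norm
      (show Real.exp x ∈ Icc ‖h p t‖ ‖h w t‖ from by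
        rw [D.map_base t ht, norm_zero, D.norm_eq_exp_re hw ht]
        exact ⟨(Real.exp_pos x).le, Real.exp_le_exp.mpr (hx.trans (hmin ht))⟩)
  have hzp : z ≠ p := by
    rintro rfl
    rw [D.map_base t ht, norm_zero] at hzx
    exact (Real.exp_pos x).ne hzx
  exact ⟨z, ⟨hz, hzp⟩, Real.exp_injective (by rw [← D.norm_eq_exp_re ⟨hz, hzp⟩ ht, hzx])⟩

theorem exists_forall_exists_dist_le (D : LogIsotopy Fr p h f) :
    ∃ r₀ : ℝ, ∀ t ∈ Icc (0 : ℝ) 1, ∀ q : ℂ, q.re ≤ 0 →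
      ∃ z ∈ Fr \ {p}, ∃ k : ℤ, dist q (f z t + period k) ≤ r₀ := by
  obtain ⟨m, hm, hre⟩ := D.exists_forall_exists_log_re_eq
  refine ⟨-m + Real.pi, fun t ht q hq => ?_⟩
  obtain ⟨z, hz, hzx⟩ := hre t ht (min q.re m) (min_le_right _ _)
  obtain ⟨k, hk⟩ := exists_abs_im_sub_add_period_le q (f z t)
  refine ⟨z, hz, k, (Complex.dist_eq _ _).trans_le
    ((Complex.norm_le_abs_re_add_abs_im _).trans (add_le_add ?_ hk))⟩
  rw [Complex.sub_re, add_period_re, hzx, abs_of_nonneg (sub_nonneg.mpr (min_le_left _ _))]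
  rcases min_choice q.re m with hmin | hmin <;> rw [hmin] <;> linarith

theorem exists_forall_infDist_le (D : LogIsotopy Fr p h f) :
    ∃ r₀ : ℝ, ∀ t ∈ Icc (0 : ℝ) 1, ∀ q : ℂ, q.re ≤ 0 →
      infDist q (lowerSheets Fr p f t) ≤ r₀ ∨
        infDist q (upperSheets Fr p f t) ≤ r₀ := by
  obtain ⟨r₀, hr₀⟩ := D.exists_forall_exists_dist_le
  refine ⟨r₀, fun t ht q hq => ?_⟩
  obtain ⟨z, hz, k, hk⟩ := hr₀ t ht q hq
  rcases le_or_gt k 0 with hk0 | hk0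
  · refine Or.inl ((infDist_le_dist_of_mem ?_).trans hk)
    exact add_period_mem_sheets (φ := fun z => f z t) hz hk0
  · refine Or.inr ((infDist_le_dist_of_mem ?_).trans hk)
    exact add_period_mem_sheets (φ := fun z => f z t) hz hk0

theorem exists_continuousOn_base [T2Space α] (D : LogIsotopy Fr p h f) :
    ∃ (S : Set (ℂ × ℝ)) (Z : ℂ × ℝ → α), IsClosed S ∧ ContinuousOn Z S ∧
      (∀ q ∈ S, q.2 ∈ Icc (0 : ℝ) 1 ∧ Z q ∈ Fr \ {p} ∧
        Complex.exp (f (Z q) q.2) = Complex.exp q.1) ∧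
      ∀ z ∈ Fr \ {p}, ∀ t ∈ Icc (0 : ℝ) 1, ∀ k, (f z t + period k, t) ∈ S ∧
        Z (f z t + period k, t) = z := by
  set H : α × ℝ → ℂ × ℝ := fun q => (h q.1 q.2, q.2)
  have hH : ContinuousOn H (Fr ×ˢ Icc 0 1) := D.continuousOn.prodMk continuousOn_snd
  have hHinj : InjOn H (Fr ×ˢ Icc 0 1) := by
    rintro ⟨z, t⟩ hz ⟨w, s⟩ hw he
    obtain ⟨hzw, rfl⟩ := Prod.mk.inj he
    exact Prod.ext (D.injOn t hz.2 hz.1 hw.1 hzw) rfl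
  have hcompact := D.isCompact.prod (isCompact_Icc (a := (0 : ℝ)) (b := 1))
  have : Nonempty (α × ℝ) := ⟨(p, 0)⟩
  set g := Function.invFunOn H (Fr ×ˢ Icc 0 1)
  have hg : LeftInvOn g H (Fr ×ˢ Icc 0 1) := hHinj.leftInvOn_invFunOn
  set E : ℂ × ℝ → ℂ × ℝ := fun q => (Complex.exp q.1, q.2)
  have hE : Continuous E := by fun_prop
  refine ⟨E ⁻¹' (H '' (Fr ×ˢ Icc 0 1)), fun q => (g (E q)).1,
    (hcompact.image_of_continuousOn hH).isClosed.preimage hE,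
    continuous_fst.comp_continuousOn ((continuousOn_image_of_leftInvOn hcompact hH hg).comp
      hE.continuousOn fun q hq => hq), ?_, fun z hz t ht k => ?_⟩
  · rintro ⟨x, t⟩ ⟨⟨z, s⟩, hz, he⟩
    obtain ⟨hzx : h z s = Complex.exp x, rfl⟩ := Prod.mk.inj he
    have hzp : z ≠ p := by
      rintro rfl
      exact Complex.exp_ne_zero x (hzx.symm.trans (D.map_base s hz.2))
    have hbase : (g (E (x, s))).1 = z := by
      rw [show E (x, s) = H (z, s) from he.symm, hg hz]
    simp only [hbase]
    exact ⟨hz.2, ⟨hz.1, hzp⟩, (D.exp_log z ⟨hz.1, hzp⟩ s hz.2).trans hzx⟩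
  · have hHz : E (f z t + period k, t) = H (z, t) :=
      Prod.ext ((exp_add_period _ k).trans (D.exp_log z hz t ht)) rfl
    exact ⟨⟨(z, t), ⟨hz.1, ht⟩, hHz.symm⟩, by simp only [hHz, hg (mk_mem_prod hz.1 ht)]⟩

theorem isClosed_setOf_mem_sheets [T2Space α] (D : LogIsotopy Fr p h f) (I : Set ℤ) :
    IsClosed {q : ℂ × ℝ | q.2 ∈ Icc (0 : ℝ) 1 ∧
      q.1 ∈ sheets (Fr \ {p}) (fun z => f z q.2) I} := by
  obtain ⟨S, Z, hS, hZ, hZS, hSZ⟩ := D.exists_continuousOn_base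
  have hindex : ContinuousOn (fun q : ℂ × ℝ => q.1 - f (Z q) q.2) S :=
    continuousOn_fst.sub (D.continuousOn_log.comp (f := fun q => (Z q, q.2))
      (hZ.prodMk continuousOn_snd) fun q hq => ⟨(hZS q hq).2.1, (hZS q hq).1⟩)
  convert (Complex.continuous_im.comp_continuousOn hindex).preimage_isClosed_of_isClosed hS
    ((Homeomorph.mulLeft₀ (2 * Real.pi) Real.two_pi_pos.ne').isClosedMap.comp
      Int.isClosedEmbedding_coe_real.isClosedMap I (isClosed_discrete I)) using 1
  ext ⟨x, t⟩
  constructor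
  · rintro ⟨ht, z, hz, k, hk, rfl : f z t + period k = x⟩
    obtain ⟨hmem, hZz⟩ := hSZ z hz t ht k
    refine ⟨hmem, k, hk, ?_⟩
    simp [hZz, period_im]
  · rintro ⟨hmem, k, hk, hkx⟩
    obtain ⟨ht, hz, he⟩ := hZS _ hmem
    obtain ⟨l, hl : x = _⟩ := exists_eq_add_period_of_exp_eq he.symm
    obtain rfl : k = l := by
      have : (2 * Real.pi * k : ℝ) = 2 * Real.pi * l := by
        rw [← period_im l, ← add_sub_cancel_left (f (Z (x, t)) t) (period l), ← hl]
        exact hkx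
      exact_mod_cast mul_left_cancel₀ Real.two_pi_pos.ne' this
    exact ⟨ht, _, hz, k, hk, hl.symm⟩

theorem isClosed_sheets [T2Space α] (D : LogIsotopy Fr p h f) (ht : t ∈ Icc (0 : ℝ) 1)
    (I : Set ℤ) : IsClosed (sheets (Fr \ {p}) (fun z => f z t) I) := by
  convert (D.isClosed_setOf_mem_sheets I).preimage (Continuous.prodMk_left t) using 1
  ext x
  exact ⟨fun hx => ⟨ht, hx⟩, fun hx => hx.2⟩

theorem separatedPair [T2Space α] (D : LogIsotopy Fr p h f) (ht : t ∈ Icc (0 : ℝ) 1) {r₀ : ℝ}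
    (hr₀ : ∀ q : ℂ, q.re ≤ 0 → infDist q (lowerSheets Fr p f t) ≤ r₀ ∨
      infDist q (upperSheets Fr p f t) ≤ r₀) :
    SeparatedPair (lowerSheets Fr p f t)
      (upperSheets Fr p f t) r₀ where
  isClosed_left := D.isClosed_sheets ht _
  isClosed_right := D.isClosed_sheets ht _
  nonempty_left := D.sheets_nonempty t nonempty_Iic
  nonempty_right := D.sheets_nonempty t nonempty_Ioi
  disjoint := disjoint_sheets (D.injOn_exp_log ht) (Iic_disjoint_Ioi le_rfl)
  isConnectedToLeft_left := D.isConnectedToLeft_sheets ht _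
  isConnectedToLeft_right := D.isConnectedToLeft_sheets ht _
  re_neg_left _ hb := D.re_neg_of_mem_sheets ht hb
  re_neg_right _ hc := D.re_neg_of_mem_sheets ht hc
  infDist_le := hr₀

end LogIsotopy

/-! ### Equidistant points -/

section PairLog

variable {α : Type*} {K : Set α} {φ : α → ℂ} {Z : ℂ → α}

theorem base_mem_of_mem_sheets (hZφ : ∀ z ∈ K, ∀ k, Z (φ z + period k) = z) {I : Set ℤ} {x : ℂ}
    (hx : x ∈ sheets K φ I) : Z x ∈ K ∧ (φ (Z x)).re = x.re := by
  obtain ⟨z, hz, k, -, rfl⟩ := hx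
  rw [hZφ z hz, add_period_re]
  exact ⟨hz, rfl⟩

theorem sub_base_sub_mem_posPeriods (hZφ : ∀ z ∈ K, ∀ k, Z (φ z + period k) = z) {b c : ℂ}
    (hb : b ∈ sheets K φ (Iic 0)) (hc : c ∈ sheets K φ (Ioi 0)) :
    (c - φ (Z c)) - (b - φ (Z b)) ∈ posPeriods := by
  obtain ⟨z, hz, k, hk, rfl⟩ := hb
  obtain ⟨w, hw, l, hl, rfl⟩ := hc
  rw [hZφ z hz, hZφ w hw, add_sub_cancel_left, add_sub_cancel_left, ← period_sub]
  exact mem_image_of_mem period (mem_Ioi.mpr (sub_pos.mpr (lt_of_le_of_lt hk hl)))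

variable [TopologicalSpace α]

theorem IsOrderedLog.isPairLog_sheets {Λ : α → α → ℂ → ℂ} (hΛ : IsOrderedLog K φ Λ)
    (hφ : ContinuousOn φ K) (hZ : ContinuousOn Z (sheets K φ univ))
    (hZφ : ∀ z ∈ K, ∀ k, Z (φ z + period k) = z) :
    IsPairLog (sheets K φ (Iic 0)) (sheets K φ (Ioi 0))
      fun b c => Λ (Z b) (Z c) ((c - φ (Z c)) - (b - φ (Z b))) := by
  have hZmem {I : Set ℤ} {x : ℂ} (hx : x ∈ sheets K φ I) := base_mem_of_mem_sheets hZφ hx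
  have hcont : ContinuousOn (fun q : ℂ × ℂ => Λ (Z q.1) (Z q.2)
      ((q.2 - φ (Z q.2)) - (q.1 - φ (Z q.1)))) (sheets K φ (Iic 0) ×ˢ sheets K φ (Ioi 0)) := by
    have hφZ := hφ.comp hZ fun x hx => (hZmem hx).1
    have h₁ : MapsTo Prod.fst (sheets K φ (Iic 0) ×ˢ sheets K φ (Ioi 0)) (sheets K φ univ) :=
      fun q hq => sheets_mono (subset_univ _) hq.1
    have h₂ : MapsTo Prod.snd (sheets K φ (Iic 0) ×ˢ sheets K φ (Ioi 0)) (sheets K φ univ) :=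
      fun q hq => sheets_mono (subset_univ _) hq.2
    exact hΛ.continuousOn.comp (f := fun q : ℂ × ℂ => (Z q.1, Z q.2, _))
      ((hZ.comp continuousOn_fst h₁).prodMk ((hZ.comp continuousOn_snd h₂).prodMk
        ((continuousOn_snd.sub (hφZ.comp continuousOn_snd h₂)).sub
          (continuousOn_fst.sub (hφZ.comp continuousOn_fst h₁)))))
      fun q hq => ⟨(hZmem hq.1).1, (hZmem hq.2).1, sub_base_sub_mem_posPeriods hZφ hq.1 hq.2⟩
  have hexp : ∀ b ∈ sheets K φ (Iic 0), ∀ c ∈ sheets K φ (Ioi 0),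
      Complex.exp (Λ (Z b) (Z c) ((c - φ (Z c)) - (b - φ (Z b)))) = c - b := fun b hb c hc => by
    rw [hΛ.exp_eq _ (hZmem hb).1 _ (hZmem hc).1 _ (sub_base_sub_mem_posPeriods hZφ hb hc)]
    ring
  refine ⟨⟨(hcont.mono sdiff_subset).sub continuousOn_const, fun b hb c hc _ => ?_,
    fun b hb => ?_⟩, ⟨?_, fun c hc b hb _ => hexp b hb c hc, fun c hc => ?_⟩⟩
  · rw [Complex.exp_sub, hexp b hb c hc, Complex.exp_pi_mul_I]
    ring
  · obtain ⟨M, hM⟩ := hΛ.abs_im_sub_pi_lt _ (hZmem hb).1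
    filter_upwards [eventually_leftEnd_re_lt (-M)] with c hcM hc _
    simpa using hM _ (hZmem hc).1 (by rwa [(hZmem hc).2]) _ (sub_base_sub_mem_posPeriods hZφ hb hc)
  · exact hcont.comp (f := Prod.swap) (by fun_prop) fun q hq => ⟨hq.1.2, hq.1.1⟩
  · obtain ⟨M, hM⟩ := hΛ.abs_im_lt _ (hZmem hc).1
    filter_upwards [eventually_leftEnd_re_lt (-M)] with b hbM hb _
    exact hM _ (hZmem hb).1 (by rwa [(hZmem hb).2]) _ (sub_base_sub_mem_posPeriods hZφ hb hc)

end PairLog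

theorem LogIsotopy.exists_isPairLog {α : Type*} [TopologicalSpace α] [T2Space α] {Fr : Set α}
    {p : α} {h f : α → ℝ → ℂ} {t : ℝ} (D : LogIsotopy Fr p h f) (ht : t ∈ Icc (0 : ℝ) 1) :
    ∃ L, IsPairLog (lowerSheets Fr p f t)
      (upperSheets Fr p f t) L := by
  obtain ⟨S, Z, -, hZ, -, hSZ⟩ := D.exists_continuousOn_base
  obtain ⟨Λ, hΛ⟩ := D.exists_isOrderedLog t ht
  refine ⟨_, hΛ.isPairLog_sheets (Z := fun x => Z (x, t)) (D.continuousOn_log_at ht)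
    (hZ.comp (f := fun x => (x, t)) (by fun_prop) ?_) fun z hz k => (hSZ z hz t ht k).2⟩
  rintro _ ⟨z, hz, k, -, rfl⟩
  exact (hSZ z hz t ht k).1

theorem IsConnectedToLeft.union {Y S : Set ℂ} (hY : IsConnectedToLeft Y) (hS : IsPreconnected S)
    (hYS : (Y ∩ S).Nonempty) : IsConnectedToLeft (Y ∪ S) := by
  intro ψ hψ he hψ0
  have hYψ : ∀ y ∈ Y, ψ y = 0 := hY ψ (hψ.mono subset_union_left) (fun y hy => he y (Or.inl hy))
    (hψ0.mono fun y h hy => h (Or.inl hy))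
  obtain ⟨x, hxY, hxS⟩ := hYS
  rintro y (hy | hy)
  · exact hYψ y hy
  · rw [eq_of_isPreconnected_of_exp_eq hS (hψ.mono subset_union_right)
      (fun z hz => he z (Or.inr hz)) hy hxS, hYψ x hxY]

theorem lt_infDist_add_of_forall_re_le {Y : Set ℂ} (hY : IsClosed Y) (hYn : Y.Nonempty) {a : ℂ}
    (ha : a ∉ Y) (hre : ∀ y ∈ Y, y.re ≤ a.re) {s : ℝ} (hs : 0 ≤ s) : s < infDist (a + s) Y := by
  obtain ⟨y, hy, hd⟩ := hY.exists_infDist_eq_dist hYn (a + s)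
  have hreq : (a + s - y).re = a.re + s - y.re := by simp
  have habs : |(a + s - y).re| = a.re + s - y.re := by
    rw [hreq, abs_of_nonneg (by linarith [hre y hy])]
  rw [hd, Complex.dist_eq]
  rcases eq_or_ne (a + s - y).im 0 with him | him
  · have hne : y.re ≠ a.re := fun h =>
      ha (by rwa [← Complex.ext h (by simpa [sub_eq_zero, eq_comm] using him)])
    linarith [Complex.abs_re_le_norm (a + s - y), lt_of_le_of_ne (hre y hy) hne]
  · linarith [Complex.abs_re_lt_norm.mpr him, hre y hy]

section SeparatedPair

variable {B C : Set ℂ} {r₀ : ℝ}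

theorem SeparatedPair.mem_voronoi_sdiff_voronoi (H : SeparatedPair B C r₀) {b : ℂ} (hb : b ∈ B) :
    b ∈ voronoi B C \ voronoi C B :=
  ⟨subset_voronoi hb, fun h => H.symm.notMem_right h hb⟩

theorem SeparatedPair.add_mem_voronoi_sdiff_voronoi (H : SeparatedPair B C r₀) {a : ℂ} (ha : a ∈ B)
    (hre : ∀ c ∈ C, c.re ≤ a.re) {s : ℝ} (hs : 0 ≤ s) : a + s ∈ voronoi B C \ voronoi C B := by
  have hlt : infDist (a + s) B < infDist (a + s) C :=
    ((infDist_le_dist_of_mem ha).trans (by simp [abs_of_nonneg hs])).trans_lt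
      (lt_infDist_add_of_forall_re_le H.isClosed_right H.nonempty_right
        (disjoint_left.mp H.disjoint ha) hre hs)
  exact ⟨hlt.le, fun h => hlt.not_ge h⟩

/-- The two logarithms of `q - y = q' - (y - (q - q'))` that `L` provides agree near the left end,
but their imaginary parts differ by about `2π` to the right of `q`. -/
theorem SeparatedPair.re_le_of_isConnectedToLeft {L : ℂ → ℂ → ℂ}
    (H : SeparatedPair B C r₀) (hL : IsPairLog (voronoi B C) (voronoi C B) L) {q q' : ℂ}
    (hq : q ∈ voronoi B C) (hq' : q' ∈ voronoi C B) (hre : q.re = q'.re) {Y : Set ℂ}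
    (hY : IsConnectedToLeft Y) (hYC : Y ⊆ voronoi C B \ {q})
    (hYB : ∀ y ∈ Y, y - (q - q') ∈ voronoi B C \ {q'}) {x : ℂ} (hx : x ∈ Y) (hx0 : 0 ≤ x.re) :
    x.re ≤ q.re := by
  by_contra! hlt
  have hsubre : ∀ y : ℂ, (y - (q - q')).re = y.re := fun y => by simp [hre]
  have heq : EqOn (fun y => L (y - (q - q')) q') (fun y => L q y - Real.pi * Complex.I) Y := by
    refine hY.eqOn_of_exp_eq ?_ ?_ (fun y hy => ?_) ?_ ?_
    · exact (hL.right.continuousOn_right hq').comp (f := fun y => y - (q - q')) (by fun_prop) hYB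
    · exact (hL.left.continuousOn_right hq).mono hYC
    · rw [hL.right.exp_eq q' hq' _ (hYB y hy).1 (Ne.symm (hYB y hy).2),
        hL.left.exp_eq q hq y (hYC hy).1 (Ne.symm (hYC hy).2)]
      ring
    · obtain ⟨M, hM⟩ := eventually_leftEnd.mp (hL.right.abs_im_lt q' hq')
      filter_upwards [eventually_leftEnd_re_lt M] with y hyM hy
      exact hM _ (by rwa [hsubre]) (hYB y hy).1 (Ne.symm (hYB y hy).2)
    · filter_upwards [hL.left.abs_im_lt q hq] with y hyL hy
      exact hyL (hYC hy).1 (Ne.symm (hYC hy).2)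
  have him₁ := H.symm.abs_im_lt_of_re_nonneg hL.left (hYB x hx).1 (by rwa [hsubre]) hq'
    (by rwa [hsubre, ← hre])
  have him₂ := H.abs_im_lt_of_re_nonneg hL.right (hYC hx).1 hx0 hq hlt
  have him := congrArg Complex.im (heq hx)
  simp only [Complex.sub_im, Complex.im_ofReal_mul, Complex.I_im, mul_one] at him him₁
  rw [abs_lt] at him₁ him₂
  linarith [Real.pi_pos, him₁.1, him₂.2]

end SeparatedPair

namespace LogIsotopy

variable {α : Type*} [TopologicalSpace α] [T2Space α] {Fr : Set α} {p : α} {h f : α → ℝ → ℂ}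
  {t r₀ : ℝ} {L : ℂ → ℂ → ℂ}

/-- The witness is the sheet with index `1`, followed by the ray to the right of its rightmost
point. -/
theorem exists_isConnectedToLeft_translate (D : LogIsotopy Fr p h f) (ht : t ∈ Icc (0 : ℝ) 1)
    (H : SeparatedPair (lowerSheets Fr p f t) (upperSheets Fr p f t) r₀) {k : ℤ} (hk : 0 < k)
    (m : ℝ) :
    ∃ Y, IsConnectedToLeft Y ∧
      (∀ y ∈ Y, y ∈ voronoi (upperSheets Fr p f t) (lowerSheets Fr p f t) \
        voronoi (lowerSheets Fr p f t) (upperSheets Fr p f t)) ∧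
      (∀ y ∈ Y, y - period k ∈ voronoi (lowerSheets Fr p f t) (upperSheets Fr p f t) \
        voronoi (upperSheets Fr p f t) (lowerSheets Fr p f t)) ∧
      ∃ x ∈ Y, m < x.re := by
  obtain ⟨z, hz, hmax⟩ := D.exists_forall_log_re_le ht
  have hre : ∀ (I : Set ℤ) (l : ℤ), ∀ y ∈ sheets (Fr \ {p}) (fun z => f z t) I,
      y.re ≤ (f z t + period l).re := by
    rintro I l _ ⟨w, hw, j, -, rfl⟩
    simpa only [add_period_re] using hmax w hw
  have hC : ∀ w ∈ Fr \ {p}, f w t + period 1 ∈ upperSheets Fr p f t :=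
    fun w hw => add_period_mem_sheets (φ := fun z => f z t) hw (mem_Ioi.mpr one_pos)
  have hB : ∀ w ∈ Fr \ {p}, f w t + period (1 - k) ∈ lowerSheets Fr p f t :=
    fun w hw => add_period_mem_sheets (φ := fun z => f z t) hw (mem_Iic.mpr (by lia))
  have hshift : ∀ w : ℂ, w + period 1 - period k = w + period (1 - k) := fun w => by
    rw [period_sub]
    ring
  refine ⟨sheets (Fr \ {p}) (fun z => f z t) {1} ∪ (fun s : ℝ => f z t + period 1 + s) '' Ici 0,
    (D.isConnectedToLeft_sheets ht {1}).union (isPreconnected_Ici.image _ (by fun_prop))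
      ⟨_, add_period_mem_sheets hz rfl, 0, self_mem_Ici, by simp⟩, ?_, ?_, ?_⟩
  · rintro _ (⟨w, hw, _, rfl, rfl⟩ | ⟨s, hs, rfl⟩)
    · exact H.symm.mem_voronoi_sdiff_voronoi (hC w hw)
    · exact H.symm.add_mem_voronoi_sdiff_voronoi (hC z hz) (hre _ 1) hs
  · rintro _ (⟨w, hw, _, rfl, rfl⟩ | ⟨s, hs, rfl⟩)
    · rw [hshift]
      exact H.mem_voronoi_sdiff_voronoi (hB w hw)
    · rw [add_sub_right_comm, hshift]
      exact H.add_mem_voronoi_sdiff_voronoi (hB z hz) (hre _ _) hs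
  · refine ⟨f z t + period 1 + (|(f z t).re| + |m| + 1 : ℝ), Or.inr ⟨_, ?_, rfl⟩, ?_⟩
    · exact mem_Ici.mpr (by positivity)
    · rw [Complex.add_re, add_period_re, Complex.ofReal_re]
      linarith [neg_abs_le (f z t).re, le_abs_self m]

theorem injOn_exp_voronoi_inter (D : LogIsotopy Fr p h f) (ht : t ∈ Icc (0 : ℝ) 1)
    (H : SeparatedPair (lowerSheets Fr p f t) (upperSheets Fr p f t) r₀)
    (hL : IsPairLog (voronoi (lowerSheets Fr p f t) (upperSheets Fr p f t))
      (voronoi (upperSheets Fr p f t) (lowerSheets Fr p f t)) L) :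
    InjOn Complex.exp (voronoi (lowerSheets Fr p f t) (upperSheets Fr p f t) ∩
      voronoi (upperSheets Fr p f t) (lowerSheets Fr p f t)) := by
  set B := lowerSheets Fr p f t
  set C := upperSheets Fr p f t
  have index_nonpos : ∀ q ∈ voronoi B C ∩ voronoi C B, ∀ q' ∈ voronoi B C ∩ voronoi C B,
      ∀ k : ℤ, q = q' + period k → k ≤ 0 := by
    rintro q hq q' hq' k rfl
    by_contra! hk
    obtain ⟨Y, hY, hYC, hYB, x, hx, hxre⟩ :=
      D.exists_isConnectedToLeft_translate ht H hk (max 0 q'.re)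
    refine (H.re_le_of_isConnectedToLeft hL hq.1 hq'.2 (add_period_re q' k) hY
      (fun y hy => ⟨(hYC y hy).1, fun h => (hYC y hy).2 (h ▸ hq.1)⟩) (fun y hy => ?_) hx
      ((le_max_left _ _).trans hxre.le)).not_gt ?_
    · rw [add_sub_cancel_left]
      exact ⟨(hYB y hy).1, fun h => (hYB y hy).2 (h ▸ hq'.2)⟩
    · rw [add_period_re]
      exact (le_max_right _ _).trans_lt hxre
  intro q hq q' hq' he
  obtain ⟨k, hk⟩ := exists_eq_add_period_of_exp_eq he
  have hk' : q' = q + period (-k) := by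
    rw [hk, add_assoc, ← period_add, add_neg_cancel, period_zero, add_zero]
  have hk0 : k = 0 := le_antisymm (index_nonpos q hq q' hq' k hk)
    (neg_nonpos.mp (index_nonpos q' hq' q hq (-k) hk'))
  rw [hk, hk0, period_zero, add_zero]

end LogIsotopy

section Gluing

variable {α : Type*} [TopologicalSpace α] {A₁ A₂ : Set α} {ψ₁ ψ₂ : α → ℂ}

theorem exists_eq_of_eqOn_inter (hA₁ : IsClosed A₁) (hA₂ : IsClosed A₂)
    (hA : IsConnected (A₁ ∪ A₂)) (hψ₁ : ContinuousOn ψ₁ A₁) (hψ₂ : ContinuousOn ψ₂ A₂)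
    (he₁ : ∀ x ∈ A₁, Complex.exp (ψ₁ x) = 1) (he₂ : ∀ x ∈ A₂, Complex.exp (ψ₂ x) = 1)
    (heq : EqOn ψ₁ ψ₂ (A₁ ∩ A₂)) :
    ∃ c, Complex.exp c = 1 ∧ (∀ x ∈ A₁, ψ₁ x = c) ∧ ∀ x ∈ A₂, ψ₂ x = c := by
  classical
  let Ψ := A₁.piecewise ψ₁ ψ₂
  have hΨ₁ : EqOn Ψ ψ₁ A₁ := piecewise_eqOn A₁ ψ₁ ψ₂
  have hΨ₂ : EqOn Ψ ψ₂ A₂ := fun x hx => by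
    by_cases hx₁ : x ∈ A₁
    · rw [hΨ₁ hx₁, heq ⟨hx₁, hx⟩]
    · exact piecewise_eq_of_notMem A₁ ψ₁ ψ₂ hx₁
  have hΨ : ContinuousOn Ψ (A₁ ∪ A₂) :=
    (hψ₁.congr hΨ₁).union_of_isClosed (hψ₂.congr hΨ₂) hA₁ hA₂
  have he : ∀ x ∈ A₁ ∪ A₂, Complex.exp (Ψ x) = 1 := by
    rintro x (hx | hx)
    · rw [hΨ₁ hx, he₁ x hx]
    · rw [hΨ₂ hx, he₂ x hx]
  obtain ⟨a, ha⟩ := hA.nonempty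
  have hconst : ∀ x ∈ A₁ ∪ A₂, Ψ x = Ψ a := fun x hx =>
    eq_of_isPreconnected_of_exp_eq hA.isPreconnected hΨ he hx ha
  exact ⟨Ψ a, he a ha, fun x hx => (hΨ₁ hx).symm.trans (hconst x (Or.inl hx)),
    fun x hx => (hΨ₂ hx).symm.trans (hconst x (Or.inr hx))⟩

end Gluing

/-- The points of the closed left half-plane which are equidistant from `B` and `C`. -/
def leftEquidistant (B C : Set ℂ) : Set ℂ := voronoi B C ∩ voronoi C B ∩ {q | q.re ≤ 0}

theorem isClosed_leftEquidistant (B C : Set ℂ) : IsClosed (leftEquidistant B C) :=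
  ((isClosed_voronoi B C).inter (isClosed_voronoi C B)).inter
    (isClosed_le Complex.continuous_re continuous_const)

namespace SeparatedPair

variable {B C : Set ℂ} {r₀ : ℝ}

theorem eq_of_eventually_eq (H : SeparatedPair B C r₀) {ψ : ℂ → ℂ} {c : ℂ}
    (hψ : ContinuousOn ψ (voronoi B C ∩ {q | q.re ≤ 0}))
    (he : ∀ q ∈ voronoi B C ∩ {q | q.re ≤ 0}, Complex.exp (ψ q) = 1) (hc : Complex.exp c = 1)
    (hfar : ∀ᶠ y in leftEnd, y ∈ B → ψ y = c) {q : ℂ} (hq : q ∈ voronoi B C)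
    (hq0 : q.re ≤ 0) : ψ q = c := by
  have hB : B ⊆ voronoi B C ∩ {q | q.re ≤ 0} := fun b hb => ⟨subset_voronoi hb,
    (H.re_neg_left b hb).le⟩
  obtain ⟨b, hb, hqb⟩ := H.isClosed_left.exists_infDist_eq_dist H.nonempty_left q
  have hseg : segment ℝ b q ⊆ voronoi B C ∩ {q | q.re ≤ 0} := subset_inter
    (segment_subset_voronoi H.isClosed_right H.nonempty_right H.disjoint hb hqb hq)
    ((convex_halfSpace_re_le 0).segment_subset (H.re_neg_left b hb).le hq0)
  rw [eq_of_isPreconnected_of_exp_eq (convex_segment b q).isPreconnected (hψ.mono hseg)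
    (fun x hx => he x (hseg hx)) (right_mem_segment ℝ b q) (left_mem_segment ℝ b q)]
  refine sub_eq_zero.mp (H.isConnectedToLeft_left (fun x => ψ x - c)
    ((hψ.mono hB).sub continuousOn_const) (fun x hx => ?_) ?_ b hb)
  · rw [Complex.exp_sub, he x (hB hx), hc, div_one]
  · exact hfar.mono fun y hy hyB => sub_eq_zero.mpr (hy hyB)

/-- Far to the left, the two logarithms of `1` which jump along `E₂` only agree to a single
constant, and this constant propagates to all of `voronoi B C` and `voronoi C B`; so there is no
jump. -/
theorem eq_empty_of_union_eq_leftEquidistant (H : SeparatedPair B C r₀) {E₁ E₂ : Set ℂ}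
    (h₁ : IsClosed E₁) (h₂ : IsClosed E₂) (hd : Disjoint E₁ E₂)
    (hE : E₁ ∪ E₂ = leftEquidistant B C) (hfar : ∀ᶠ q in leftEnd, q ∉ E₂) : E₂ = ∅ := by
  have hclosed (m : ℝ) : IsClosed {q : ℂ | q.re ≤ m} :=
    isClosed_le Complex.continuous_re continuous_const
  have hcover (s : Set ℂ) : voronoi B C ∩ s ∪ voronoi C B ∩ s = s := by
    rw [← union_inter_distrib_right, voronoi_union_voronoi, univ_inter]
  obtain ⟨ψP, ψN, hP, hN, heP, heN, hagree, hjump⟩ := exists_logs_one_agree_and_jump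
    (convex_halfSpace_re_le (0 : ℝ)) ((isClosed_voronoi B C).inter (hclosed 0))
    ((isClosed_voronoi C B).inter (hclosed 0)) (hcover _)
    ((inter_inter_distrib_right _ _ _).symm.trans hE.symm) h₁ h₂ hd
  obtain ⟨M, hM⟩ := eventually_leftEnd.mp (hfar.and (eventually_leftEnd_re_lt 0))
  have hW : {q : ℂ | q.re ≤ M - 1} ⊆ {q | q.re ≤ 0} := fun q (hq : q.re ≤ M - 1) =>
    (hM q (by linarith)).2.le
  have hPW := inter_subset_inter_right (voronoi B C) hW
  have hNW := inter_subset_inter_right (voronoi C B) hW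
  obtain ⟨c, hc, hPc, hNc⟩ := exists_eq_of_eqOn_inter
    ((isClosed_voronoi B C).inter (hclosed (M - 1)))
    ((isClosed_voronoi C B).inter (hclosed (M - 1)))
    (by
      rw [hcover]
      exact (convex_halfSpace_re_le (M - 1)).isConnected ⟨_, (Complex.ofReal_re (M - 1)).le⟩)
    (hP.mono hPW) (hN.mono hNW) (fun x hx => heP x (hPW hx)) (fun x hx => heN x (hNW hx))
    fun x ⟨hxP, hxN⟩ => hagree x (((hE.symm ▸ (⟨⟨hxP.1, hxN.1⟩, hW hxP.2⟩ :
      x ∈ leftEquidistant B C) : x ∈ E₁ ∪ E₂)).resolve_right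
        (hM x (by linarith [show x.re ≤ M - 1 from hxP.2])).1)
  have hnear : ∀ᶠ q in leftEnd, q.re ≤ M - 1 := (eventually_leftEnd_re_lt (M - 1)).mono
    fun _ => le_of_lt
  refine eq_empty_of_forall_notMem fun q hq => Complex.two_pi_I_ne_zero ?_
  obtain ⟨⟨hqP, hqN⟩, hq0⟩ : q ∈ leftEquidistant B C := hE ▸ Or.inr hq
  have hPq : ψP q = c := H.eq_of_eventually_eq hP heP hc
    (hnear.mono fun y hy hyB => hPc y ⟨subset_voronoi hyB, hy⟩) hqP hq0
  have hNq : ψN q = c := H.symm.eq_of_eventually_eq hN heN hc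
    (hnear.mono fun y hy hyC => hNc y ⟨subset_voronoi hyC, hy⟩) hqN hq0
  simpa only [hPq, hNq, left_eq_add] using hjump q hq

theorem isPreconnected_zero_union_exp_leftEquidistant (H : SeparatedPair B C r₀) :
    IsPreconnected ({0} ∪ Complex.exp '' leftEquidistant B C) := by
  set L := {0} ∪ Complex.exp '' leftEquidistant B C
  have key : ∀ F₁ F₂ : Set ℂ, IsClosed F₁ → IsClosed F₂ → L ⊆ F₁ ∪ F₂ → (0 : ℂ) ∈ F₁ →
      (L ∩ F₂).Nonempty → (L ∩ (F₁ ∩ F₂)).Nonempty := by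
    intro F₁ F₂ h₁ h₂ hcov h0 ⟨y, hyL, hy⟩
    by_contra hemp
    have hdisj : ∀ x ∈ L, x ∈ F₁ → x ∉ F₂ := fun x hx hx₁ hx₂ => hemp ⟨x, hx, hx₁, hx₂⟩
    have h02 : (0 : ℂ) ∉ F₂ := hdisj 0 (Or.inl rfl) h0
    have hempty : leftEquidistant B C ∩ Complex.exp ⁻¹' F₂ = ∅ := by
      refine H.eq_empty_of_union_eq_leftEquidistant
        (E₁ := leftEquidistant B C ∩ Complex.exp ⁻¹' F₁)
        ((isClosed_leftEquidistant B C).inter (h₁.preimage Complex.continuous_exp))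
        ((isClosed_leftEquidistant B C).inter (h₂.preimage Complex.continuous_exp))
        (disjoint_left.mpr fun x hx₁ hx₂ =>
          hdisj _ (Or.inr (mem_image_of_mem _ hx₁.1)) hx₁.2 hx₂.2) ?_ ?_
      · rw [← inter_union_distrib_left, ← preimage_union, inter_eq_left]
        exact fun x hx => hcov (Or.inr (mem_image_of_mem _ hx))
      · have hexp : Tendsto Complex.exp leftEnd (𝓝 0) := Complex.tendsto_exp_comap_re_atBot
        exact (hexp.eventually (h₂.isOpen_compl.mem_nhds h02)).mono fun x hx hx₂ => hx hx₂.2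
    rcases hyL with rfl | ⟨x, hx, rfl⟩
    · exact h02 hy
    · exact (hempty ▸ (⟨hx, hy⟩ : x ∈ leftEquidistant B C ∩ Complex.exp ⁻¹' F₂) : x ∈ (∅ : Set ℂ))
  rw [isPreconnected_closed_iff]
  intro F₁ F₂ h₁ h₂ hcov hne₁ hne₂
  rcases hcov (Or.inl rfl) with h0 | h0
  · exact key F₁ F₂ h₁ h₂ hcov h0 hne₂
  · rw [inter_comm F₁]
    exact key F₂ F₁ h₂ h₁ (union_comm F₁ F₂ ▸ hcov) h0 hne₁

end SeparatedPair

/-! ### Arcs -/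

section LinearOrder

variable {Y : Type*} [LinearOrder Y]

theorem exists_strictMono_eqOn {Z : Type*} [CompleteLinearOrder Z] {D : Set Y}
    (hD : ∀ a b, a < b → ∃ d ∈ D, a < d ∧ d < b) {e : Y → Z} (he : StrictMonoOn e D) :
    ∃ τ : Y → Z, StrictMono τ ∧ EqOn e τ D := by
  obtain ⟨τ, hτ, heq⟩ := he.monotoneOn.exists_monotone_extension (OrderBot.bddBelow _)
    (OrderTop.bddAbove _)
  refine ⟨τ, fun a b hab => ?_, heq⟩
  obtain ⟨d, hd, had, hdb⟩ := hD a b hab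
  obtain ⟨d', hd', hdd', hdb'⟩ := hD d b hdb
  calc τ a ≤ τ d := hτ had.le
    _ = e d := (heq hd).symm
    _ < e d' := he hd hd' hdd'
    _ = τ d' := heq hd'
    _ ≤ τ b := hτ hdb'.le

variable [TopologicalSpace Y] [CompactSpace Y]

theorem exists_countable_orderIso_Ioo [OrderTopology Y] [DenselyOrdered Y]
    [TopologicalSpace.SeparableSpace Y] [Nontrivial Y] :
    ∃ D : Set Y, (∀ a b, a < b → ∃ d ∈ D, a < d ∧ d < b) ∧ Nonempty (D ≃o Ioo (0 : ℚ) 1) := by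
  obtain ⟨D, hDc, hDd⟩ := TopologicalSpace.exists_countable_dense Y
  obtain ⟨bot, -, hbot⟩ := (isCompact_univ (X := Y)).exists_isLeast univ_nonempty
  obtain ⟨top, -, htop⟩ := (isCompact_univ (X := Y)).exists_isGreatest univ_nonempty
  have hbetween : ∀ a b : Y, a < b → ∃ d ∈ D ∩ Ioo bot top, a < d ∧ d < b := fun a b hab => by
    obtain ⟨d, hd, had, hdb⟩ := hDd.exists_between hab
    exact ⟨d, ⟨hd, (hbot (mem_univ a)).trans_lt had, hdb.trans_le (htop (mem_univ b))⟩, had, hdb⟩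
  refine ⟨D ∩ Ioo bot top, hbetween, ?_⟩
  have : Countable ↥(D ∩ Ioo bot top) := (hDc.mono inter_subset_left).to_subtype
  have : Nonempty ↥(D ∩ Ioo bot top) := by
    obtain ⟨a, b, hab⟩ := exists_pair_lt Y
    obtain ⟨d, hd, -⟩ := hbetween a b hab
    exact ⟨d, hd⟩
  have : DenselyOrdered ↥(D ∩ Ioo bot top) := ⟨fun a b hab => by
    obtain ⟨d, hd, had, hdb⟩ := hbetween a b hab
    exact ⟨⟨d, hd⟩, had, hdb⟩⟩
  have : NoMinOrder ↥(D ∩ Ioo bot top) := ⟨fun a => by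
    obtain ⟨d, hd, -, hda⟩ := hbetween bot a a.2.2.1
    exact ⟨⟨d, hd⟩, hda⟩⟩
  have : NoMaxOrder ↥(D ∩ Ioo bot top) := ⟨fun a => by
    obtain ⟨d, hd, had, -⟩ := hbetween a top a.2.2.2
    exact ⟨⟨d, hd⟩, had⟩⟩
  have : Nonempty (Ioo (0 : ℚ) 1) := nonempty_Ioo_subtype one_pos
  exact Order.iso_of_countable_dense _ _

theorem nonempty_orderIso_unitInterval [OrderTopology Y] [PreconnectedSpace Y]
    [TopologicalSpace.SeparableSpace Y] [Nontrivial Y] : Nonempty (Y ≃o unitInterval) := by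
  classical
  have := denselyOrdered_of_preconnectedSpace (α := Y)
  obtain ⟨D, hD, ⟨e⟩⟩ := exists_countable_orderIso_Ioo (Y := Y)
  have hmem (q : Ioo (0 : ℚ) 1) : ((q : ℚ) : ℝ) ∈ unitInterval :=
    ⟨by exact_mod_cast q.2.1.le, by exact_mod_cast q.2.2.le⟩
  let f : Y → unitInterval := fun y => if h : y ∈ D then ⟨_, hmem (e ⟨y, h⟩)⟩ else 0
  have hf {y : Y} (h : y ∈ D) : f y = ⟨_, hmem (e ⟨y, h⟩)⟩ := dif_pos h
  obtain ⟨τ, hτ, heq⟩ := exists_strictMono_eqOn hD (e := f) fun a ha b hb hab => by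
    rw [hf ha, hf hb, Subtype.mk_lt_mk, Rat.cast_lt, Subtype.coe_lt_coe, e.lt_iff_lt]
    exact hab
  have hdense : DenseRange τ := dense_of_exists_between fun a b hab => by
    obtain ⟨q, haq, hqb⟩ := exists_rat_btwn (Subtype.coe_lt_coe.mpr hab)
    have hq : q ∈ Ioo (0 : ℚ) 1 :=
      ⟨by exact_mod_cast a.2.1.trans_lt haq, by exact_mod_cast hqb.trans_le b.2.2⟩
    refine ⟨_, mem_range_self (e.symm ⟨q, hq⟩ : Y), ?_⟩
    rw [← heq (e.symm ⟨q, hq⟩).2, hf (e.symm ⟨q, hq⟩).2, Subtype.coe_eta, e.apply_symm_apply]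
    exact ⟨haq, hqb⟩
  have hclosed : IsClosed (range τ) :=
    (isCompact_range (hτ.monotone.continuous_of_denseRange hdense)).isClosed
  exact ⟨hτ.orderIsoOfSurjective τ (range_eq_univ.mp (hclosed.closure_eq ▸ hdense.closure_range))⟩

end LinearOrder

theorem orderTopology_of_isOpen_Iio_of_isOpen_Ioi {Y : Type*} [LinearOrder Y]
    [tY : TopologicalSpace Y] [CompactSpace Y] (hlt : ∀ a : Y, IsOpen (Iio a))
    (hgt : ∀ a : Y, IsOpen (Ioi a)) : OrderTopology Y := by
  have hle : tY ≤ Preorder.topology Y := le_generateFrom <| by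
    rintro s ⟨a, rfl | rfl⟩
    exacts [hgt a, hlt a]
  have hT2 : @T2Space Y (Preorder.topology Y) := by
    let := Preorder.topology Y
    have : OrderTopology Y := ⟨rfl⟩
    infer_instance
  have hmap : @IsClosedMap Y Y tY (Preorder.topology Y) id :=
    @Continuous.isClosedMap Y Y tY (Preorder.topology Y) _ _ id (continuous_id_iff_le.mpr hle)
  refine ⟨le_antisymm hle (continuous_id_iff_le.mp ?_)⟩
  refine (@continuous_iff_isClosed Y Y (Preorder.topology Y) tY id).mpr fun s hs => ?_
  simpa only [image_id, preimage_id] using hmap s hs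

section Relation

variable {Y : Type*} [TopologicalSpace Y] [PreconnectedSpace Y] {r : Y → Y → Prop}

theorem transitive_of_isOpen (htri : ∀ a b, a ≠ b → r a b ∨ r b a)
    (hasymm : ∀ a b, r a b → ¬ r b a) (hlt : ∀ a, IsOpen {x | r x a})
    (hgt : ∀ a, IsOpen {x | r a x}) {a b c : Y} (hab : r a b) (hbc : r b c) : r a c := by
  by_contra hac
  have hca : r c a := (htri a c fun h => hasymm a b hab (h ▸ hbc)).resolve_left hac
  have hcover : univ ⊆ {x | r x b} ∩ {x | r c x} ∪ ({x | r b x} ∪ {x | r x c}) := fun x _ => by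
    by_cases hx : r b x ∨ r x c
    · exact Or.inr hx
    · rw [not_or] at hx
      exact Or.inl ⟨(htri x b fun h => hx.2 (h ▸ hbc)).resolve_right hx.1,
        (htri x c fun h => hx.1 (h ▸ hbc)).resolve_left hx.2⟩
  obtain ⟨x, -, ⟨hxb, hcx⟩, hx⟩ := isPreconnected_univ _ _ ((hlt b).inter (hgt c))
    ((hgt b).union (hlt c)) hcover ⟨a, mem_univ a, hab, hca⟩ ⟨b, mem_univ b, Or.inr hbc⟩
  exact hx.elim (hasymm x b hxb) (hasymm c x hcx)

theorem exists_homeomorph_unitInterval_of_isOpen [CompactSpace Y]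
    [TopologicalSpace.SeparableSpace Y] [Nontrivial Y] (htri : ∀ a b, a ≠ b → r a b ∨ r b a)
    (hasymm : ∀ a b, r a b → ¬ r b a) (hlt : ∀ a, IsOpen {x | r x a})
    (hgt : ∀ a, IsOpen {x | r a x}) {m : Y} (hm : ∀ x, x ≠ m → r m x) :
    ∃ τ : Y ≃ₜ unitInterval, τ m = 0 := by
  classical
  have : IsStrictTotalOrder Y r :=
    { trichotomous := fun a b hab hba => by_contra fun h => (htri a b h).elim hab hba
      irrefl := fun a h => hasymm a a h h
      trans := fun _ _ _ => transitive_of_isOpen htri hasymm hlt hgt }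
  let : LinearOrder Y := linearOrderOfSTO r
  have : OrderTopology Y := orderTopology_of_isOpen_Iio_of_isOpen_Ioi hlt hgt
  obtain ⟨τ⟩ := nonempty_orderIso_unitInterval (Y := Y)
  refine ⟨τ.toHomeomorph, le_antisymm ?_ unitInterval.nonneg'⟩
  rw [← τ.apply_symm_apply 0]
  refine τ.monotone ?_
  rcases eq_or_ne (τ.symm 0) m with h | h
  · exact h.ge
  · exact (show m < τ.symm 0 from hm _ h).le

end Relation

section OnePoint

open OnePoint

variable {E : Type*} [TopologicalSpace E]

theorem isOpen_setOf_neg_of_continuousOn_compl [T1Space E] {g : E → ℝ} {a : E}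
    (hg : ContinuousOn g {a}ᶜ) (ha : g a = 0) : IsOpen {x | g x < 0} := by
  have hopen := hg.isOpen_inter_preimage isOpen_compl_singleton (isOpen_Iio (a := (0 : ℝ)))
  convert hopen using 1
  ext x
  exact ⟨fun hx => ⟨by rintro rfl; exact ha.not_lt hx, hx⟩, fun hx => hx.2⟩

/-- The order is `x < a ↔ G x a < 0`, with `∞` as the least element. -/
theorem exists_homeomorph_onePoint_unitInterval [T2Space E] [Nonempty E]
    [PreconnectedSpace (OnePoint E)] [TopologicalSpace.SeparableSpace (OnePoint E)]
    {G : E → E → ℝ} (hanti : ∀ x a, G x a = -G a x) (hne : ∀ x a, x ≠ a → G x a ≠ 0)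
    (hG : ∀ a, ContinuousOn (fun x => G x a) {a}ᶜ)
    (hinf : ∀ a, ∀ᶠ x in cocompact E, G x a < 0) :
    ∃ τ : OnePoint E ≃ₜ unitInterval, τ ∞ = 0 := by
  have hself (a : E) : G a a = 0 := by linarith [hanti a a]
  let r : OnePoint E → OnePoint E → Prop := fun x y =>
    ∃ a : E, y = a ∧ ∀ x' : E, x = x' → G x' a < 0
  have hr_coe (x a : E) : r x a ↔ G x a < 0 := by simp [r]
  have hr_inf (a : E) : r ∞ a := by simp [r]
  have hnr (x : OnePoint E) : ¬ r x ∞ := by simp [r]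
  have : Nontrivial (OnePoint E) := ⟨∞, Classical.arbitrary E, infty_ne_coe _⟩
  have hGlt (a : E) : IsOpen {x | G x a < 0} :=
    isOpen_setOf_neg_of_continuousOn_compl (hG a) (hself a)
  have hGgt (a : E) : IsOpen {x | G a x < 0} := by
    simp only [hanti a]
    exact isOpen_setOf_neg_of_continuousOn_compl (hG a).neg (neg_eq_zero.mpr (hself a))
  refine exists_homeomorph_unitInterval_of_isOpen (r := r) ?_ ?_ ?_ ?_ ?_
  · rw [OnePoint.forall]
    refine ⟨?_, fun a => ?_⟩ <;> rw [OnePoint.forall]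
    · exact ⟨fun h => absurd rfl h, fun a _ => Or.inl (hr_inf a)⟩
    · refine ⟨fun _ => Or.inr (hr_inf a), fun b hab => ?_⟩
      rw [hr_coe, hr_coe, hanti b a, neg_lt_zero]
      exact (hne a b fun h => hab (congrArg _ h)).lt_or_gt
  · rw [OnePoint.forall]
    refine ⟨fun b _ => hnr b, fun a => ?_⟩
    rw [OnePoint.forall]
    refine ⟨fun h => absurd h (hnr a), fun b => ?_⟩
    rw [hr_coe, hr_coe, hanti b a, neg_lt_zero]
    exact fun h => h.not_gt
  · rw [OnePoint.forall]
    refine ⟨by simp only [hnr, ofPred_false, isOpen_empty], fun a => ?_⟩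
    simp only [OnePoint.isOpen_def, preimage_ofPred_eq, hr_coe]
    refine ⟨fun _ => ?_, hGlt a⟩
    obtain ⟨K, hK, hKG⟩ := mem_cocompact'.mp (hinf a)
    exact hK.of_isClosed_subset (hGlt a).isClosed_compl hKG
  · rw [OnePoint.forall]
    simp only [OnePoint.isOpen_def, preimage_ofPred_eq, hr_coe, hr_inf, ofPred_true, isOpen_univ]
    exact ⟨⟨fun h => absurd h (hnr _), trivial⟩, fun a => ⟨fun h => absurd h (hnr a), hGgt a⟩⟩
  · rw [OnePoint.forall]
    exact ⟨fun h => absurd rfl h, fun a _ => hr_inf a⟩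

end OnePoint

theorem isArcEnds_range {g : unitInterval → ℂ} (hg : Continuous g) (hinj : Function.Injective g) :
    IsArcEnds (range g) (g 0) (g 1) := by
  refine ⟨IccExtend zero_le_one g, hg.Icc_extend'.continuousOn, ?_, ?_, IccExtend_left _ _,
    IccExtend_right _ _⟩
  · intro s hs s' hs' he
    rw [IccExtend_of_mem _ _ hs, IccExtend_of_mem _ _ hs'] at he
    exact congrArg Subtype.val (hinj he)
  · refine Subset.antisymm ?_ ?_
    · rintro _ ⟨s, -, rfl⟩
      exact mem_range_self _
    · rintro _ ⟨s, rfl⟩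
      exact ⟨s, s.2, IccExtend_val _ _ s⟩

theorem im_ne_im_of_exp_eq_neg_exp {a b : ℂ} (h : Complex.exp a = -Complex.exp b) :
    a.im ≠ b.im := fun him => by
  have hexp : Complex.exp (a - b) = -1 := by
    rw [Complex.exp_sub, h, neg_div, div_self (Complex.exp_ne_zero b)]
  have hre := congrArg Complex.re hexp
  rw [Complex.exp_re, Complex.sub_im, him, sub_self, Real.cos_zero, mul_one, Complex.neg_re,
    Complex.one_re] at hre
  linarith [Real.exp_pos (a - b).re]

section ArcOfPairLog

open OnePoint

variable {B C E : Set ℂ} {L : ℂ → ℂ → ℂ}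

theorem IsPairLog.exists_homeomorph_onePoint (hL : IsPairLog B C L) (hEB : E ⊆ B) (hEC : E ⊆ C)
    (hE : Tendsto ((↑) : E → ℂ) (cocompact E) leftEnd) [Nonempty E]
    [PreconnectedSpace (OnePoint E)] [TopologicalSpace.SeparableSpace (OnePoint E)] :
    ∃ τ : OnePoint E ≃ₜ unitInterval, τ ∞ = 0 := by
  refine exists_homeomorph_onePoint_unitInterval
    (G := fun x a : E => (L x a).im - (L a x).im) (fun x a => (neg_sub _ _).symm) ?_ ?_ ?_
  · intro x a hxa
    have hne : (x : ℂ) ≠ a := Subtype.coe_ne_coe.mpr hxa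
    refine sub_ne_zero.mpr (im_ne_im_of_exp_eq_neg_exp ?_)
    rw [hL.right.exp_eq _ (hEC a.2) _ (hEB x.2) hne.symm,
      hL.right.exp_eq _ (hEC x.2) _ (hEB a.2) hne, neg_sub]
  · intro a
    have hmaps {D : Set ℂ} (hED : E ⊆ D) :
        MapsTo ((↑) : E → ℂ) {a}ᶜ (D \ {(a : ℂ)}) := fun x hx =>
      ⟨hED x.2, Subtype.coe_ne_coe.mpr hx⟩
    refine (Complex.continuous_im.comp_continuousOn ?_).sub
      (Complex.continuous_im.comp_continuousOn ?_)
    · exact (hL.right.continuousOn_right (hEC a.2)).comp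
        continuous_subtype_val.continuousOn (hmaps hEB)
    · exact (hL.right.continuousOn_left (hEB a.2)).comp
        continuous_subtype_val.continuousOn (hmaps hEC)
  · intro a
    have hre : ∀ᶠ x : E in cocompact E, (x : ℂ).re < (a : ℂ).re :=
      hE.eventually (eventually_leftEnd_re_lt _)
    filter_upwards [hE.eventually (hL.left.abs_im_lt a (hEB a.2)),
      hE.eventually (hL.right.abs_im_lt a (hEC a.2)), hre] with x hleft hright hxa
    have hne : (a : ℂ) ≠ x := fun h => hxa.ne (congrArg Complex.re h.symm)
    have hLax := (abs_lt.mp (hleft (hEC x.2) hne)).1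
    have hLxa := (abs_lt.mp (hright (hEB x.2) hne)).2
    rw [Complex.sub_im, Complex.im_ofReal_mul, Complex.I_im, mul_one] at hLax
    linarith

theorem IsPairLog.exists_isArcEnds (hL : IsPairLog B C L) (hEB : E ⊆ B) (hEC : E ⊆ C)
    (hE : Tendsto ((↑) : E → ℂ) (cocompact E) leftEnd) (hne : E.Nonempty)
    (hinj : InjOn Complex.exp E) (hconn : IsPreconnected ({0} ∪ Complex.exp '' E)) :
    ∃ b, IsArcEnds ({0} ∪ Complex.exp '' E) 0 b := by
  let F : OnePoint E → ℂ := fun x => x.elim 0 fun q => Complex.exp q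
  have hF_infty : F ∞ = 0 := rfl
  have hF_coe (q : E) : F q = Complex.exp q := rfl
  have hF : Continuous F := by
    refine (OnePoint.continuous_iff F).mpr ⟨?_, Complex.continuous_exp.comp continuous_subtype_val⟩
    rw [coclosedCompact_eq_cocompact]
    exact Complex.tendsto_exp_comap_re_atBot.comp hE
  have hFinj : Function.Injective F := by
    rw [Function.Injective, OnePoint.forall]
    refine ⟨?_, fun q => ?_⟩ <;> rw [OnePoint.forall]
    · exact ⟨fun _ => rfl, fun q h => absurd h.symm (Complex.exp_ne_zero q)⟩
    · exact ⟨fun h => absurd h (Complex.exp_ne_zero q), fun q' h =>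
        congrArg _ (Subtype.ext (hinj q.2 q'.2 h))⟩
  have hrange : range F = {0} ∪ Complex.exp '' E := by
    ext z
    simp only [mem_range, OnePoint.exists, mem_union, mem_singleton_iff, mem_image,
      Subtype.exists, exists_prop, hF_infty, hF_coe, eq_comm (a := z)]
  have hemb := hF.isClosedEmbedding hFinj
  have : PreconnectedSpace (OnePoint E) := ⟨by
    rwa [← hemb.isInducing.isPreconnected_image, image_univ, hrange]⟩
  have : SecondCountableTopology (OnePoint E) := hemb.isInducing.secondCountableTopology
  have : Nonempty E := hne.to_subtype
  obtain ⟨τ, hτ⟩ := hL.exists_homeomorph_onePoint hEB hEC hE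
  refine ⟨F (τ.symm 1), ?_⟩
  have harc := isArcEnds_range (hF.comp τ.symm.continuous) (hFinj.comp τ.symm.injective)
  rwa [τ.symm.surjective.range_comp, hrange, Function.comp_apply, ← hτ, τ.symm_apply_apply]
    at harc

end ArcOfPairLog

/-! ### Continuity in the Hausdorff metric -/

section Hemicontinuity

variable {X T : Type*} [TopologicalSpace T] {I : Set T} {t₀ : T}

theorem eventually_disjoint_of_isClosed_graph [TopologicalSpace X] {A : T → Set X} {K : Set X}
    (hA : IsClosed {q : X × T | q.2 ∈ I ∧ q.1 ∈ A q.2}) (hK : IsCompact K)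
    (hd : Disjoint K (A t₀)) : ∀ᶠ t in 𝓝[I] t₀, Disjoint K (A t) := by
  have hev : ∀ x ∈ K, ∀ᶠ p : T × X in 𝓝 (t₀, x), ¬(p.1 ∈ I ∧ p.2 ∈ A p.1) := fun x hx =>
    (hA.preimage continuous_swap).isOpen_compl.mem_nhds fun h => disjoint_left.mp hd hx h.2
  have hK' := hK.eventually_forall_of_forall_eventually (P := fun t x => ¬(t ∈ I ∧ x ∈ A t)) hev
  exact eventually_nhdsWithin_iff.mpr <| hK'.mono fun t ht htI =>
    disjoint_left.mpr fun x hx hxA => ht x hx ⟨htI, hxA⟩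

theorem lowerHemicontinuousOn_union_image {Y : Type*} [TopologicalSpace X] [TopologicalSpace Y]
    {A : T → Set X} (hA : LowerHemicontinuousOn A I) {f : X → Y} (hf : Continuous f) (s : Set Y) :
    LowerHemicontinuousOn (fun t => s ∪ f '' A t) I := by
  intro t ht
  refine lowerHemicontinuousWithinAt_iff.mpr fun u hu => ?_
  rintro ⟨_, hx | ⟨x, hx, rfl⟩, hxu⟩
  · exact Eventually.of_forall fun _ => ⟨_, Or.inl hx, hxu⟩
  · refine (lowerHemicontinuousWithinAt_iff.mp (hA t ht) _ (hu.preimage hf) ⟨x, hx, hxu⟩).mono ?_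
    rintro s ⟨y, hy, hyu⟩
    exact ⟨f y, Or.inr (mem_image_of_mem f hy), hyu⟩

variable [PseudoMetricSpace X] {A : T → Set X}

theorem continuousOn_infDist_of_lowerHemicontinuousOn [ProperSpace X]
    (hcl : IsClosed {q : X × T | q.2 ∈ I ∧ q.1 ∈ A q.2}) (hne : ∀ t ∈ I, (A t).Nonempty)
    (hl : LowerHemicontinuousOn A I) (x : X) : ContinuousOn (fun t => infDist x (A t)) I := by
  intro t₀ ht₀
  refine tendsto_order.mpr ⟨fun a ha => ?_, fun a ha => ?_⟩
  · obtain ⟨a', haa', ha'⟩ := exists_between ha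
    have hd : Disjoint (closedBall x a') (A t₀) := disjoint_left.mpr fun y hy hyA =>
      (infDist_le_dist_of_mem hyA).not_gt ((mem_closedBall'.mp hy).trans_lt ha')
    filter_upwards [eventually_disjoint_of_isClosed_graph hcl (isCompact_closedBall x a') hd,
      self_mem_nhdsWithin] with t ht htI
    refine haa'.trans_le ((le_infDist (hne t htI)).mpr fun y hy => ?_)
    exact (not_le.mp fun h => disjoint_left.mp ht (mem_closedBall'.mpr h) hy).le
  · obtain ⟨y, hy, hxy⟩ := (infDist_lt_iff (hne t₀ ht₀)).mp ha
    filter_upwards [lowerHemicontinuousWithinAt_iff.mp (hl t₀ ht₀) _ isOpen_ball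
      ⟨y, hy, mem_ball'.mpr hxy⟩] with t ⟨z, hz, hxz⟩
    exact (infDist_le_dist_of_mem hz).trans_lt (mem_ball'.mp hxz)

theorem continuousOn_uncurry_infDist (h : ∀ x, ContinuousOn (fun t => infDist x (A t)) I) :
    ContinuousOn (fun q : X × T => infDist q.1 (A q.2)) (univ ×ˢ I) :=
  continuousOn_prod_of_continuousOn_lipschitzOnWith _ 1 (fun x _ => h x)
    fun t _ => (lipschitz_infDist_pt (A t)).lipschitzOnWith

theorem eventually_hausdorffDist_lt (hu : UpperHemicontinuousWithinAt A I t₀)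
    (hl : LowerHemicontinuousWithinAt A I t₀) (hA : IsCompact (A t₀)) {ε : ℝ} (hε : 0 < ε) :
    ∀ᶠ t in 𝓝[I] t₀, hausdorffDist (A t) (A t₀) < ε := by
  obtain ⟨F, hF, hFfin, hcover⟩ := hA.finite_cover_balls (show 0 < ε / 4 by positivity)
  have hlower : ∀ᶠ t in 𝓝[I] t₀, ∀ x ∈ F, (A t ∩ ball x (ε / 4)).Nonempty :=
    (eventually_all_finite hFfin).mpr fun x hx => lowerHemicontinuousWithinAt_iff.mp hl _
      isOpen_ball ⟨x, hF hx, mem_ball_self (by positivity)⟩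
  filter_upwards [hlower, upperHemicontinuousWithinAt_iff_forall_isOpen.mp hu _
    isOpen_thickening (self_subset_thickening (half_pos hε) (A t₀))] with t htl htu
  refine (hausdorffDist_le_of_mem_dist (half_pos hε).le (fun x hx => ?_) fun x hx => ?_).trans_lt
    (half_lt_self hε)
  · obtain ⟨y, hy, hxy⟩ := mem_thickening_iff.mp (htu hx)
    exact ⟨y, hy, hxy.le⟩
  · obtain ⟨y, hy, hxy⟩ := mem_iUnion₂.mp (hcover hx)
    obtain ⟨z, hz, hyz⟩ := htl y hy
    exact ⟨z, hz, by linarith [dist_triangle_right x z y, mem_ball.mp hxy, mem_ball.mp hyz]⟩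

end Hemicontinuity

/-- A plane set whose intersection with every right half-plane is bounded, so that it can escape to
infinity only towards the left. -/
def IsBoundedToRight (S : Set ℂ) : Prop := ∀ M : ℝ, Bornology.IsBounded (S ∩ {q | M ≤ q.re})

namespace IsBoundedToRight

variable {S S' : Set ℂ}

theorem mono (hS : IsBoundedToRight S) (h : S' ⊆ S) : IsBoundedToRight S' := fun M =>
  (hS M).subset (inter_subset_inter_left _ h)

theorem tendsto_coe (hS : IsBoundedToRight S) (hcl : IsClosed S) :
    Tendsto ((↑) : S → ℂ) (cocompact S) leftEnd := by
  refine tendsto_comap_iff.mpr (tendsto_atBot.mpr fun M => ?_)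
  have hK : IsCompact (S ∩ {q | M ≤ q.re}) := Metric.isCompact_of_isClosed_isBounded
    (hcl.inter (isClosed_le continuous_const Complex.continuous_re)) (hS M)
  filter_upwards [(hcl.isClosedEmbedding_subtypeVal.isCompact_preimage hK).compl_mem_cocompact]
    with x hx
  exact (not_le.mp fun h => hx ⟨x.2, h⟩).le

end IsBoundedToRight

section LeftEquidistant

variable {T : Type*} [TopologicalSpace T] {I : Set T} {t₀ : T}

theorem upperHemicontinuousWithinAt_zero_union_exp {E : T → Set ℂ}
    (hE : IsClosed {q : ℂ × T | q.2 ∈ I ∧ q.1 ∈ E q.2})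
    (hbd : IsBoundedToRight (⋃ t ∈ I, E t)) :
    UpperHemicontinuousWithinAt (fun t => {0} ∪ Complex.exp '' E t) I t₀ := by
  refine upperHemicontinuousWithinAt_iff_forall_isOpen.mpr fun u hu hsub => ?_
  have hexp : Tendsto Complex.exp leftEnd (𝓝 0) := Complex.tendsto_exp_comap_re_atBot
  have hu0 : u ∈ 𝓝 (0 : ℂ) := hu.mem_nhds (hsub (Or.inl rfl))
  obtain ⟨M, hM⟩ := eventually_leftEnd.mp (hexp.eventually hu0)
  have hK : IsCompact (closure ((⋃ t ∈ I, E t) ∩ {q | M ≤ q.re}) ∩ Complex.exp ⁻¹' uᶜ) :=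
    (hbd M).isCompact_closure.inter_right (hu.isClosed_compl.preimage Complex.continuous_exp)
  have hd : Disjoint (closure ((⋃ t ∈ I, E t) ∩ {q | M ≤ q.re}) ∩ Complex.exp ⁻¹' uᶜ) (E t₀) :=
    disjoint_left.mpr fun q hq hqE => hq.2 (hsub (Or.inr (mem_image_of_mem _ hqE)))
  filter_upwards [eventually_disjoint_of_isClosed_graph hE hK hd, self_mem_nhdsWithin]
    with t ht htI
  rintro _ (rfl | ⟨q, hq, rfl⟩)
  · exact mem_of_mem_nhds hu0
  · rcases lt_or_ge q.re M with hqM | hqM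
    · exact hM q hqM
    · exact not_not.mp fun hqu => disjoint_left.mp ht
        ⟨subset_closure ⟨mem_biUnion htI hq, hqM⟩, hqu⟩ hq

variable {B C : T → Set ℂ} {r₀ : ℝ}

theorem isClosed_setOf_mem_leftEquidistant (hI : IsClosed I)
    (hB : ∀ x, ContinuousOn (fun t => infDist x (B t)) I)
    (hC : ∀ x, ContinuousOn (fun t => infDist x (C t)) I) :
    IsClosed {q : ℂ × T | q.2 ∈ I ∧ q.1 ∈ leftEquidistant (B q.2) (C q.2)} := by
  have hB' := continuousOn_uncurry_infDist hB
  have hC' := continuousOn_uncurry_infDist hC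
  have hUI : IsClosed ((univ : Set ℂ) ×ˢ I) := isClosed_univ.prod hI
  have hre : IsClosed {q : ℂ × T | q.1.re ≤ 0} :=
    isClosed_le (Complex.continuous_re.comp continuous_fst) continuous_const
  convert ((hUI.isClosed_le hB' hC').inter (hUI.isClosed_le hC' hB')).inter hre using 1
  ext q
  simp only [leftEquidistant, voronoi, mem_inter_iff, mem_prod, mem_univ, true_and, mem_ofPred_eq]
  tauto

theorem SeparatedPair.exists_mem_infDist_lt {B C : Set ℂ} (H : SeparatedPair B C r₀) {q : ℂ}
    (hq : q ∈ voronoi B C) (hq' : q ∈ voronoi C B) (hq0 : q.re ≤ 0) {u : Set ℂ} (hu : u ∈ 𝓝 q) :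
    ∃ x ∈ u, x.re ≤ 0 ∧ infDist x B < infDist x C := by
  obtain ⟨b, hb, hqb⟩ := H.isClosed_left.exists_infDist_eq_dist H.nonempty_left q
  have hbq : b ≠ q := fun h => H.symm.notMem_right hq' (h ▸ hb)
  obtain ⟨x, hxu, hx⟩ := mem_closure_iff_nhds.mp
    (segment_subset_closure_openSegment (right_mem_segment ℝ b q)) u hu
  have hxs := openSegment_subset_segment ℝ b q hx
  refine ⟨x, hxu, (convex_halfSpace_re_le 0).segment_subset (H.re_neg_left b hb).le hq0 hxs,
    infDist_lt_infDist_of_mem_segment H.isClosed_right H.nonempty_right H.disjoint hb hqb hq hxs ?_⟩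
  rintro rfl
  exact hbq (right_mem_openSegment_iff.mp hx)

theorem SeparatedPair.lowerHemicontinuousWithinAt_leftEquidistant
    (H : SeparatedPair (B t₀) (C t₀) r₀)
    (hB : ∀ x, ContinuousWithinAt (fun t => infDist x (B t)) I t₀)
    (hC : ∀ x, ContinuousWithinAt (fun t => infDist x (C t)) I t₀) :
    LowerHemicontinuousWithinAt (fun t => leftEquidistant (B t) (C t)) I t₀ := by
  refine lowerHemicontinuousWithinAt_iff.mpr fun u hu => ?_
  rintro ⟨q, ⟨⟨hqB, hqC⟩, hq0⟩, hqu⟩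
  obtain ⟨ε, hε, hball⟩ := Metric.isOpen_iff.mp hu q hqu
  obtain ⟨x, hx, hx0, hxlt⟩ := H.exists_mem_infDist_lt hqB hqC hq0 (ball_mem_nhds q hε)
  obtain ⟨y, hy, hy0, hylt⟩ := H.symm.exists_mem_infDist_lt hqC hqB hq0 (ball_mem_nhds q hε)
  filter_upwards [(hB x).eventually_lt (hC x) hxlt, (hC y).eventually_lt (hB y) hylt]
    with t hxt hyt
  obtain ⟨w, hw, heq⟩ := (convex_segment x y).isPreconnected.intermediate_value₂
    (left_mem_segment ℝ x y) (right_mem_segment ℝ x y)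
    (continuous_infDist_pt (B t)).continuousOn (continuous_infDist_pt (C t)).continuousOn
    hxt.le hyt.le
  exact ⟨w, ⟨⟨heq.le, heq.ge⟩, (convex_halfSpace_re_le 0).segment_subset hx0 hy0 hw⟩,
    hball ((convex_ball q ε).segment_subset hx hy hw)⟩

end LeftEquidistant

/-! ### The equidistant curves of an isotopy -/

/-- The image under `exp` of the points of the closed left half-plane which are equidistant from
the lower and the upper sheets, completed by the image `0` of the left end of the plane. -/
def equidistantCurve {α : Type*} (Fr : Set α) (p : α) (f : α → ℝ → ℂ) (t : ℝ) : Set ℂ :=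
  {0} ∪ Complex.exp '' leftEquidistant (lowerSheets Fr p f t) (upperSheets Fr p f t)

theorem SeparatedPair.exists_dist_add_period_le {α : Type*} {K : Set α} {φ : α → ℂ} {I : Set ℤ}
    {C : Set ℂ} {r₀ : ℝ} (H : SeparatedPair (sheets K φ I) C r₀) {q : ℂ}
    (hq : q ∈ voronoi (sheets K φ I) C) (hq0 : q.re ≤ 0) :
    ∃ z ∈ K, ∃ k ∈ I, dist q (φ z + period k) ≤ r₀ := by
  obtain ⟨_, ⟨z, hz, k, hk, rfl⟩, hqb⟩ :=
    H.isClosed_left.exists_infDist_eq_dist H.nonempty_left q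
  exact ⟨z, hz, k, hk, H.dist_le hq hq0 hqb⟩

namespace LogIsotopy

variable {α : Type*} [TopologicalSpace α] {Fr : Set α} {p : α} {h f : α → ℝ → ℂ} {t r₀ : ℝ}

theorem exists_separatedPair [T2Space α] (D : LogIsotopy Fr p h f) :
    ∃ r₀, ∀ t ∈ Icc (0 : ℝ) 1, SeparatedPair (lowerSheets Fr p f t) (upperSheets Fr p f t) r₀ := by
  obtain ⟨r₀, hr₀⟩ := D.exists_forall_infDist_le
  exact ⟨r₀, fun t ht => D.separatedPair ht (hr₀ t ht)⟩

theorem exists_forall_abs_log_im_le [T2Space α] (D : LogIsotopy Fr p h f) (M : ℝ) :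
    ∃ Y, ∀ z ∈ Fr \ {p}, ∀ t ∈ Icc (0 : ℝ) 1, M ≤ (f z t).re → |(f z t).im| ≤ Y := by
  have hcompact := D.isCompact.prod (isCompact_Icc (a := (0 : ℝ)) (b := 1))
  set S := Fr ×ˢ Icc (0 : ℝ) 1 ∩ (fun q => ‖h q.1 q.2‖) ⁻¹' Ici (Real.exp M)
  have hS : IsCompact S := hcompact.of_isClosed_subset
    (D.continuousOn.norm.preimage_isClosed_of_isClosed hcompact.isClosed isClosed_Ici)
    inter_subset_left
  have hSp : S ⊆ (Fr \ {p}) ×ˢ Icc 0 1 := by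
    rintro ⟨z, t⟩ ⟨⟨hz, ht⟩, hM : Real.exp M ≤ ‖h z t‖⟩
    refine ⟨⟨hz, fun hzp : z = p => (Real.exp_pos M).not_ge ?_⟩, ht⟩
    rwa [hzp, D.map_base t ht, norm_zero] at hM
  obtain ⟨Y, hY⟩ := hS.exists_bound_of_continuousOn (D.continuousOn_log.mono hSp)
  refine ⟨Y, fun z hz t ht hM => (Complex.abs_im_le_norm _).trans (hY (z, t) ⟨⟨hz.1, ht⟩, ?_⟩)⟩
  exact (Real.exp_le_exp.mpr hM).trans_eq (D.norm_eq_exp_re hz ht).symm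

theorem exists_forall_abs_im_sub_period_le [T2Space α] (D : LogIsotopy Fr p h f) (M r : ℝ) :
    ∃ Y, ∀ z ∈ Fr \ {p}, ∀ t ∈ Icc (0 : ℝ) 1, ∀ (k : ℤ) (q : ℂ), M ≤ q.re →
      dist q (f z t + period k) ≤ r → |q.im - 2 * Real.pi * k| ≤ Y := by
  obtain ⟨Y, hY⟩ := D.exists_forall_abs_log_im_le (M - r)
  refine ⟨r + Y, fun z hz t ht k q hq hd => ?_⟩
  rw [Complex.dist_eq] at hd
  have hre := (Complex.abs_re_le_norm _).trans hd
  have him := (Complex.abs_im_le_norm _).trans hd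
  rw [Complex.sub_re, add_period_re] at hre
  rw [Complex.sub_im, Complex.add_im, period_im] at him
  calc |q.im - 2 * Real.pi * k|
      = |q.im - ((f z t).im + 2 * Real.pi * k) + (f z t).im| := by congr 1; ring
    _ ≤ r + Y := (abs_add_le _ _).trans
      (add_le_add him (hY z hz t ht (by linarith [(abs_le.mp hre).2])))

theorem exists_forall_mem_voronoi_im_le [T2Space α] (D : LogIsotopy Fr p h f)
    (H : ∀ t ∈ Icc (0 : ℝ) 1, SeparatedPair (lowerSheets Fr p f t) (upperSheets Fr p f t) r₀)
    (M : ℝ) : ∃ Y, ∀ t ∈ Icc (0 : ℝ) 1, ∀ q : ℂ, M ≤ q.re → q.re ≤ 0 →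
      (q ∈ voronoi (upperSheets Fr p f t) (lowerSheets Fr p f t) → -Y ≤ q.im) ∧
      (q ∈ voronoi (lowerSheets Fr p f t) (upperSheets Fr p f t) → q.im ≤ Y) := by
  obtain ⟨Y, hY⟩ := D.exists_forall_abs_im_sub_period_le M r₀
  refine ⟨Y, fun t ht q hM hq0 => ⟨fun hq => ?_, fun hq => ?_⟩⟩
  · obtain ⟨z, hz, k, hk, hd⟩ := (H t ht).symm.exists_dist_add_period_le hq hq0
    have hk' : (0 : ℝ) ≤ 2 * Real.pi * k :=
      mul_nonneg Real.two_pi_pos.le (by exact_mod_cast (mem_Ioi.mp hk).le)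
    linarith [(abs_le.mp (hY z hz t ht k q hM hd)).1]
  · obtain ⟨z, hz, k, hk, hd⟩ := (H t ht).exists_dist_add_period_le hq hq0
    have hk' : 2 * Real.pi * (k : ℝ) ≤ 0 :=
      mul_nonpos_of_nonneg_of_nonpos Real.two_pi_pos.le (by exact_mod_cast mem_Iic.mp hk)
    linarith [(abs_le.mp (hY z hz t ht k q hM hd)).2]

theorem isBoundedToRight_iUnion_leftEquidistant [T2Space α] (D : LogIsotopy Fr p h f)
    (H : ∀ t ∈ Icc (0 : ℝ) 1, SeparatedPair (lowerSheets Fr p f t) (upperSheets Fr p f t) r₀) :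
    IsBoundedToRight (⋃ t ∈ Icc (0 : ℝ) 1,
      leftEquidistant (lowerSheets Fr p f t) (upperSheets Fr p f t)) := by
  intro M
  obtain ⟨Y, hY⟩ := D.exists_forall_mem_voronoi_im_le H M
  refine ((isBounded_Icc M 0).reProdIm (isBounded_Icc (-Y) Y)).subset ?_
  rintro q ⟨hq, hM : M ≤ q.re⟩
  obtain ⟨t, ht, ⟨hqB, hqC⟩, hq0⟩ := mem_iUnion₂.mp hq
  exact ⟨⟨hM, hq0⟩, (hY t ht q hM hq0).1 hqC, (hY t ht q hM hq0).2 hqB⟩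

theorem exists_mem_leftEquidistant_re_eq_zero [T2Space α] (D : LogIsotopy Fr p h f)
    (H : ∀ t ∈ Icc (0 : ℝ) 1, SeparatedPair (lowerSheets Fr p f t) (upperSheets Fr p f t) r₀)
    (ht : t ∈ Icc (0 : ℝ) 1) :
    ∃ q ∈ leftEquidistant (lowerSheets Fr p f t) (upperSheets Fr p f t), q.re = 0 := by
  obtain ⟨Y, hY⟩ := D.exists_forall_mem_voronoi_im_le H 0
  set B := lowerSheets Fr p f t
  set C := upperSheets Fr p f t
  let v : ℝ → ℂ := fun y => y * Complex.I
  have hre (y : ℝ) : (v y).re = 0 := by simp [v]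
  have him (y : ℝ) : (v y).im = y := by simp [v]
  have hv : Continuous v := by fun_prop
  have hbelow : infDist (v (-Y - 1)) B ≤ infDist (v (-Y - 1)) C := by
    refine (le_total _ _).resolve_right fun hle => ?_
    have := (hY t ht _ (hre _).ge (hre _).le).1 hle
    linarith [him (-Y - 1)]
  have habove : infDist (v (Y + 1)) C ≤ infDist (v (Y + 1)) B := by
    refine (le_total _ _).resolve_right fun hle => ?_
    have := (hY t ht _ (hre _).ge (hre _).le).2 hle
    linarith [him (Y + 1)]
  obtain ⟨y, heq⟩ := intermediate_value_univ₂
    ((continuous_infDist_pt B).comp hv) ((continuous_infDist_pt C).comp hv) hbelow habove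
  exact ⟨v y, ⟨⟨heq.le, heq.ge⟩, (hre y).le⟩, hre y⟩

theorem exp_notMem_image [T2Space α] (D : LogIsotopy Fr p h f) (ht : t ∈ Icc (0 : ℝ) 1)
    (H : SeparatedPair (lowerSheets Fr p f t) (upperSheets Fr p f t) r₀) {q : ℂ}
    (hq : q ∈ leftEquidistant (lowerSheets Fr p f t) (upperSheets Fr p f t)) :
    Complex.exp q ∉ (fun z => h z t) '' Fr := by
  rintro ⟨z, hz, he : h z t = Complex.exp q⟩
  have hzp : z ≠ p := by
    rintro rfl
    exact Complex.exp_ne_zero q (he.symm.trans (D.map_base t ht))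
  have hzK : z ∈ Fr \ {p} := ⟨hz, hzp⟩
  obtain ⟨k, rfl⟩ := exists_eq_add_period_of_exp_eq (he.symm.trans (D.exp_log z hzK t ht).symm)
  rcases le_or_gt k 0 with hk | hk
  · exact H.symm.notMem_right hq.1.2 (add_period_mem_sheets (φ := fun z => f z t) hzK hk)
  · exact H.notMem_right hq.1.1 (add_period_mem_sheets (φ := fun z => f z t) hzK hk)

theorem lowerHemicontinuousOn_sheets (D : LogIsotopy Fr p h f) (I : Set ℤ) :
    LowerHemicontinuousOn (fun t => sheets (Fr \ {p}) (fun z => f z t) I) (Icc 0 1) := by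
  refine fun t ht => lowerHemicontinuousWithinAt_iff.mpr fun u hu => ?_
  rintro ⟨_, ⟨z, hz, k, hk, rfl⟩, hzu⟩
  have hcont : ContinuousOn (fun t => f z t + period k) (Icc 0 1) :=
    (D.continuousOn_log.comp (f := fun t => (z, t)) (by fun_prop)
      fun _ ht => ⟨hz, ht⟩).add continuousOn_const
  exact ((hcont t ht).eventually (hu.mem_nhds hzu)).mono fun s hs =>
    ⟨_, add_period_mem_sheets (φ := fun z => f z s) hz hk, hs⟩

theorem continuousOn_infDist_sheets [T2Space α] (D : LogIsotopy Fr p h f) {I : Set ℤ}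
    (hI : I.Nonempty) (x : ℂ) :
    ContinuousOn (fun t => infDist x (sheets (Fr \ {p}) (fun z => f z t) I)) (Icc 0 1) :=
  continuousOn_infDist_of_lowerHemicontinuousOn (D.isClosed_setOf_mem_sheets I)
    (fun t _ => D.sheets_nonempty t hI) (D.lowerHemicontinuousOn_sheets I) x

theorem exists_isArcEnds_equidistantCurve [T2Space α] (D : LogIsotopy Fr p h f)
    (H : ∀ t ∈ Icc (0 : ℝ) 1, SeparatedPair (lowerSheets Fr p f t) (upperSheets Fr p f t) r₀)
    (ht : t ∈ Icc (0 : ℝ) 1) : ∃ b, IsArcEnds (equidistantCurve Fr p f t) 0 b := by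
  obtain ⟨Λ, hΛ⟩ := D.exists_isPairLog ht
  obtain ⟨L, hL⟩ := (H t ht).exists_isPairLog_voronoi hΛ
  obtain ⟨q, hq, -⟩ := D.exists_mem_leftEquidistant_re_eq_zero H ht
  exact hL.exists_isArcEnds (fun _ hx => hx.1.1) (fun _ hx => hx.1.2)
    (((D.isBoundedToRight_iUnion_leftEquidistant H).mono
      (subset_biUnion_of_mem ht)).tendsto_coe (isClosed_leftEquidistant _ _)) ⟨q, hq⟩
    ((D.injOn_exp_voronoi_inter ht (H t ht) hL).mono inter_subset_left)
    (H t ht).isPreconnected_zero_union_exp_leftEquidistant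

theorem eventually_hausdorffDist_equidistantCurve_lt [T2Space α] (D : LogIsotopy Fr p h f)
    (H : ∀ t ∈ Icc (0 : ℝ) 1, SeparatedPair (lowerSheets Fr p f t) (upperSheets Fr p f t) r₀)
    (ht : t ∈ Icc (0 : ℝ) 1) {ε : ℝ} (hε : 0 < ε) :
    ∀ᶠ s in 𝓝[Icc 0 1] t,
      hausdorffDist (equidistantCurve Fr p f s) (equidistantCurve Fr p f t) < ε := by
  have hB := D.continuousOn_infDist_sheets (nonempty_Iic (a := 0))
  have hC := D.continuousOn_infDist_sheets (nonempty_Ioi (a := 0))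
  have hl : LowerHemicontinuousOn
      (fun t => leftEquidistant (lowerSheets Fr p f t) (upperSheets Fr p f t)) (Icc 0 1) :=
    fun t ht => (H t ht).lowerHemicontinuousWithinAt_leftEquidistant
      (B := lowerSheets Fr p f) (C := upperSheets Fr p f) (fun x => hB x t ht) fun x => hC x t ht
  obtain ⟨b, γ, hγ, -, hγA, -⟩ := D.exists_isArcEnds_equidistantCurve H ht
  have hcompact : IsCompact (equidistantCurve Fr p f t) :=
    hγA ▸ isCompact_Icc.image_of_continuousOn hγ
  exact eventually_hausdorffDist_lt
    (upperHemicontinuousWithinAt_zero_union_exp (isClosed_setOf_mem_leftEquidistant isClosed_Icc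
      hB hC) (D.isBoundedToRight_iUnion_leftEquidistant H))
    (lowerHemicontinuousOn_union_image hl Complex.continuous_exp {0} t ht)
    hcompact hε

end LogIsotopy

/-! ### Arcs that reach the unbounded component -/

theorem disjoint_unbddComp (K : Set ℂ) : Disjoint K (unbddComp K) :=
  Set.disjoint_left.mpr fun _ hx hxu => hxu.1 hx

theorem subset_unbddComp_of_isPreconnected {K S : Set ℂ} (hS : IsPreconnected S) (hSK : S ⊆ Kᶜ)
    (hmeet : (S ∩ unbddComp K).Nonempty) : S ⊆ unbddComp K := by
  obtain ⟨y, hyS, hy⟩ := hmeet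
  refine fun x hx => ⟨hSK hx, ?_⟩
  rw [connectedComponentIn_eq (hS.subset_connectedComponentIn hx hSK hyS)]
  exact hy.2

theorem IsArcEnds.left_mem {A : Set ℂ} {a b : ℂ} (hA : IsArcEnds A a b) : a ∈ A := by
  obtain ⟨γ, -, -, rfl, rfl, -⟩ := hA
  exact ⟨0, by simp, rfl⟩

theorem IsArcEnds.isPreconnected_sdiff_left {A : Set ℂ} {a b : ℂ} (hA : IsArcEnds A a b) :
    IsPreconnected (A \ {a}) := by
  obtain ⟨γ, hγ, hinj, rfl, rfl, -⟩ := hA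
  have h0 : (0 : ℝ) ∈ Icc (0 : ℝ) 1 := by simp
  rw [← image_singleton, ← hinj.image_sdiff_subset (singleton_subset_iff.mpr h0), Icc_sdiff_left]
  exact isPreconnected_Ioc.image γ (hγ.mono Ioc_subset_Icc_self)

theorem IsArcEnds.compl_unbddComp_inter {K A : Set ℂ} {a b : ℂ} (hA : IsArcEnds A a b)
    (ha : a ∈ K) (hAK : A ∩ K ⊆ {a}) (hmeet : (A ∩ unbddComp K).Nonempty) :
    (unbddComp K)ᶜ ∩ A = {a} := by
  refine Subset.antisymm (fun x hx => by_contra fun hxa => hx.1 ?_)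
    (singleton_subset_iff.mpr ⟨disjoint_left.mp (disjoint_unbddComp K) ha, hA.left_mem⟩)
  refine subset_unbddComp_of_isPreconnected hA.isPreconnected_sdiff_left
    (fun y hy hyK => hy.2 (hAK ⟨hy.1, hyK⟩)) ?_ ⟨hx.2, hxa⟩
  obtain ⟨y, hyA, hy⟩ := hmeet
  exact ⟨y, ⟨hyA, fun h => hy.1 (h ▸ ha)⟩, hy⟩

/-- A family `L t`, `t ∈ [0,1]`, of arcs that vary continuously in the Hausdorff metric, run from
`0` to outside the open unit disk, and meet the sets `K t` at most in `0`. -/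
structure IsEscapingArcFamily (K L : ℝ → Set ℂ) : Prop where
  exists_isArcEnds : ∀ t ∈ Icc (0 : ℝ) 1, ∃ b, IsArcEnds (L t) 0 b
  inter_subset : ∀ t ∈ Icc (0 : ℝ) 1, L t ∩ K t ⊆ {0}
  exists_one_le_norm : ∀ t ∈ Icc (0 : ℝ) 1, ∃ x ∈ L t, 1 ≤ ‖x‖
  eventually_hausdorffDist_lt : ∀ t ∈ Icc (0 : ℝ) 1, ∀ ε > (0 : ℝ),
    ∀ᶠ s in 𝓝[Icc 0 1] t, hausdorffDist (L s) (L t) < ε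

theorem IsEscapingArcFamily.compl_unbddComp_inter {K L : ℝ → Set ℂ}
    (hL : IsEscapingArcFamily K L) {t : ℝ} (ht : t ∈ Icc (0 : ℝ) 1) (h0 : 0 ∈ K t)
    (hK : (unbddComp (K t))ᶜ ⊆ ball 0 1) : (unbddComp (K t))ᶜ ∩ L t = {0} := by
  obtain ⟨b, hb⟩ := hL.exists_isArcEnds t ht
  obtain ⟨x, hx, hx1⟩ := hL.exists_one_le_norm t ht
  refine hb.compl_unbddComp_inter h0 (hL.inter_subset t ht) ⟨x, hx, by_contra fun hxu => ?_⟩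
  exact hx1.not_gt (mem_ball_zero_iff.mp (hK hxu))

theorem IsEscapingArcFamily.exists_forall_hausdorffDist_lt {K L : ℝ → Set ℂ}
    (hL : IsEscapingArcFamily K L) {t₀ : ℝ} (ht₀ : t₀ ∈ Icc (0 : ℝ) 1) {ε : ℝ} (hε : 0 < ε) :
    ∃ δ > (0 : ℝ), ∀ t ∈ Icc (0 : ℝ) 1, |t - t₀| < δ → hausdorffDist (L t) (L t₀) < ε := by
  obtain ⟨δ, hδ, hlt⟩ := Metric.eventually_nhds_iff.mp
    (eventually_nhdsWithin_iff.mp (hL.eventually_hausdorffDist_lt t₀ ht₀ ε hε))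
  exact ⟨δ, hδ, fun t ht htt₀ => hlt htt₀ ht⟩

theorem LogIsotopy.exists_isEscapingArcFamily {α : Type*} [TopologicalSpace α] [T2Space α]
    {Fr : Set α} {p : α} {h f : α → ℝ → ℂ} (D : LogIsotopy Fr p h f) :
    ∃ L, IsEscapingArcFamily (fun t => (fun z => h z t) '' Fr) L := by
  obtain ⟨r₀, H⟩ := D.exists_separatedPair
  refine ⟨equidistantCurve Fr p f, fun t ht => D.exists_isArcEnds_equidistantCurve H ht,
    fun t ht => ?_, fun t ht => ?_,
    fun t ht ε hε => D.eventually_hausdorffDist_equidistantCurve_lt H ht hε⟩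
  · rintro x ⟨hx | ⟨q, hq, rfl⟩, hxK⟩
    exacts [hx, absurd hxK (D.exp_notMem_image ht (H t ht) hq)]
  · obtain ⟨q, hq, hq0⟩ := D.exists_mem_leftEquidistant_re_eq_zero H ht
    exact ⟨Complex.exp q, Or.inr ⟨q, hq, rfl⟩, by simp [Complex.norm_exp, hq0]⟩

theorem isEscapingArcFamily_unitInterval {K : ℝ → Set ℂ} (hK : ∀ t ∈ Icc (0 : ℝ) 1, K t ⊆ {0}) :
    IsEscapingArcFamily K fun _ => (fun s : ℝ => (s : ℂ)) '' Icc 0 1 where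
  exists_isArcEnds _ _ := ⟨1, _, Complex.continuous_ofReal.continuousOn,
    Complex.ofReal_injective.injOn, rfl, Complex.ofReal_zero, Complex.ofReal_one⟩
  inter_subset t ht := inter_subset_right.trans (hK t ht)
  exists_one_le_norm _ _ := ⟨1, ⟨1, by simp⟩, by simp⟩
  eventually_hausdorffDist_lt _ _ ε hε := by simpa using Eventually.of_forall fun _ => hε

/-! ### From accessibility to logarithms -/

theorem exists_isArcFromRay_of_accessible {X : Set ℂ} (hX : IsClosed X) (hXc : IsPreconnected Xᶜ)
    (h0 : 0 ∈ X) (hXb : X ⊆ ball 0 1) (hacc : Accessible Xᶜ 0) :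
    ∃ γ R, IsArcFromRay γ R ∧ X \ {0} ⊆ (γ '' Icc 0 1 ∪ rightRay R)ᶜ := by
  obtain ⟨α, hα, hαinj, hα1, hαX⟩ := hacc
  have h1 : (1 : ℂ) ∈ Xᶜ := fun h => by simpa using hXb h
  obtain ⟨β, hβ, hβ0⟩ := IsAccessArc.exists_starting_at
    ⟨hα, hαinj, hα1, image_subset_iff.mp hαX⟩ hX.isOpen_compl hXc (not_not_intro h0) h1
  obtain ⟨γ, hγ, ⟨him, hre⟩, hγray⟩ := hβ.exists_starting_at_last_point (isClosed_rightRay 1)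
    (by simp [hβ0, rightRay]) (by simp [rightRay])
  have hray : rightRay (γ 0).re ⊆ rightRay 1 := fun z hz => ⟨hz.1, hre.trans hz.2⟩
  refine ⟨γ, (γ 0).re, ⟨hγ.continuousOn, hγ.injOn, Complex.ext (by simp) (by simp [him]),
    fun s hs h => hγray s hs (hray h), hγ.map_one⟩, ?_⟩
  rintro z ⟨hz, hz0⟩ (⟨s, hs, rfl⟩ | hzray)
  · rcases hs.2.eq_or_lt with rfl | hs1
    exacts [hz0 hγ.map_one, hγ.mapsTo ⟨hs.1, hs1⟩ hz]
  · exact (hray hzray).2.not_gt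
      ((Complex.re_le_norm z).trans_lt (mem_ball_zero_iff.mp (hXb hz)))

theorem exists_logIsotopy_of_accessible {X : Set ℂ} (hX : IsCompact X) (hXconn : IsPreconnected X)
    (hXc : IsPreconnected Xᶜ) (h0 : 0 ∈ frontier X) (hne : (frontier X \ {0}).Nonempty)
    (hXb : X ⊆ ball 0 1) (hacc : Accessible Xᶜ 0) {h : ℂ → ℝ → ℂ}
    (hcont : ContinuousOn (fun p : ℂ × ℝ => h p.1 p.2) (frontier X ×ˢ Icc 0 1))
    (hinj : ∀ t ∈ Icc (0 : ℝ) 1, InjOn (fun z => h z t) (frontier X))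
    (hid : ∀ z ∈ frontier X, h z 0 = z) (hfix : ∀ t ∈ Icc (0 : ℝ) 1, h 0 t = 0)
    (hb : ∀ z ∈ frontier X, ∀ t ∈ Icc (0 : ℝ) 1, ‖h z t‖ < 1) :
    ∃ f, LogIsotopy (frontier X) 0 h f := by
  have hFX : frontier X ⊆ X := hX.isClosed.frontier_subset
  have hF : IsCompact (frontier X) := hX.of_isClosed_subset isClosed_frontier hFX
  obtain ⟨γ, R, hγ, hXγ⟩ :=
    exists_isArcFromRay_of_accessible hX.isClosed hXc (hFX h0) hXb hacc
  have hFγ : frontier X \ {0} ⊆ (γ '' Icc 0 1 ∪ rightRay R)ᶜ :=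
    (sdiff_subset_sdiff_left hFX).trans hXγ
  obtain ⟨l, Λ, hl, hexp, hΛ⟩ := hγ.exists_isOrderedLog
  obtain ⟨f, hf, hfexp, hfΛ⟩ := exists_log_isotopy hF h0 hcont hinj hfix (hl.mono hFγ)
    (fun z hz => (hexp z (hFγ hz)).trans (hid z hz.1).symm) (hΛ.mono hFγ)
  exact ⟨f, hF, isPreconnected_frontier hX.isClosed hXconn hXc, h0, hne, hcont, hinj, hfix, hb,
    hf, hfexp, hfΛ⟩

/-- there exists a continuously varying (in the Hausdorff metric) family
of arcs `L^t` with endpoint `0` such that `X^t ∩ L^t = {0}`. -/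
theorem metric_arc_exists
    (X : Set ℂ) (hXne : X.Nonempty) (hXcpt : IsCompact X) (hXconn : IsConnected X)
    (hXns : IsConnected Xᶜ) (h0 : (0:ℂ) ∈ frontier X) (hXb : X ⊆ Metric.ball 0 1)
    (h : ℂ → ℝ → ℂ)
    (hcont : ContinuousOn (fun p : ℂ × ℝ => h p.1 p.2) (frontier X ×ˢ Set.Icc 0 1))
    (hinj : ∀ t ∈ Set.Icc (0:ℝ) 1, Set.InjOn (fun z => h z t) (frontier X))
    (hid : ∀ z ∈ frontier X, h z 0 = z)
    (hfix : ∀ t ∈ Set.Icc (0:ℝ) 1, h 0 t = 0)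
    (hXtb : ∀ t ∈ Set.Icc (0:ℝ) 1, XtSet h X t ⊆ Metric.ball 0 1)
    (hacc : Accessible Xᶜ 0) :
    ∃ L : ℝ → Set ℂ,
      (∀ t ∈ Set.Icc (0:ℝ) 1,
        (∃ b : ℂ, IsArcEnds (L t) 0 b) ∧ XtSet h X t ∩ L t = {0}) ∧
      -- continuity of t ↦ L t in the Hausdorff metric
      (∀ t₀ ∈ Set.Icc (0:ℝ) 1, ∀ ε > (0:ℝ), ∃ δ > (0:ℝ), ∀ t ∈ Set.Icc (0:ℝ) 1,
        |t - t₀| < δ → Metric.hausdorffDist (L t) (L t₀) < ε) := by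
  have hb (z) (hz : z ∈ frontier X) (t) (ht : t ∈ Icc (0 : ℝ) 1) : ‖h z t‖ < 1 :=
    mem_ball_zero_iff.mp (hXtb t ht (disjoint_left.mp (disjoint_unbddComp _) ⟨z, hz, rfl⟩))
  obtain ⟨L, hL⟩ : ∃ L, IsEscapingArcFamily (fun t => (fun z => h z t) '' frontier X) L := by
    by_cases hne : (frontier X \ {0}).Nonempty
    · obtain ⟨f, D⟩ := exists_logIsotopy_of_accessible hXcpt hXconn.isPreconnected
        hXns.isPreconnected h0 hne hXb hacc hcont hinj hid hfix hb
      exact D.exists_isEscapingArcFamily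
    · refine ⟨_, isEscapingArcFamily_unitInterval fun t ht => ?_⟩
      rintro _ ⟨z, hz, rfl⟩
      have hz0 : z = 0 := by_contra fun hz0 => hne ⟨z, hz, hz0⟩
      exact hz0 ▸ hfix t ht
  refine ⟨L, fun t ht => ⟨hL.exists_isArcEnds t ht, ?_⟩, fun t₀ ht₀ ε hε =>
    hL.exists_forall_hausdorffDist_lt ht₀ hε⟩
  exact hL.compl_unbddComp_inter ht ⟨0, h0, hfix t ht⟩ (hXtb t ht)
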